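/- arXiv:1208.4074 — 2 statements merged into one kernel-verified Lean document; each statement's English description precedes it below -/
import Mathlib

section
/- Let φ be a meromorphic Jacobi form of weight k and index m with poles supported on S, all poles being simple. Define for each ℓ ∈ ℤ the completion ĥ_ℓ(τ) := h_ℓ(τ) − ∑_{s ∈ S/ℤ²} D_s(τ)·Θ^{s,*}_{m,ℓ}(τ) and set φ̂^F(τ,z) := ∑_{ℓ=0}^{2m−1} ĥ_ℓ(τ)·θ_{m,ℓ}(τ,z). Then φ̂^F satisfies the weight-k index-m modular law for every element of SL(2,ℤ) as well as the index-m elliptic law; moreover, for each ℓ there exists a positive integer N such that ĥ_ℓ((aτ+b)/(cτ+d))·θ(τ)^{2k−1} = ĥ_ℓ(τ)·θ((aτ+b)/(cτ+d))^{2k−1} for all (a,b;c,d) in the principal congruence subgroup Γ(N) of SL(2,ℤ), where θ(τ) := ∑_{n∈ℤ} q^{n²} (i.e., each ĥ_ℓ transforms like a modular form of weight k−1/2 on a congruence subgroup). -/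
noncomputable section

open Complex Filter Topology MeasureTheory
open scoped Classical

/-- `ee x = e^{2πix}`. -/
def ee (x : ℂ) : ℂ := Complex.exp (2 * (Real.pi : ℂ) * Complex.I * x)

/-- The index-`m` elliptic transformation law on `ℍ × ℂ`. -/
def EllipticLaw (m : ℕ) (φ : ℂ → ℂ → ℂ) : Prop :=
  ∀ τ : ℂ, 0 < τ.im → ∀ z : ℂ, ∀ lam mu : ℤ,
    φ τ (z + (lam : ℂ) * τ + (mu : ℂ)) =
      ee (-(m : ℂ) * ((lam : ℂ) ^ 2 * τ + 2 * (lam : ℂ) * z)) * φ τ z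

/-- The weight-`k` index-`m` modular transformation law on `ℍ × ℂ`. -/
def ModularLaw (k : ℤ) (m : ℕ) (φ : ℂ → ℂ → ℂ) : Prop :=
  ∀ τ : ℂ, 0 < τ.im → ∀ z : ℂ, ∀ a b c d : ℤ, a * d - b * c = 1 →
    φ (((a : ℂ) * τ + (b : ℂ)) / ((c : ℂ) * τ + (d : ℂ))) (z / ((c : ℂ) * τ + (d : ℂ))) =
      ((c : ℂ) * τ + (d : ℂ)) ^ k *
        ee ((m : ℂ) * (c : ℂ) * z ^ 2 / ((c : ℂ) * τ + (d : ℂ))) * φ τ z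

/-- The theta function `θ_{m,ℓ}(τ,z) = ∑_{r ≡ ℓ (mod 2m)} q^{r²/4m} y^r`. -/
def jTheta (m : ℕ) (l : ℤ) (τ z : ℂ) : ℂ :=
  ∑' n : ℤ, ee (((l : ℂ) + 2 * (m : ℂ) * (n : ℂ)) ^ 2 / (4 * (m : ℂ)) * τ +
      ((l : ℂ) + 2 * (m : ℂ) * (n : ℂ)) * z)

/-- The point `z_s = ατ + β` for `s = (α,β) ∈ ℚ²`. -/
def zpt (s : ℚ × ℚ) (τ : ℂ) : ℂ := (s.1 : ℚ) * τ + (s.2 : ℚ)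

/-- A meromorphic Jacobi form of weight `k` and index `m` with poles supported on `S`. -/
structure MeroJacobiForm (k : ℤ) (m : ℕ) (S : Set (ℚ × ℚ)) where
  toFun : ℂ → ℂ → ℂ
  lattice_inv : ∀ s ∈ S, ∀ lam mu : ℤ, (s.1 + (lam : ℚ), s.2 + (mu : ℚ)) ∈ S
  sl_inv : ∀ s ∈ S, ∀ a b c d : ℤ, a * d - b * c = 1 →
      (s.1 * (a : ℚ) + s.2 * (c : ℚ), s.1 * (b : ℚ) + s.2 * (d : ℚ)) ∈ S
  finite_classes : Set.Finite {s : ℚ × ℚ | s ∈ S ∧ 0 ≤ s.1 ∧ s.1 < 1 ∧ 0 ≤ s.2 ∧ s.2 < 1}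
  elliptic : EllipticLaw m toFun
  modular : ModularLaw k m toFun
  holo : ∀ τ : ℂ, 0 < τ.im → ∀ z : ℂ, (∀ s ∈ S, z ≠ zpt s τ) →
      DifferentiableAt ℂ (fun p : ℂ × ℂ => toFun p.1 p.2) (τ, z)
  merom : ∀ τ : ℂ, 0 < τ.im → ∀ s ∈ S, ∃ (g : ℂ → ℂ) (nn : ℕ), AnalyticAt ℂ g (zpt s τ) ∧
      ∀ᶠ z in 𝓝[≠] (zpt s τ), toFun τ z = g z / (z - zpt s τ) ^ nn

/-- All poles of `Φ` are simple (order at most 1). -/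
def HasSimplePoles {k : ℤ} {m : ℕ} {S : Set (ℚ × ℚ)} (Φ : MeroJacobiForm k m S) : Prop :=
  ∀ τ : ℂ, 0 < τ.im → ∀ s ∈ S, ∃ g : ℂ → ℂ, AnalyticAt ℂ g (zpt s τ) ∧
    ∀ᶠ z in 𝓝[≠] (zpt s τ), Φ.toFun τ z = g z / (z - zpt s τ)

/-- `h` is the family of canonical Fourier coefficients of `φ`:
`h_ℓ(τ) = q^{ℓ²/4m}·(1/2)·lim_{ε→0⁺} [∫₀¹ φ(τ, x+iε-ℓτ/2m) e(-ℓ(x+iε)) dx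
  + ∫₀¹ φ(τ, x-iε-ℓτ/2m) e(-ℓ(x-iε)) dx]`. -/
def IsCanonCoeff (m : ℕ) (φ : ℂ → ℂ → ℂ) (h : ℤ → ℂ → ℂ) : Prop :=
  ∀ l : ℤ, ∀ τ : ℂ, 0 < τ.im →
    Filter.Tendsto (fun ε : ℝ =>
        (1 / 2 : ℂ) *
          ((∫ x in (0:ℝ)..1,
              φ τ ((x : ℂ) + (ε : ℂ) * Complex.I - (l : ℂ) * τ / (2 * (m : ℂ))) *
                ee (-(l : ℂ) * ((x : ℂ) + (ε : ℂ) * Complex.I))) +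
            ∫ x in (0:ℝ)..1,
              φ τ ((x : ℂ) - (ε : ℂ) * Complex.I - (l : ℂ) * τ / (2 * (m : ℂ))) *
                ee (-(l : ℂ) * ((x : ℂ) - (ε : ℂ) * Complex.I))))
      (𝓝[>] (0 : ℝ)) (𝓝 (ee (-(l : ℂ) ^ 2 * τ / (4 * (m : ℂ))) * h l τ))

/-- `D s τ = 2πi·e(mα z_s)·Res_{z=z_s} φ(τ,z)`, characterized via the limit defining the
residue at a simple pole. -/
def IsResidueFactor (m : ℕ) (S : Set (ℚ × ℚ)) (φ : ℂ → ℂ → ℂ) (D : ℚ × ℚ → ℂ → ℂ) : Prop :=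
  ∀ s ∈ S, ∀ τ : ℂ, 0 < τ.im →
    Filter.Tendsto (fun z : ℂ =>
        2 * (Real.pi : ℂ) * Complex.I * ee ((m : ℂ) * (s.1 : ℚ) * zpt s τ) *
          ((z - zpt s τ) * φ τ z))
      (𝓝[≠] (zpt s τ)) (𝓝 (D s τ))

/-- The rational function `R_c`. -/
def Rc (c : ℝ) (y : ℂ) : ℂ :=
  if (⌈c⌉ : ℝ) = c then 1 / 2 * y ^ ⌈c⌉ * (y + 1) / (y - 1) else y ^ ⌈c⌉ / (y - 1)

/-- The index-`m` averaging operator `Av^{(m)}[F](τ,z) = ∑_{λ∈ℤ} q^{mλ²} y^{2mλ} F(q^λ y)`. -/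
def Av (m : ℕ) (F : ℂ → ℂ) (τ z : ℂ) : ℂ :=
  ∑' lam : ℤ, ee ((m : ℂ) * (lam : ℂ) ^ 2 * τ + 2 * (m : ℂ) * (lam : ℂ) * z) *
      F (ee ((lam : ℂ) * τ + z))

/-- The Appell–Lerch sum `A^s_m(τ,z) = e(-mα z_s)·Av^{(m)}[R_{-2mα}(y/y_s)]`. -/
def AppellA (m : ℕ) (s : ℚ × ℚ) (τ z : ℂ) : ℂ :=
  ee (-(m : ℂ) * (s.1 : ℚ) * zpt s τ) *
    Av m (fun w => Rc ((-(2 * (m : ℚ) * s.1) : ℚ) : ℝ) (w / ee (zpt s τ))) τ z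

/-- The finite part `φ^F(τ,z) = ∑_{ℓ=0}^{2m-1} h_ℓ(τ)·θ_{m,ℓ}(τ,z)`. -/
def finitePart (m : ℕ) (h : ℤ → ℂ → ℂ) (τ z : ℂ) : ℂ :=
  ∑ l ∈ Finset.range (2 * m), h (l : ℤ) τ * jTheta m (l : ℤ) τ z

/-- `T` is a set of representatives for `S/ℤ²`. -/
def IsRepSet (S : Set (ℚ × ℚ)) (T : Finset (ℚ × ℚ)) : Prop :=
  (↑T : Set (ℚ × ℚ)) ⊆ S ∧
    ∀ s ∈ S, ∃! t : ℚ × ℚ, t ∈ T ∧ ∃ lam mu : ℤ, s.1 = t.1 + (lam : ℚ) ∧ s.2 = t.2 + (mu : ℚ)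

/-- The complementary error function. -/
def erfc (x : ℝ) : ℝ := 2 / Real.sqrt Real.pi * ∫ t in Set.Ioi x, Real.exp (-t ^ 2)

/-- The element `λ = n + α + ℓ/2m` of `ℤ + α + ℓ/2m`. -/
def lamVal (m : ℕ) (s : ℚ × ℚ) (l : ℤ) (n : ℤ) : ℝ :=
  (n : ℝ) + (s.1 : ℝ) + (l : ℝ) / (2 * (m : ℝ))

/-- The Eichler integral `Θ^{s,*}_{m,ℓ}(τ)` of the weight-3/2 unary theta series. -/
def ThStar (m : ℕ) (s : ℚ × ℚ) (l : ℤ) (τ : ℂ) : ℂ :=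
  ee ((m : ℂ) * (s.1 : ℚ) * (s.2 : ℚ)) / 2 *
    ∑' n : ℤ, (Real.sign (lamVal m s l n) : ℂ) *
      ee (-(2 * (m : ℂ) * (s.2 : ℚ) * (lamVal m s l n : ℝ))) *
      (erfc (2 * |lamVal m s l n| * Real.sqrt (Real.pi * (m : ℝ) * τ.im)) : ℂ) *
      ee (-(m : ℂ) * (lamVal m s l n : ℝ) ^ 2 * τ)

/-- The completed canonical Fourier coefficient
`ĥ_ℓ = h_ℓ - ∑_{s ∈ S/ℤ²} D_s·Θ^{s,*}_{m,ℓ}`. -/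
def hhat (m : ℕ) (h : ℤ → ℂ → ℂ) (D : ℚ × ℚ → ℂ → ℂ) (T : Finset (ℚ × ℚ))
    (l : ℤ) (τ : ℂ) : ℂ :=
  h l τ - ∑ t ∈ T, D t τ * ThStar m t l τ

/-- The completed finite part `φ̂^F(τ,z) = ∑_{ℓ=0}^{2m-1} ĥ_ℓ(τ)·θ_{m,ℓ}(τ,z)`. -/
def completedFinitePart (m : ℕ) (h : ℤ → ℂ → ℂ) (D : ℚ × ℚ → ℂ → ℂ)
    (T : Finset (ℚ × ℚ)) (τ z : ℂ) : ℂ :=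
  ∑ l ∈ Finset.range (2 * m), hhat m h D T (l : ℤ) τ * jTheta m (l : ℤ) τ z

/-- The classical theta function `θ(τ) = ∑_{n ∈ ℤ} q^{n²}`. -/
def stdTheta (τ : ℂ) : ℂ := ∑' n : ℤ, ee ((n : ℂ) ^ 2 * τ)

lemma ee_add (x y : ℂ) : ee (x + y) = ee x * ee y := by
  simp only [ee, ← Complex.exp_add]; congr 1; ring

lemma ee_zero : ee 0 = 1 := by simp [ee]

lemma ee_ne_zero (x : ℂ) : ee x ≠ 0 := Complex.exp_ne_zero _

lemma ee_int (n : ℤ) : ee n = 1 := by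
  rw [ee, Complex.exp_eq_one_iff]; exact ⟨n, by ring⟩

lemma ee_neg (x : ℂ) : ee (-x) = (ee x)⁻¹ := by
  rw [ee, ee, ← Complex.exp_neg]; congr 1; ring

lemma ee_sub (x y : ℂ) : ee (x - y) = ee x / ee y := by
  rw [sub_eq_add_neg, ee_add, ee_neg, div_eq_mul_inv]

lemma ee_congr_int {x y : ℂ} (n : ℤ) (h : x = y + n) : ee x = ee y := by
  rw [h, ee_add, ee_int, mul_one]

lemma ee_eq_one_iff (x : ℂ) : ee x = 1 ↔ ∃ n : ℤ, x = n := by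
  constructor
  · intro h
    rw [ee, Complex.exp_eq_one_iff] at h
    obtain ⟨n, hn⟩ := h
    refine ⟨n, ?_⟩
    have : (2 * (Real.pi : ℂ) * I) ≠ 0 := Complex.two_pi_I_ne_zero
    apply mul_left_cancel₀ this
    rw [hn]; ring
  · rintro ⟨n, rfl⟩; exact ee_int n

lemma ee_continuous : Continuous ee := by unfold ee; fun_prop

lemma ee_differentiable : Differentiable ℂ ee := by unfold ee; fun_prop

lemma ee_hasDerivAt (x : ℂ) : HasDerivAt ee (2 * (Real.pi : ℂ) * I * ee x) x := by
  have h : HasDerivAt (fun y : ℂ => 2 * (Real.pi : ℂ) * I * y) (2 * (Real.pi : ℂ) * I) x := by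
    simpa using (hasDerivAt_id x).const_mul (2 * (Real.pi : ℂ) * I)
  have := h.cexp
  rw [show 2 * (Real.pi : ℂ) * I * ee x = ee x * (2 * (Real.pi : ℂ) * I) from mul_comm _ _]
  exact this

lemma norm_ee (x : ℂ) : ‖ee x‖ = Real.exp (-(2 * Real.pi * x.im)) := by
  rw [ee, Complex.norm_exp]; congr 1
  simp

lemma conj_ee (x : ℂ) : (starRingEnd ℂ) (ee x) = ee (-(starRingEnd ℂ) x) := by
  rw [ee, ee, ← Complex.exp_conj]; congr 1
  simp only [map_mul, Complex.conj_ofReal, Complex.conj_I, Complex.conj_ofNat]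
  ring

lemma jTheta_term (m : ℕ) (hm : 0 < m) (l n : ℤ) (τ z : ℂ) :
    ee (((l : ℂ) + 2 * (m : ℂ) * (n : ℂ)) ^ 2 / (4 * (m : ℂ)) * τ +
      ((l : ℂ) + 2 * (m : ℂ) * (n : ℂ)) * z) =
    ee ((l : ℂ) ^ 2 / (4 * m) * τ + l * z) *
      jacobiTheta₂_term n (l * τ + 2 * m * z) (2 * m * τ) := by
  have hm' : (m : ℂ) ≠ 0 := by exact_mod_cast hm.ne'
  rw [jacobiTheta₂_term, ee, ee, ← Complex.exp_add]; congr 1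
  field_simp
  ring

lemma im_two_m (m : ℕ) (hm : 0 < m) {τ : ℂ} (hτ : 0 < τ.im) : 0 < (2 * (m : ℂ) * τ).im := by
  have : (2 * (m : ℂ) * τ) = ((2 * m : ℝ) : ℂ) * τ := by push_cast; ring
  rw [this, Complex.im_ofReal_mul]
  positivity

lemma jTheta_eq (m : ℕ) (hm : 0 < m) (l : ℤ) (τ z : ℂ) :
    jTheta m l τ z = ee ((l : ℂ) ^ 2 / (4 * m) * τ + l * z) *
      jacobiTheta₂ (l * τ + 2 * m * z) (2 * m * τ) := by
  rw [jTheta, jacobiTheta₂, ← tsum_mul_left]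
  exact tsum_congr fun n => jTheta_term m hm l n τ z

lemma jTheta_summable (m : ℕ) (hm : 0 < m) (l : ℤ) {τ : ℂ} (hτ : 0 < τ.im) (z : ℂ) :
    Summable fun n : ℤ => ee (((l : ℂ) + 2 * (m : ℂ) * (n : ℂ)) ^ 2 / (4 * (m : ℂ)) * τ +
      ((l : ℂ) + 2 * (m : ℂ) * (n : ℂ)) * z) := by
  simp_rw [jTheta_term m hm]
  exact ((summable_jacobiTheta₂_term_iff _ _).2 (im_two_m m hm hτ)).mul_left _

lemma jTheta_differentiable (m : ℕ) (hm : 0 < m) (l : ℤ) {τ : ℂ} (hτ : 0 < τ.im) :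
    Differentiable ℂ (jTheta m l τ) := by
  have : jTheta m l τ = fun z => ee ((l : ℂ) ^ 2 / (4 * m) * τ + l * z) *
      jacobiTheta₂ (l * τ + 2 * m * z) (2 * m * τ) := funext fun z => jTheta_eq m hm l τ z
  rw [this]
  apply Differentiable.mul
  · exact ee_differentiable.comp (by fun_prop)
  · intro z
    exact (differentiableAt_jacobiTheta₂_fst _ (im_two_m m hm hτ)).comp z (by fun_prop)

lemma jTheta_elliptic (m : ℕ) (hm : 0 < m) (l : ℤ) : EllipticLaw m (jTheta m l) := by
  intro τ hτ z lam mu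
  have hm' : (m : ℂ) ≠ 0 := by exact_mod_cast hm.ne'
  simp only [jTheta]
  rw [← tsum_mul_left]
  conv_rhs => rw [← (Equiv.addRight lam).tsum_eq]
  refine tsum_congr fun n => ?_
  rw [← ee_add]
  refine ee_congr_int ((l + 2 * m * n) * mu) ?_
  simp only [Equiv.coe_addRight]
  push_cast
  field_simp
  ring

lemma jTheta_add_period (m : ℕ) (l k : ℤ) (τ z : ℂ) :
    jTheta m (l + 2 * m * k) τ z = jTheta m l τ z := by
  simp only [jTheta]
  conv_rhs => rw [← (Equiv.addRight k).tsum_eq]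
  refine tsum_congr fun n => ?_
  simp only [Equiv.coe_addRight]
  push_cast
  ring_nf

lemma jTheta_T (m : ℕ) (hm : 0 < m) (l : ℤ) (b : ℤ) (τ z : ℂ) :
    jTheta m l (τ + b) z = ee ((l : ℂ) ^ 2 * b / (4 * m)) * jTheta m l τ z := by
  have hm' : (m : ℂ) ≠ 0 := by exact_mod_cast hm.ne'
  rw [jTheta, jTheta, ← tsum_mul_left]
  refine tsum_congr fun n => ?_
  rw [← ee_add]
  refine ee_congr_int (l * n * b + m * n ^ 2 * b) ?_
  push_cast
  field_simp
  ring

lemma jTheta_S (m : ℕ) (hm : 0 < m) (l : ℤ) {τ : ℂ} (hτ : 0 < τ.im) (z : ℂ) :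
    jTheta m l (-1 / τ) (z / τ) = (-I * (τ / (2 * m))) ^ (1 / 2 : ℂ) * ee (m * z ^ 2 / τ) *
      ∑' r : ℤ, ee ((r : ℂ) ^ 2 * τ / (4 * m) + r * z - r * l / (2 * m)) := by
  have hm' : (m : ℂ) ≠ 0 := by exact_mod_cast hm.ne'
  have hτ0 : τ ≠ 0 := by rintro rfl; simp at hτ
  have h1 := jacobiTheta₂_functional_equation (z - l / (2 * m)) (τ / (2 * m))
  have h2 : jacobiTheta₂ (z - l / (2 * m)) (τ / (2 * m)) =
      ∑' r : ℤ, ee ((r : ℂ) ^ 2 * τ / (4 * m) + r * z - r * l / (2 * m)) := by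
    rw [jacobiTheta₂]
    refine tsum_congr fun n => ?_
    rw [jacobiTheta₂_term, ee]; congr 1
    field_simp; ring
  rw [← h2, h1, jTheta_eq m hm]
  have e1 : (z - l / (2 * m)) / (τ / (2 * m)) = l * (-1 / τ) + 2 * m * (z / τ) := by
    field_simp; ring
  have e2 : -1 / (τ / (2 * m)) = 2 * m * (-1 / τ) := by field_simp
  rw [e1, e2]
  have hc : (-I * (τ / (2 * m))) ^ (1 / 2 : ℂ) ≠ 0 := by
    rw [Complex.cpow_ne_zero_iff]; left
    simp [hτ0, hm']
  rw [← mul_assoc]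
  congr 1
  field_simp
  rw [ee, ee, ← Complex.exp_add]; congr 1
  field_simp
  ring

lemma tsum_int_split (M : ℕ) (hM : 0 < M) (f : ℤ → ℂ) (hf : Summable f) :
    ∑' r : ℤ, f r = ∑ j ∈ Finset.range M, ∑' n : ℤ, f ((j : ℤ) + M * n) := by
  have : NeZero M := ⟨hM.ne'⟩
  let e := (Equiv.prodComm (Fin M) ℤ).trans (Int.divModEquiv M).symm
  have hs : Summable fun x => f (e x) := e.summable_iff.2 hf
  rw [← e.tsum_eq f, hs.tsum_prod' (fun b => hs.comp_injective (i := fun n : ℤ => (b, n))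
    (fun x y h => by simpa using h)), Finset.sum_range, tsum_fintype]
  refine Finset.sum_congr rfl fun j _ => tsum_congr fun n => ?_
  congr 1
  simp [e, Int.divModEquiv]
  ring

/-- The basic `1`-periodic kernel with residue one at the integers. -/
def KE (w : ℂ) : ℂ := 2 * (Real.pi : ℂ) * I * (1 / 2 + 1 / (ee w - 1))

lemma ee_add_one (w : ℂ) : ee (w + 1) = ee w := ee_congr_int 1 (by push_cast; ring)

lemma ee_add_intCast (w : ℂ) (n : ℤ) : ee (w + n) = ee w := ee_congr_int n rfl

lemma KE_add_int (w : ℂ) (n : ℤ) : KE (w + n) = KE w := by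
  rw [KE, KE, ee_add_intCast]

lemma KE_differentiableAt {w : ℂ} (h : ee w ≠ 1) : DifferentiableAt ℂ KE w := by
  unfold KE
  have := ee_differentiable w
  have h' : ee w - 1 ≠ 0 := sub_ne_zero.2 h
  fun_prop (disch := assumption)

lemma KE_residue : Tendsto (fun w => w * KE w) (𝓝[≠] 0) (𝓝 1) := by
  have h0 := ee_hasDerivAt 0
  rw [ee_zero, mul_one, hasDerivAt_iff_tendsto_slope] at h0
  have hpi : 2 * (Real.pi : ℂ) * I ≠ 0 := Complex.two_pi_I_ne_zero
  have h1 := (h0.inv₀ hpi).const_mul (2 * (Real.pi : ℂ) * I)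
  rw [mul_inv_cancel₀ hpi] at h1
  have h2 : Tendsto (fun w : ℂ => 2 * (Real.pi : ℂ) * I * (w * (1 / 2))) (𝓝[≠] 0) (𝓝 0) := by
    have : Continuous (fun w : ℂ => 2 * (Real.pi : ℂ) * I * (w * (1 / 2))) := by fun_prop
    have := this.tendsto 0
    simp only [zero_mul, mul_zero] at this
    exact this.mono_left nhdsWithin_le_nhds
  have h3 := h1.add h2
  rw [add_zero] at h3
  refine h3.congr fun w => ?_
  rw [slope_def_field, ee_zero, sub_zero, KE, inv_div]
  ring

lemma residue_shift {f : ℂ → ℂ} {a r : ℂ} (n : ℤ) (hper : ∀ w, f (w + n) = f w)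
    (h : Tendsto (fun w => (w - a) * f w) (𝓝[≠] a) (𝓝 r)) :
    Tendsto (fun w => (w - (a + n)) * f w) (𝓝[≠] (a + n)) (𝓝 r) := by
  have e := (Homeomorph.addRight (n : ℂ)).map_punctured_nhds_eq a
  simp only [Homeomorph.coe_addRight] at e
  rw [← e, tendsto_map'_iff]
  refine h.congr fun w => ?_
  simp only [Function.comp, hper]
  ring

lemma per_int {f : ℂ → ℂ} (hper : ∀ w, f (w + 1) = f w) (n : ℤ) (w : ℂ) : f (w + n) = f w := by
  have : Function.Periodic f 1 := hper
  simpa using this.int_mul n w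

lemma KE_residue_at {b w : ℂ} (h : ee (w - b) = 1) :
    Tendsto (fun z => (z - w) * KE (z - b)) (𝓝[≠] w) (𝓝 1) := by
  obtain ⟨n, hn⟩ := (ee_eq_one_iff _).1 h
  have e := (Homeomorph.addRight (w : ℂ)).map_punctured_nhds_eq 0
  simp only [Homeomorph.coe_addRight, zero_add] at e
  rw [← e, tendsto_map'_iff]
  refine KE_residue.congr fun z => ?_
  simp only [Function.comp]
  rw [show z + w - b = z + n by rw [← hn]; ring, KE_add_int]; ring

lemma tendsto_sub_mul_zero {f : ℂ → ℂ} {w : ℂ} (h : ContinuousAt f w) :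
    Tendsto (fun z => (z - w) * f z) (𝓝[≠] w) (𝓝 0) := by
  have : ContinuousAt (fun z => (z - w) * f z) w := by fun_prop
  have := this.tendsto
  simp only [sub_self, zero_mul] at this
  exact this.mono_left nhdsWithin_le_nhds

lemma ee_sub_eventually_ne (a w : ℂ) : ∀ᶠ z in 𝓝[≠] w, ee (z - a) ≠ 1 := by
  have h : HasDerivAt (fun z => ee (z - a)) (2 * (Real.pi : ℂ) * I * ee (w - a)) w :=
    (ee_hasDerivAt (w - a)).comp_sub_const w a
  exact h.eventually_ne (mul_ne_zero Complex.two_pi_I_ne_zero (ee_ne_zero _))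

lemma strip_decomp {ι : Type*} (W : Finset ι) (a ρ : ι → ℂ) (Y : ℝ) (f : ℂ → ℂ)
    (hper : ∀ w, f (w + 1) = f w)
    (hdiff : ∀ w : ℂ, |w.im| < Y → (∀ i ∈ W, ee (w - a i) ≠ 1) → DifferentiableAt ℂ f w)
    (hres : ∀ i ∈ W, Tendsto (fun w => (w - a i) * f w) (𝓝[≠] (a i)) (𝓝 (ρ i)))
    (hinj : ∀ i ∈ W, ∀ j ∈ W, ee (a i - a j) = 1 → i = j) :
    ∃ G : ℂ → ℂ, (∀ w : ℂ, |w.im| < Y → DifferentiableAt ℂ G w) ∧ (∀ w, G (w + 1) = G w) ∧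
      ∀ w : ℂ, |w.im| < Y → (∀ i ∈ W, ee (w - a i) ≠ 1) →
        f w = G w + ∑ i ∈ W, ρ i * KE (w - a i) := by
  set G0 : ℂ → ℂ := fun w => f w - ∑ i ∈ W, ρ i * KE (w - a i) with hG0
  have hG0per : ∀ w, G0 (w + 1) = G0 w := by
    intro w
    simp only [hG0, hper]
    congr 1
    refine Finset.sum_congr rfl fun i _ => ?_
    have := KE_add_int (w - a i) 1
    push_cast at this
    rw [← this]; ring_nf
  have hG0diff : ∀ w : ℂ, |w.im| < Y → (∀ i ∈ W, ee (w - a i) ≠ 1) → DifferentiableAt ℂ G0 w := by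
    intro w hw hi
    refine (hdiff w hw hi).sub (DifferentiableAt.fun_sum fun i hiW => ?_)
    refine DifferentiableAt.const_mul ?_ _
    exact (KE_differentiableAt (hi i hiW)).comp w (f := fun z => z - a i) (by fun_prop)
  have hopen : IsOpen {w : ℂ | |w.im| < Y} := isOpen_lt (by fun_prop) (by fun_prop)
  have hev : ∀ w : ℂ, |w.im| < Y → ∀ᶠ z in 𝓝[≠] w, DifferentiableAt ℂ G0 z := by
    intro w hw
    have h1 : ∀ᶠ z in 𝓝[≠] w, ∀ i ∈ W, ee (z - a i) ≠ 1 := by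
      rw [Filter.eventually_all_finset]
      exact fun i _ => ee_sub_eventually_ne _ _
    have h2 : ∀ᶠ z in 𝓝[≠] w, |z.im| < Y := nhdsWithin_le_nhds (hopen.mem_nhds hw)
    filter_upwards [h1, h2] with z hz1 hz2 using hG0diff z hz2 hz1
  have hlim : ∀ w : ℂ, |w.im| < Y → Tendsto (fun z => (z - w) * G0 z) (𝓝[≠] w) (𝓝 0) := by
    intro w hw
    by_cases hc : ∀ i ∈ W, ee (w - a i) ≠ 1
    · exact tendsto_sub_mul_zero (hG0diff w hw hc).continuousAt
    · push Not at hc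
      obtain ⟨i, hi, hi1⟩ := hc
      have hf : Tendsto (fun z => (z - w) * f z) (𝓝[≠] w) (𝓝 (ρ i)) := by
        obtain ⟨n, hn⟩ := (ee_eq_one_iff _).1 hi1
        have := residue_shift n (per_int hper n) (hres i hi)
        rwa [show a i + n = w by rw [← hn]; ring] at this
      have hs : Tendsto (fun z => ∑ j ∈ W, ρ j * ((z - w) * KE (z - a j))) (𝓝[≠] w)
          (𝓝 (∑ j ∈ W, ρ j * (if j = i then 1 else 0))) := by
        refine tendsto_finsetSum _ fun j hj => Tendsto.const_mul _ ?_
        by_cases hji : j = i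
        · subst hji; rw [if_pos rfl]; exact KE_residue_at hi1
        · rw [if_neg hji]
          have hne : ee (w - a j) ≠ 1 := by
            intro h
            apply hji
            apply hinj j hj i hi
            rw [show a j - a i = (w - a i) - (w - a j) by ring, ee_sub, hi1, h, div_one]
          exact tendsto_sub_mul_zero (f := fun z => KE (z - a j))
            ((KE_differentiableAt hne).comp w (f := fun z => z - a j) (by fun_prop)).continuousAt
      have hs' : ∑ j ∈ W, ρ j * (if j = i then (1:ℂ) else 0) = ρ i := by
        simp [hi]
      rw [hs'] at hs
      have := hf.sub hs
      rw [sub_self] at this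
      refine this.congr fun z => ?_
      simp only [hG0, mul_sub, Finset.mul_sum]
      congr 1
      refine Finset.sum_congr rfl fun j _ => by ring
  set G : ℂ → ℂ := fun w => limUnder (𝓝[≠] w) G0 with hG
  have hGeq : ∀ w, ContinuousAt G0 w → G w = G0 w := fun w hw =>
    (hw.tendsto.mono_left nhdsWithin_le_nhds).limUnder_eq
  refine ⟨G, ?_, ?_, ?_⟩
  · intro w hw
    have h1 := hev w hw
    rw [eventually_nhdsWithin_iff] at h1
    obtain ⟨s, hs, hso, hws⟩ := eventually_nhds_iff.1 h1
    have hd : DifferentiableOn ℂ G0 (s \ {w}) := fun z hz =>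
      (hs z hz.1 hz.2).differentiableWithinAt
    have ho : (fun z => G0 z - G0 w) =o[𝓝[≠] w] fun z => (z - w)⁻¹ := by
      rw [Asymptotics.isLittleO_iff_tendsto']
      · have h3 := (hlim w hw).sub (tendsto_sub_mul_zero (f := fun _ => G0 w) (w := w) continuousAt_const)
        rw [sub_zero] at h3
        refine h3.congr fun z => ?_
        rw [div_inv_eq_mul]; ring
      · filter_upwards [self_mem_nhdsWithin] with z hz h0
        exact absurd (inv_eq_zero.1 h0) (sub_ne_zero.2 hz)
    have hA := Complex.differentiableOn_update_limUnder_of_isLittleO (hso.mem_nhds hws) hd ho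
    have : Set.EqOn G (Function.update G0 w (limUnder (𝓝[≠] w) G0)) s := by
      intro z hz
      by_cases hzw : z = w
      · subst hzw; simp [hG]
      · rw [Function.update_of_ne hzw]
        exact hGeq z (hs z hz hzw).continuousAt
    exact (hA.congr this).differentiableAt (hso.mem_nhds hws)
  · intro w
    have e := (Homeomorph.addRight (1 : ℂ)).map_punctured_nhds_eq w
    simp only [Homeomorph.coe_addRight] at e
    simp only [hG, limUnder]
    rw [← e, Filter.map_map]
    congr 2
    funext z; exact hG0per z
  · intro w hw hi
    rw [hGeq w (hG0diff w hw hi).continuousAt, hG0]; ring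

lemma line_shift (f : ℂ → ℂ) (hper : ∀ w, f (w + 1) = f w) (w : ℂ) :
    ∫ u in (0:ℝ)..1, f (u + w) = ∫ u in (0:ℝ)..1, f (u + w.im * I) := by
  have hp : Function.Periodic (fun x : ℝ => f (x + w.im * I)) 1 := by
    intro x
    simp only
    rw [← hper (x + _)]; push_cast; congr 1; ring
  have h1 := hp.intervalIntegral_add_eq w.re 0
  rw [zero_add] at h1
  rw [← h1]
  have h2 := intervalIntegral.integral_comp_add_right (a := 0) (b := 1)
    (fun x : ℝ => f (x + w.im * I)) w.re
  rw [zero_add, add_comm 1] at h2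
  rw [← h2]
  refine intervalIntegral.integral_congr fun u _ => ?_
  congr 1
  push_cast
  rw [add_assoc, Complex.re_add_im]

lemma strip_const (Y : ℝ) (G : ℂ → ℂ) (hd : ∀ w : ℂ, |w.im| < Y → DifferentiableAt ℂ G w)
    (hper : ∀ w, G (w + 1) = G w) (w : ℂ) (hw : |w.im| < Y) :
    ∫ u in (0:ℝ)..1, G (u + w) = ∫ u in (0:ℝ)..1, G u := by
  rw [line_shift G hper]
  have h := Complex.integral_boundary_rect_eq_zero_of_differentiableOn G 0 (1 + w.im * I) (by
    intro z hz
    refine (hd z ?_).differentiableWithinAt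
    have hz2 := hz.2
    simp only [Set.mem_preimage, Complex.zero_im, Complex.add_im, Complex.one_im, Complex.mul_im,
      Complex.ofReal_re, Complex.I_im, Complex.ofReal_im, Complex.I_re, mul_one, mul_zero,
      add_zero, zero_add] at hz2
    have h2 := Set.abs_sub_left_of_mem_uIcc hz2
    simp only [sub_zero] at h2
    exact lt_of_le_of_lt h2 hw)
  simp only [Complex.zero_im, Complex.zero_re, Complex.add_im, Complex.one_im, Complex.mul_im,
      Complex.ofReal_re, Complex.I_im, Complex.ofReal_im, Complex.I_re, mul_one, mul_zero,
      add_zero, zero_add, Complex.add_re, Complex.one_re, Complex.mul_re, sub_self,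
      Complex.ofReal_zero, zero_mul, Complex.ofReal_one] at h
  have h2 : ∫ y : ℝ in (0:ℝ)..w.im, G (1 + y * I) = ∫ y : ℝ in (0:ℝ)..w.im, G (y * I) := by
    refine intervalIntegral.integral_congr fun y _ => ?_
    rw [add_comm, hper]
  rw [h2] at h
  linear_combination -h

lemma log_deriv_aux (s : ℂ) (w : ℂ) (hs : s = 1 ∨ s = -1) (hw : 0 < (s * w).im) (u : ℝ) :
    HasDerivAt (fun u : ℝ => Complex.log (1 - ee (s * (u + w))))
      (-(s * (2 * (Real.pi : ℂ) * I)) * (ee (s * (u + w)) / (1 - ee (s * (u + w))))) u := by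
  have hn : ‖ee (s * (u + w))‖ < 1 := by
    rw [norm_ee, Real.exp_lt_one_iff]
    have : (s * (u + w)).im = (s * w).im := by
      rcases hs with rfl | rfl <;> simp
    rw [this]
    have := Real.pi_pos
    nlinarith [mul_pos this hw]
  have hsl : 1 - ee (s * (u + w)) ∈ Complex.slitPlane := by
    rw [sub_eq_add_neg]; apply Complex.mem_slitPlane_of_norm_lt_one; rwa [norm_neg]
  have h1 : HasDerivAt (fun u : ℂ => s * (u + w)) s (u : ℂ) := by
    simpa using ((hasDerivAt_id (u:ℂ)).add_const w).const_mul s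
  have h2 := ((ee_hasDerivAt (s * (u + w))).comp (u:ℂ) h1).const_sub 1
  have h3 := (h2.clog hsl).comp_ofReal
  refine h3.congr_deriv ?_
  simp only [Function.comp]
  ring

lemma ker_int_neg (w : ℂ) (hw : w.im < 0) : ∫ u in (0:ℝ)..1, 1 / (ee (u + w) - 1) = 0 := by
  have hpi : 2 * (Real.pi : ℂ) * I ≠ 0 := Complex.two_pi_I_ne_zero
  have hne : ∀ u : ℝ, ee (u + w) - 1 ≠ 0 := by
    intro u h
    obtain ⟨n, hn⟩ := (ee_eq_one_iff _).1 (sub_eq_zero.1 h)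
    have := congrArg Complex.im hn
    simp at this; linarith
  have hd : ∀ u : ℝ, HasDerivAt (fun u : ℝ => Complex.log (1 - ee (-1 * (u + w))) / (2 * (Real.pi : ℂ) * I))
      (1 / (ee (u + w) - 1)) u := by
    intro u
    have := (log_deriv_aux (-1) w (Or.inr rfl) (by simpa using hw) u).div_const
      (2 * (Real.pi : ℂ) * I)
    refine this.congr_deriv ?_
    have hx := hne u
    have hx0 := ee_ne_zero (u + w)
    rw [neg_one_mul (_ + _ : ℂ), ee_neg]
    have : 1 - (ee (u + w))⁻¹ ≠ 0 := by
      rw [sub_ne_zero]; intro h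
      apply hx; rw [eq_comm, inv_eq_one] at h; rw [h, sub_self]
    field_simp
  rw [intervalIntegral.integral_eq_sub_of_hasDerivAt (fun u _ => hd u)]
  · have : ee (-1 * (((1:ℝ):ℂ) + w)) = ee (-1 * (((0:ℝ):ℂ) + w)) :=
      ee_congr_int (-1) (by push_cast; ring)
    rw [this, sub_self]
  · apply Continuous.intervalIntegrable
    refine Continuous.div continuous_const ?_ hne
    exact (ee_continuous.comp (by fun_prop)).sub continuous_const

lemma ker_int_pos (w : ℂ) (hw : 0 < w.im) : ∫ u in (0:ℝ)..1, 1 / (ee (u + w) - 1) = -1 := by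
  have h := ker_int_neg (-1 - w) (by simpa using hw)
  have h2 := intervalIntegral.integral_comp_sub_left (a := 0) (b := 1)
    (fun u : ℝ => 1 / (ee (u + (-1 - w)) - 1)) 1
  simp only [sub_self, sub_zero] at h2
  rw [h] at h2
  have hne : ∀ u : ℝ, ee (u + w) - 1 ≠ 0 := by
    intro u h
    obtain ⟨n, hn⟩ := (ee_eq_one_iff _).1 (sub_eq_zero.1 h)
    have := congrArg Complex.im hn
    simp at this; linarith
  have h3 : ∀ u : ℝ, 1 / (ee (u + w) - 1) = -1 - 1 / (ee (((1 - u : ℝ) : ℂ) + (-1 - w)) - 1) := by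
    intro u
    have : (((1 - u : ℝ) : ℂ) + (-1 - w)) = -(u + w) := by push_cast; ring
    rw [this, ee_neg]
    have hx := hne u
    have hx0 := ee_ne_zero (u + w)
    have : (ee (u + w))⁻¹ - 1 ≠ 0 := by
      rw [sub_ne_zero]; intro h
      apply hx; rw [inv_eq_one] at h; rw [h, sub_self]
    have h1 : 1 - ee (u + w) ≠ 0 := by rw [← neg_sub]; exact neg_ne_zero.2 hx
    field_simp
    ring
  have h4 : IntervalIntegrable (fun u : ℝ => 1 / (ee (((1 - u : ℝ) : ℂ) + (-1 - w)) - 1)) volume 0 1 := by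
    apply Continuous.intervalIntegrable
    refine Continuous.div continuous_const ?_ ?_
    · exact (ee_continuous.comp (by fun_prop)).sub continuous_const
    · intro u h
      obtain ⟨n, hn⟩ := (ee_eq_one_iff _).1 (sub_eq_zero.1 h)
      have := congrArg Complex.im hn
      simp at this; linarith
  simp_rw [h3]
  rw [intervalIntegral.integral_sub (by simp) h4, h2]
  simp

lemma KE_int (w : ℂ) (hw : w.im ≠ 0) :
    ∫ u in (0:ℝ)..1, KE (u + w) = -((Real.pi : ℂ) * I) * (Real.sign w.im : ℂ) := by
  have hne : ∀ u : ℝ, ee (u + w) - 1 ≠ 0 := by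
    intro u h
    obtain ⟨n, hn⟩ := (ee_eq_one_iff _).1 (sub_eq_zero.1 h)
    have := congrArg Complex.im hn
    simp at this; exact hw this
  have hi : IntervalIntegrable (fun u : ℝ => 1 / (ee (u + w) - 1)) volume 0 1 := by
    apply Continuous.intervalIntegrable
    refine Continuous.div continuous_const ?_ hne
    exact (ee_continuous.comp (by fun_prop)).sub continuous_const
  simp only [KE]
  rw [intervalIntegral.integral_const_mul, intervalIntegral.integral_add (by simp) hi]
  rcases lt_or_gt_of_ne hw with h | h
  · rw [ker_int_neg w h, Real.sign_of_neg h]; simp; ring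
  · rw [ker_int_pos w h, Real.sign_of_pos h]; simp; ring

lemma strip_integral {ι : Type*} (W : Finset ι) (a ρ : ι → ℂ) (Y : ℝ) (f : ℂ → ℂ)
    (hper : ∀ w, f (w + 1) = f w)
    (hdiff : ∀ w : ℂ, |w.im| < Y → (∀ i ∈ W, ee (w - a i) ≠ 1) → DifferentiableAt ℂ f w)
    (hres : ∀ i ∈ W, Tendsto (fun w => (w - a i) * f w) (𝓝[≠] (a i)) (𝓝 (ρ i)))
    (hinj : ∀ i ∈ W, ∀ j ∈ W, ee (a i - a j) = 1 → i = j) :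
    ∃ C : ℂ, ∀ w : ℂ, |w.im| < Y → (∀ i ∈ W, w.im ≠ (a i).im) →
      ∫ u in (0:ℝ)..1, f (u + w) =
        C - Real.pi * I * ∑ i ∈ W, ρ i * (Real.sign (w.im - (a i).im) : ℂ) := by
  obtain ⟨G, hG1, hG2, hG3⟩ := strip_decomp W a ρ Y f hper hdiff hres hinj
  refine ⟨∫ u in (0:ℝ)..1, G u, fun w hw hwi => ?_⟩
  have hne : ∀ i ∈ W, ∀ u : ℝ, ee (u + w - a i) ≠ 1 := by
    intro i hi u h
    obtain ⟨n, hn⟩ := (ee_eq_one_iff _).1 h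
    have := congrArg Complex.im hn
    simp at this
    exact hwi i hi (by linarith)
  have him : ∀ u : ℝ, |(u + w : ℂ).im| < Y := fun u => by simpa using hw
  have hGi : IntervalIntegrable (fun u : ℝ => G (u + w)) volume 0 1 := by
    apply Continuous.intervalIntegrable
    rw [continuous_iff_continuousAt]
    intro u
    exact (hG1 _ (him u)).continuousAt.comp (f := fun u : ℝ => (u + w : ℂ)) (by fun_prop)
  have hKi : ∀ i ∈ W, IntervalIntegrable (fun u : ℝ => ρ i * KE (u + w - a i)) volume 0 1 := by
    intro i hi
    apply Continuous.intervalIntegrable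
    rw [continuous_iff_continuousAt]
    intro u
    refine ContinuousAt.mul continuousAt_const ?_
    exact (KE_differentiableAt (hne i hi u)).continuousAt.comp
      (f := fun u : ℝ => (u + w - a i : ℂ)) (by fun_prop)
  have e : ∫ u in (0:ℝ)..1, f (u + w) =
      ∫ u in (0:ℝ)..1, (G (u + w) + ∑ i ∈ W, ρ i * KE (u + w - a i)) :=
    intervalIntegral.integral_congr fun u _ => hG3 _ (him u) fun i hi => hne i hi u
  have hsum : IntervalIntegrable (fun u : ℝ => ∑ i ∈ W, ρ i * KE (u + w - a i)) volume 0 1 := by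
    have e2 : (fun u : ℝ => ∑ i ∈ W, ρ i * KE (u + w - a i)) =
        ∑ i ∈ W, fun u : ℝ => ρ i * KE (u + w - a i) := by
      funext u; simp [Finset.sum_apply]
    rw [e2]
    exact IntervalIntegrable.sum W hKi
  rw [e, intervalIntegral.integral_add hGi hsum, strip_const Y G hG1 hG2 w hw,
    intervalIntegral.integral_finsetSum hKi, sub_eq_add_neg, Finset.mul_sum, ← Finset.sum_neg_distrib]
  congr 1
  refine Finset.sum_congr rfl fun i hi => ?_
  rw [intervalIntegral.integral_const_mul]
  have := KE_int (w - a i) (by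
    rw [Complex.sub_im]; exact sub_ne_zero.2 (hwi i hi))
  simp only [← add_sub_assoc, Complex.sub_im] at this
  rw [this]; ring

def Jc (m : ℕ) (D : ℚ × ℚ → ℂ → ℂ) (l : ℤ) (τ : ℂ) (t : ℚ × ℚ) (n : ℤ) : ℂ :=
  -(D t τ * ee ((m : ℂ) * (t.1 : ℚ) * (t.2 : ℚ)) *
    ee (-(2 * (m : ℂ) * (t.2 : ℚ) * (lamVal m t l n : ℝ))) *
    ee (-(m : ℂ) * (lamVal m t l n : ℝ) ^ 2 * τ))

def stp (a x : ℝ) : ℝ := (Real.sign (x - a) + Real.sign a) / 2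

def f0 (m : ℕ) (φ : ℂ → ℂ → ℂ) (l : ℤ) (τ w : ℂ) : ℂ :=
  φ τ (w - (l : ℂ) * τ / (2 * (m : ℂ))) * ee (-(l : ℂ) * w)

def Hx (m : ℕ) (φ : ℂ → ℂ → ℂ) (l : ℤ) (τ : ℂ) (x : ℝ) : ℂ :=
  ee ((l : ℂ) ^ 2 * τ / (4 * (m : ℂ))) * ∫ u in (0:ℝ)..1, f0 m φ l τ (u + x * τ)

lemma f0_per {m : ℕ} {φ : ℂ → ℂ → ℂ} (he : EllipticLaw m φ) (l : ℤ) {τ : ℂ} (hτ : 0 < τ.im)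
    (w : ℂ) : f0 m φ l τ (w + 1) = f0 m φ l τ w := by
  have h := he τ hτ (w - (l : ℂ) * τ / (2 * (m : ℂ))) 0 1
  have e : w + 1 - (l : ℂ) * τ / (2 * (m : ℂ)) =
      w - (l : ℂ) * τ / (2 * (m : ℂ)) + ((0 : ℤ) : ℂ) * τ + ((1 : ℤ) : ℂ) := by push_cast; ring
  rw [f0, f0, e, h]
  have e2 : ee (-(l : ℂ) * (w + 1)) = ee (-(l : ℂ) * w) :=
    ee_congr_int (-l) (by push_cast; ring)
  rw [e2]
  simp [ee_zero]

def poleA (m : ℕ) (l : ℤ) (τ : ℂ) (i : (ℚ × ℚ) × ℤ) : ℂ :=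
  (lamVal m i.1 l i.2 : ℝ) * τ + ((i.1.2 : ℚ) : ℂ)

lemma poleA_eq (m : ℕ) (l : ℤ) (τ : ℂ) (i : (ℚ × ℚ) × ℤ) :
    poleA m l τ i = zpt i.1 τ + (i.2 : ℂ) * τ + (l : ℂ) * τ / (2 * (m : ℂ)) := by
  simp only [poleA, zpt, lamVal]; push_cast; ring

lemma poleA_im (m : ℕ) (l : ℤ) (τ : ℂ) (i : (ℚ × ℚ) × ℤ) :
    (poleA m l τ i).im = lamVal m i.1 l i.2 * τ.im := by
  simp only [poleA, Complex.add_im, Complex.im_ofReal_mul]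
  have : (((i.1.2 : ℚ) : ℂ)).im = 0 := by
    exact Complex.ratCast_im _
  rw [this, add_zero]

def resR (m : ℕ) (D : ℚ × ℚ → ℂ → ℂ) (l : ℤ) (τ : ℂ) (i : (ℚ × ℚ) × ℤ) : ℂ :=
  -(Jc m D l τ i.1 i.2) * ee (-((l : ℂ) ^ 2 * τ / (4 * (m : ℂ)))) / (2 * (Real.pi : ℂ) * I)

lemma f0_res {k : ℤ} {m : ℕ} (hm : 0 < m) {S : Set (ℚ × ℚ)} (Φ : MeroJacobiForm k m S)
    {D : ℚ × ℚ → ℂ → ℂ} (hD : IsResidueFactor m S Φ.toFun D) (l : ℤ) {τ : ℂ} (hτ : 0 < τ.im)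
    (i : (ℚ × ℚ) × ℤ) (hi : i.1 ∈ S) :
    Tendsto (fun w => (w - poleA m l τ i) * f0 m Φ.toFun l τ w) (𝓝[≠] (poleA m l τ i))
      (𝓝 (resR m D l τ i)) := by
  obtain ⟨t, n⟩ := i
  have h1 := hD t hi τ hτ
  have hm' : (m : ℂ) ≠ 0 := by exact_mod_cast hm.ne'
  set c : ℂ := (n : ℂ) * τ + (l : ℂ) * τ / (2 * (m : ℂ)) with hc
  have hpc : poleA m l τ (t, n) = zpt t τ + c := by rw [poleA_eq, hc]; ring
  have e := (Homeomorph.addRight (c : ℂ)).map_punctured_nhds_eq (zpt t τ)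
  simp only [Homeomorph.coe_addRight] at e
  rw [hpc, ← e, tendsto_map'_iff]
  have hcont : Continuous (fun z : ℂ => ee (-(m : ℂ) * ((n : ℂ) ^ 2 * τ + 2 * (n : ℂ) * z)) *
      ee (-(l : ℂ) * (z + c))) := by
    have := ee_continuous; fun_prop
  have h2 := ((hcont.tendsto (zpt t τ)).mono_left nhdsWithin_le_nhds).mul
    (h1.const_mul ((2 * (Real.pi : ℂ) * I * ee ((m : ℂ) * (t.1 : ℚ) * zpt t τ))⁻¹))
  have hpi : 2 * (Real.pi : ℂ) * I ≠ 0 := Complex.two_pi_I_ne_zero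
  have hlim : ee (-(m : ℂ) * ((n : ℂ) ^ 2 * τ + 2 * (n : ℂ) * zpt t τ)) *
      ee (-(l : ℂ) * (zpt t τ + c)) *
      ((2 * (Real.pi : ℂ) * I * ee ((m : ℂ) * (t.1 : ℚ) * zpt t τ))⁻¹ * D t τ) =
      resR m D l τ (t, n) := by
    simp only [resR, Jc, neg_neg]
    rw [mul_inv, ← ee_neg]
    have : ee (-(m : ℂ) * ((n : ℂ) ^ 2 * τ + 2 * (n : ℂ) * zpt t τ)) *
      ee (-(l : ℂ) * (zpt t τ + c)) * ee (-((m : ℂ) * (t.1 : ℚ) * zpt t τ)) =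
       ee ((m : ℂ) * (t.1 : ℚ) * (t.2 : ℚ)) *
      ee (-(2 * (m : ℂ) * (t.2 : ℚ) * (lamVal m t l n : ℝ))) *
      ee (-(m : ℂ) * (lamVal m t l n : ℝ) ^ 2 * τ) * ee (-((l : ℂ) ^ 2 * τ / (4 * (m : ℂ)))) := by
      simp only [← ee_add]
      congr 1
      simp only [zpt, lamVal, hc]; push_cast
      field_simp
      ring
    linear_combination (D t τ / (2 * (Real.pi : ℂ) * I)) * this
  rw [← hlim]
  refine h2.congr fun z => ?_
  simp only [Function.comp, f0]
  have h3 := Φ.elliptic τ hτ z n 0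
  have e3 : z + c - (l : ℂ) * τ / (2 * (m : ℂ)) = z + (n : ℂ) * τ + ((0 : ℤ) : ℂ) := by
    rw [hc]; push_cast; ring
  rw [e3, h3]
  have hne := ee_ne_zero ((m : ℂ) * (t.1 : ℚ) * zpt t τ)
  field_simp
  ring

lemma rat_im (q : ℚ) : ((q : ℂ)).im = 0 := Complex.ratCast_im q

lemma rep_unique {S : Set (ℚ × ℚ)} {T : Finset (ℚ × ℚ)} (hT : IsRepSet S T) {t t' : ℚ × ℚ}
    (ht : t ∈ T) (ht' : t' ∈ T) (a b : ℤ) (h1 : t.1 = t'.1 + a) (h2 : t.2 = t'.2 + b) : t = t' := by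
  obtain ⟨u, hu, huu⟩ := hT.2 t (hT.1 ht)
  rw [huu t ⟨ht, 0, 0, by simp⟩, huu t' ⟨ht', a, b, h1, h2⟩]

lemma poleA_inj {m : ℕ} {S : Set (ℚ × ℚ)} {T : Finset (ℚ × ℚ)} (hT : IsRepSet S T) (l : ℤ)
    {τ : ℂ} (hτ : 0 < τ.im) (i j : (ℚ × ℚ) × ℤ) (hi : i.1 ∈ T) (hj : j.1 ∈ T)
    (h : ee (poleA m l τ i - poleA m l τ j) = 1) : i = j := by
  obtain ⟨b, hb⟩ := (ee_eq_one_iff _).1 h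
  have him := congrArg Complex.im hb
  rw [Complex.sub_im, poleA_im, poleA_im, Complex.intCast_im, ← sub_mul] at him
  have hl : lamVal m i.1 l i.2 = lamVal m j.1 l j.2 := by
    rcases mul_eq_zero.1 him with h | h
    · linarith
    · exact absurd h hτ.ne'
  have h2 : i.1.2 = j.1.2 + b := by
    rw [poleA, poleA, hl] at hb
    have : ((i.1.2 : ℚ) : ℂ) = (j.1.2 : ℚ) + (b : ℂ) := by linear_combination hb
    exact_mod_cast this
  have h1 : i.1.1 = j.1.1 + ((j.2 - i.2 : ℤ) : ℚ) := by
    simp only [lamVal] at hl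
    have : ((i.1.1 : ℚ) : ℝ) = (j.1.1 : ℚ) + ((j.2 - i.2 : ℤ) : ℝ) := by
      push_cast; linarith
    exact_mod_cast this
  have e := rep_unique hT hi hj _ _ h1 h2
  have : i.2 = j.2 := by
    rw [e] at hl; simp only [lamVal] at hl
    have : (i.2 : ℝ) = j.2 := by linarith
    exact_mod_cast this
  exact Prod.ext e this

lemma f0_diff {k : ℤ} {m : ℕ} {S : Set (ℚ × ℚ)} (Φ : MeroJacobiForm k m S)
    {T : Finset (ℚ × ℚ)} (hT : IsRepSet S T) (l : ℤ) {τ : ℂ} (hτ : 0 < τ.im) (w : ℂ)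
    (hw : ∀ t ∈ T, ∀ n : ℤ, lamVal m t l n * τ.im = w.im → ee (w - poleA m l τ (t, n)) ≠ 1) :
    DifferentiableAt ℂ (f0 m Φ.toFun l τ) w := by
  have h1 := Φ.holo τ hτ (w - (l : ℂ) * τ / (2 * (m : ℂ))) (by
    intro s hs hz
    obtain ⟨t, ⟨ht, a, b, ha, hb⟩, -⟩ := hT.2 s hs
    have e : w = poleA m l τ (t, a) + b := by
      rw [poleA_eq]
      simp only [zpt] at hz ⊢
      rw [ha, hb] at hz; push_cast at hz
      linear_combination hz
    refine hw t ht a ?_ ?_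
    · rw [e, Complex.add_im, poleA_im]; simp
    · rw [e, add_sub_cancel_left]; exact ee_int b)
  have h2 : DifferentiableAt ℂ (fun w : ℂ => ((τ, w - (l : ℂ) * τ / (2 * (m : ℂ))) : ℂ × ℂ)) w := by
    fun_prop
  have h3 : DifferentiableAt ℂ (fun w : ℂ => Φ.toFun τ (w - (l : ℂ) * τ / (2 * (m : ℂ)))) w :=
    DifferentiableAt.comp (g := fun p : ℂ × ℂ => Φ.toFun p.1 p.2) w h1 h2
  have h4 := ee_differentiable
  unfold f0
  exact h3.mul (by fun_prop)

lemma exists_window (m : ℕ) (T : Finset (ℚ × ℚ)) (l : ℤ) (X : ℝ) :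
    ∃ M : ℕ, ∀ t ∈ T, ∀ n : ℤ, n ∉ Finset.Icc (-(M : ℤ)) M → X ≤ |lamVal m t l n| := by
  obtain ⟨M, hM⟩ := exists_nat_ge (X + |(l : ℝ) / (2 * m)| + ∑ t ∈ T, |(t.1 : ℝ)|)
  refine ⟨M, fun t ht n hn => ?_⟩
  have h1 : |(t.1 : ℝ)| ≤ ∑ t ∈ T, |(t.1 : ℝ)| :=
    Finset.single_le_sum (f := fun t : ℚ × ℚ => |(t.1 : ℝ)|) (fun _ _ => abs_nonneg _) ht
  have h2 : (M : ℝ) ≤ |(n : ℝ)| := by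
    have : (M : ℤ) ≤ |n| := by
      rw [Finset.mem_Icc, not_and_or] at hn
      rcases hn with h | h
      · exact le_trans (by omega) (neg_le_abs n)
      · exact le_trans (by omega) (le_abs_self n)
    exact_mod_cast this
  have h3 : |(n : ℝ)| ≤ |lamVal m t l n| + |(t.1 : ℝ)| + |(l : ℝ) / (2 * m)| := by
    have e : (n : ℝ) = lamVal m t l n + -(t.1 : ℝ) + -((l : ℝ) / (2 * m)) := by
      simp only [lamVal]; ring
    calc |(n : ℝ)| = |lamVal m t l n + -(t.1 : ℝ) + -((l : ℝ) / (2 * m))| := by rw [← e]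
      _ ≤ _ := by
        refine (abs_add_le _ _).trans ?_
        rw [abs_neg]
        gcongr
        refine (abs_add_le _ _).trans ?_
        rw [abs_neg]
  linarith

lemma sign_pm (a ε : ℝ) (hε : 0 < ε) (h : a ≠ 0 → ε < |a|) :
    Real.sign (ε - a) + Real.sign (-ε - a) = -2 * Real.sign a := by
  rcases lt_trichotomy a 0 with ha | ha | ha
  · have := h ha.ne
    rw [abs_of_neg ha] at this
    rw [Real.sign_of_pos (by linarith), Real.sign_of_pos (by linarith), Real.sign_of_neg ha]; norm_num
  · subst ha
    rw [Real.sign_of_pos (by linarith), Real.sign_of_neg (by linarith)]; simp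
  · have := h ha.ne'
    rw [abs_of_pos ha] at this
    rw [Real.sign_of_neg (by linarith), Real.sign_of_neg (by linarith), Real.sign_of_pos ha]; norm_num

lemma sign_mul_pos (a b : ℝ) (hb : 0 < b) : Real.sign (a * b) = Real.sign a := by
  rcases lt_trichotomy a 0 with ha | ha | ha
  · rw [Real.sign_of_neg ha, Real.sign_of_neg (mul_neg_of_neg_of_pos ha hb)]
  · simp [ha]
  · rw [Real.sign_of_pos ha, Real.sign_of_pos (mul_pos ha hb)]

lemma stp_eq_zero (a x : ℝ) (h : |x| < |a|) : stp a x = 0 := by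
  obtain ⟨h1, h2⟩ := abs_lt.1 h
  unfold stp
  rcases lt_trichotomy a 0 with ha | ha | ha
  · rw [abs_of_neg ha] at h1 h2
    rw [Real.sign_of_pos (by linarith), Real.sign_of_neg ha]; norm_num
  · subst ha; simp at h; exact absurd h (not_lt.2 (abs_nonneg x))
  · rw [abs_of_pos ha] at h1 h2
    rw [Real.sign_of_neg (by linarith), Real.sign_of_pos ha]; norm_num

lemma Hx_formula {k : ℤ} {m : ℕ} (hm : 0 < m) {S : Set (ℚ × ℚ)} (Φ : MeroJacobiForm k m S)
    {h : ℤ → ℂ → ℂ} (hh : IsCanonCoeff m Φ.toFun h)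
    {D : ℚ × ℚ → ℂ → ℂ} (hD : IsResidueFactor m S Φ.toFun D)
    {T : Finset (ℚ × ℚ)} (hT : IsRepSet S T) (l : ℤ) {τ : ℂ} (hτ : 0 < τ.im) (x : ℝ)
    (hx : ∀ t ∈ T, ∀ n : ℤ, x ≠ lamVal m t l n) :
    Hx m Φ.toFun l τ x = h l τ + ∑ t ∈ T, ∑' n : ℤ, Jc m D l τ t n * (stp (lamVal m t l n) x : ℂ) := by
  obtain ⟨M, hM⟩ := exists_window m T l (|x| + 1)
  set W : Finset ((ℚ × ℚ) × ℤ) := T ×ˢ Finset.Icc (-(M : ℤ)) M with hW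
  set Y : ℝ := (|x| + 1) * τ.im with hY
  have hYp : 0 < Y := by positivity
  obtain ⟨C, hC⟩ := strip_integral W (poleA m l τ) (resR m D l τ) Y (f0 m Φ.toFun l τ)
    (f0_per Φ.elliptic l hτ) (by
      intro w hw hwi
      refine f0_diff Φ hT l hτ w fun t ht n hn => hwi (t, n) ?_
      rw [hW, Finset.mem_product]
      refine ⟨ht, ?_⟩
      by_contra hcon
      have h1 := hM t ht n hcon
      rw [← hn, abs_mul, abs_of_pos hτ, hY] at hw
      have := lt_of_mul_lt_mul_right hw hτ.le
      linarith)
    (fun i hi => f0_res hm Φ hD l hτ i (hT.1 (Finset.mem_product.1 hi).1))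
    (fun i hi j hj => poleA_inj hT l hτ i j (Finset.mem_product.1 hi).1 (Finset.mem_product.1 hj).1)
  have hlim := hh l τ hτ
  have hev : ∀ᶠ ε : ℝ in 𝓝[>] (0:ℝ), 0 < ε ∧ ε < Y ∧ ∀ i ∈ W, (poleA m l τ i).im ≠ 0 →
      ε < |(poleA m l τ i).im| := by
    refine (eventually_mem_nhdsWithin).and (((eventually_lt_nhds hYp).filter_mono nhdsWithin_le_nhds).and ?_)
    rw [Filter.eventually_all_finset]
    intro i hi
    by_cases h0 : (poleA m l τ i).im = 0
    · simp [h0]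
    · filter_upwards [(eventually_lt_nhds (abs_pos.2 h0)).filter_mono nhdsWithin_le_nhds] with ε hε _
      exact hε
  have hval : ∀ᶠ ε : ℝ in 𝓝[>] (0:ℝ), (1 / 2 : ℂ) *
          ((∫ x in (0:ℝ)..1,
              Φ.toFun τ ((x : ℂ) + (ε : ℂ) * Complex.I - (l : ℂ) * τ / (2 * (m : ℂ))) *
                ee (-(l : ℂ) * ((x : ℂ) + (ε : ℂ) * Complex.I))) +
            ∫ x in (0:ℝ)..1,
              Φ.toFun τ ((x : ℂ) - (ε : ℂ) * Complex.I - (l : ℂ) * τ / (2 * (m : ℂ))) *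
                ee (-(l : ℂ) * ((x : ℂ) - (ε : ℂ) * Complex.I))) =
        C + Real.pi * I * ∑ i ∈ W, resR m D l τ i * (Real.sign (poleA m l τ i).im : ℂ) := by
    filter_upwards [hev] with ε hε
    obtain ⟨hε0, hεY, hεi⟩ := hε
    have a1 := hC (ε * I) (by simp [abs_of_pos hε0, hεY]) (by
      intro i hi he
      simp at he
      have := hεi i hi (by rw [← he]; exact hε0.ne')
      rw [← he, abs_of_pos hε0] at this
      exact lt_irrefl _ this)
    have a2 := hC (-(ε * I)) (by simp [abs_of_pos hε0, hεY]) (by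
      intro i hi he
      simp at he
      have := hεi i hi (by rw [← he]; simpa using hε0.ne')
      rw [← he, abs_neg, abs_of_pos hε0] at this
      exact lt_irrefl _ this)
    simp only [f0, ← sub_eq_add_neg] at a1 a2
    rw [a1, a2]
    have : ∑ i ∈ W, resR m D l τ i * (Real.sign ((ε * I : ℂ).im - (poleA m l τ i).im) : ℂ) +
        ∑ i ∈ W, resR m D l τ i * (Real.sign ((-(ε * I) : ℂ).im - (poleA m l τ i).im) : ℂ) =
        -2 * ∑ i ∈ W, resR m D l τ i * (Real.sign (poleA m l τ i).im : ℂ) := by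
      rw [← Finset.sum_add_distrib, Finset.mul_sum]
      refine Finset.sum_congr rfl fun i hi => ?_
      have := sign_pm _ ε hε0 (hεi i hi)
      have h2 : (Real.sign (ε - (poleA m l τ i).im) : ℂ) + (Real.sign (-ε - (poleA m l τ i).im) : ℂ)
          = -2 * (Real.sign (poleA m l τ i).im : ℂ) := by exact_mod_cast this
      simp only [Complex.neg_im, Complex.mul_im, Complex.ofReal_re, Complex.ofReal_im, Complex.I_re,
        Complex.I_im, mul_one, zero_mul, add_zero, mul_zero]
      linear_combination resR m D l τ i * h2
    linear_combination (-(Real.pi * I) / 2) * this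
  have hlim2 : Tendsto (fun _ : ℝ => C + Real.pi * I * ∑ i ∈ W, resR m D l τ i *
      (Real.sign (poleA m l τ i).im : ℂ)) (𝓝[>] (0:ℝ))
      (𝓝 (ee (-(l : ℂ) ^ 2 * τ / (4 * (m : ℂ))) * h l τ)) := hlim.congr' hval
  have hC2 := tendsto_nhds_unique hlim2 tendsto_const_nhds
  have a3 := hC (x * τ) (by
    rw [Complex.im_ofReal_mul, abs_mul, abs_of_pos hτ, hY]
    exact mul_lt_mul_of_pos_right (by linarith) hτ) (by
    intro i hi he
    rw [Complex.im_ofReal_mul, poleA_im] at he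
    exact hx i.1 (Finset.mem_product.1 hi).1 i.2 (mul_right_cancel₀ hτ.ne' he))
  have hsum : ∑ t ∈ T, ∑' n : ℤ, Jc m D l τ t n * (stp (lamVal m t l n) x : ℂ) =
      ∑ i ∈ W, Jc m D l τ i.1 i.2 * (stp (lamVal m i.1 l i.2) x : ℂ) := by
    rw [hW, Finset.sum_product]
    refine Finset.sum_congr rfl fun t ht => ?_
    refine tsum_eq_sum fun n hn => ?_
    rw [stp_eq_zero _ _ (by have := hM t ht n hn; linarith)]; simp
  rw [hsum, Hx, a3]
  have e1 : ee (-(l : ℂ) ^ 2 * τ / (4 * (m : ℂ))) = (ee ((l : ℂ) ^ 2 * τ / (4 * (m : ℂ))))⁻¹ := by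
    rw [← ee_neg]; congr 1; ring
  have hne := ee_ne_zero ((l : ℂ) ^ 2 * τ / (4 * (m : ℂ)))
  rw [e1] at hC2
  have hh' : h l τ = ee ((l : ℂ) ^ 2 * τ / (4 * (m : ℂ))) * (C + Real.pi * I * ∑ i ∈ W, resR m D l τ i *
      (Real.sign (poleA m l τ i).im : ℂ)) := by
    rw [← hC2, mul_inv_cancel_left₀ hne]
  rw [hh', mul_sub, mul_add, sub_eq_add_neg, add_assoc]
  congr 1
  have e3 : ∑ i ∈ W, Jc m D l τ i.1 i.2 * (stp (lamVal m i.1 l i.2) x : ℂ) =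
      ee ((l : ℂ) ^ 2 * τ / (4 * (m : ℂ))) * (Real.pi * I * ∑ i ∈ W, -(resR m D l τ i *
        ((Real.sign ((x * τ : ℂ).im - (poleA m l τ i).im) : ℂ) + (Real.sign (poleA m l τ i).im : ℂ)))) := by
    rw [Finset.mul_sum, Finset.mul_sum]
    refine Finset.sum_congr rfl fun i hi => ?_
    rw [Complex.im_ofReal_mul, poleA_im, ← sub_mul, sign_mul_pos _ _ hτ, sign_mul_pos _ _ hτ, resR,
      ee_neg, stp]
    have hpi : 2 * (Real.pi : ℂ) * I ≠ 0 := Complex.two_pi_I_ne_zero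
    have hpi' : (Real.pi : ℂ) ≠ 0 := by exact_mod_cast Real.pi_ne_zero
    have := Complex.I_ne_zero
    push_cast
    field_simp
  rw [e3, Finset.sum_neg_distrib]
  simp only [mul_add, Finset.sum_add_distrib]
  ring

lemma tsum_dom {F : ℤ → ℝ → ℂ} {c : ℤ → ℝ} {g : ℝ → ℝ} (hF : ∀ n, AEStronglyMeasurable (F n) volume)
    (hc : Summable c) (hg : Integrable g) (hb : ∀ n x, ‖F n x‖ ≤ c n * g x) :
    Integrable (fun x => ∑' n, F n x) ∧ HasSum (fun n => ∫ x, F n x) (∫ x, ∑' n, F n x) := by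
  have hs : ∀ x, HasSum (fun n => F n x) (∑' n, F n x) := fun x =>
    (Summable.of_norm_bounded (hc.mul_right (g x)) (fun n => hb n x)).hasSum
  have hts : (fun x => ∑' n, c n * g x) = fun x => (∑' n, c n) * g x := by
    funext x; exact tsum_mul_right
  constructor
  · refine Integrable.mono' (hg.const_mul (∑' n, c n)) ?_ (ae_of_all _ fun x => ?_)
    · refine aestronglyMeasurable_of_tendsto_ae (u := (atTop : Filter (Finset ℤ)))
        (f := fun s x => ∑ n ∈ s, F n x) (fun s => ?_) (ae_of_all _ fun x => hs x)
      exact Finset.aestronglyMeasurable_fun_sum s fun n _ => hF n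
    · have h1 := hc.mul_right (g x)
      calc ‖∑' n, F n x‖ ≤ ∑' n, c n * g x := tsum_of_norm_bounded h1.hasSum (fun n => hb n x)
        _ = _ := tsum_mul_right
  · refine hasSum_integral_of_dominated_convergence (fun n x => c n * g x) hF
      (fun n => ae_of_all _ fun x => hb n x) (ae_of_all _ fun x => hc.mul_right (g x)) ?_
      (ae_of_all _ hs)
    rw [hts]
    exact hg.const_mul _

lemma sign_measurable : Measurable Real.sign := by
  have : Real.sign = fun r : ℝ => if r < 0 then (-1 : ℝ) else if 0 < r then 1 else 0 := by
    funext r; rfl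
  rw [this]
  exact Measurable.ite measurableSet_Iio measurable_const
    (Measurable.ite measurableSet_Ioi measurable_const measurable_const)

lemma stp_measurable (a : ℝ) : Measurable (stp a) := by
  unfold stp
  have := sign_measurable
  fun_prop

lemma abs_sign_le (r : ℝ) : |Real.sign r| ≤ 1 := by
  rcases Real.sign_apply_eq r with h | h | h <;> rw [h] <;> norm_num

lemma abs_stp_le (a x : ℝ) : |stp a x| ≤ 1 := by
  unfold stp
  rw [abs_div, abs_two]
  have := abs_add_le (Real.sign (x - a)) (Real.sign a)
  have := abs_sign_le (x - a)
  have := abs_sign_le a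
  linarith

lemma stp_neg (a x : ℝ) : stp a (-x) = -stp (-a) x := by
  unfold stp
  rw [show -x - a = -(x - -a) by ring, Real.sign_neg, Real.sign_neg]; ring

lemma gauss_stp_pos (b a : ℝ) (hb : 0 < b) (ha : 0 < a) :
    ∫ x, Real.exp (-b * x ^ 2) * stp a x =
      Real.sqrt (Real.pi / b) * (1 / 2 * erfc (|a| * Real.sqrt b)) := by
  have h1 : (fun x => Real.exp (-b * x ^ 2) * stp a x) =ᵐ[volume]
      Set.indicator (Set.Ioi a) (fun x => Real.exp (-b * x ^ 2)) := by
    have : ∀ᵐ x : ℝ, x ≠ a := by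
      rw [ae_iff]; simp
    filter_upwards [this] with x hx
    unfold stp
    rw [Real.sign_of_pos ha]
    rcases lt_or_gt_of_ne hx with h | h
    · rw [Set.indicator_of_notMem (by simpa using h.le), Real.sign_of_neg (by linarith)]; norm_num
    · rw [Set.indicator_of_mem (by simpa using h), Real.sign_of_pos (by linarith)]; norm_num
  rw [integral_congr_ae h1, integral_indicator measurableSet_Ioi]
  have hsb : 0 < Real.sqrt b := Real.sqrt_pos.2 hb
  have h2 := integral_comp_mul_left_Ioi (fun t => Real.exp (-t ^ 2)) a hsb
  have e : (fun x : ℝ => Real.exp (-(Real.sqrt b * x) ^ 2)) = fun x => Real.exp (-b * x ^ 2) := by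
    funext x; rw [mul_pow, Real.sq_sqrt hb.le]; ring_nf
  rw [e] at h2
  rw [h2, erfc, abs_of_pos ha, Real.sqrt_div Real.pi_pos.le, mul_comm a, smul_eq_mul]
  have := Real.sqrt_pos.2 Real.pi_pos
  field_simp

lemma gauss_stp (b a : ℝ) (hb : 0 < b) :
    ∫ x, Real.exp (-b * x ^ 2) * stp a x =
      Real.sqrt (Real.pi / b) * (Real.sign a / 2 * erfc (|a| * Real.sqrt b)) := by
  have hneg : ∀ a : ℝ, ∫ x, Real.exp (-b * x ^ 2) * stp a x =
      -∫ x, Real.exp (-b * x ^ 2) * stp (-a) x := by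
    intro a
    rw [← integral_neg_eq_self, ← integral_neg]
    refine integral_congr_ae (ae_of_all _ fun x => ?_)
    simp only [stp_neg]; ring_nf
  rcases lt_trichotomy a 0 with ha | ha | ha
  · rw [hneg, gauss_stp_pos b (-a) hb (by linarith), Real.sign_of_neg ha, abs_neg]; ring
  · subst ha
    have := hneg 0
    rw [neg_zero] at this
    have : ∫ x, Real.exp (-b * x ^ 2) * stp 0 x = 0 := by linarith
    rw [this]; simp
  · rw [gauss_stp_pos b a hb ha, Real.sign_of_pos ha]

def ga (m : ℕ) (τ : ℂ) : ℝ := 4 * Real.pi * m * τ.im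

lemma ga_pos {m : ℕ} (hm : 0 < m) {τ : ℂ} (hτ : 0 < τ.im) : 0 < ga m τ := by
  unfold ga; have := Real.pi_pos; positivity

lemma Jc_norm (m : ℕ) (D : ℚ × ℚ → ℂ → ℂ) (l : ℤ) (τ : ℂ) (t : ℚ × ℚ) (n : ℤ) :
    ‖Jc m D l τ t n‖ = ‖D t τ‖ * Real.exp (ga m τ / 2 * lamVal m t l n ^ 2) := by
  have h1 : ((m : ℂ) * (t.1 : ℚ) * (t.2 : ℚ)).im = 0 := by
    rw [show (m : ℂ) * (t.1 : ℚ) * (t.2 : ℚ) = ((m * t.1 * t.2 : ℝ) : ℂ) by push_cast; ring]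
    exact Complex.ofReal_im _
  have h2 : (-(2 * (m : ℂ) * (t.2 : ℚ) * (lamVal m t l n : ℝ))).im = 0 := by
    rw [show (-(2 * (m : ℂ) * (t.2 : ℚ) * (lamVal m t l n : ℝ))) =
      ((-(2 * m * t.2 * lamVal m t l n) : ℝ) : ℂ) by push_cast; ring]
    exact Complex.ofReal_im _
  have h3 : (-(m : ℂ) * (lamVal m t l n : ℝ) ^ 2 * τ).im = -(m * lamVal m t l n ^ 2 * τ.im) := by
    rw [show (-(m : ℂ) * (lamVal m t l n : ℝ) ^ 2 * τ) =
      ((-(m * lamVal m t l n ^ 2) : ℝ) : ℂ) * τ by push_cast; ring, Complex.im_ofReal_mul]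
    ring
  rw [Jc, norm_neg, norm_mul, norm_mul, norm_mul, norm_ee, norm_ee, norm_ee, h1, h2, h3]
  simp only [mul_zero, neg_zero, Real.exp_zero, mul_one]
  congr 2
  rw [ga]; ring

lemma exp_stp_bound (b a x : ℝ) (hb : 0 < b) :
    ‖Real.exp (-b * x ^ 2) * stp a x‖ ≤ Real.exp (-(3 / 4 * b * a ^ 2)) * Real.exp (-(b / 4) * x ^ 2) := by
  by_cases h : |x| < |a|
  · rw [stp_eq_zero a x h, mul_zero, norm_zero]; positivity
  · push Not at h
    have h2 : a ^ 2 ≤ x ^ 2 := sq_le_sq.2 h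
    rw [norm_mul, Real.norm_of_nonneg (Real.exp_pos _).le, ← Real.exp_add]
    calc _ ≤ Real.exp (-b * x ^ 2) * 1 := by
          gcongr; exact abs_stp_le a x
      _ ≤ _ := by
        rw [mul_one, Real.exp_le_exp]
        nlinarith

lemma summable_gauss (b d : ℝ) (hb : 0 < b) : Summable fun n : ℤ => Real.exp (-(b * (n + d) ^ 2)) := by
  have := (HurwitzZeta.hasSum_int_evenKernel d (t := b / Real.pi) (by have := Real.pi_pos; positivity)).summable
  refine this.congr fun n => ?_
  congr 1
  have := Real.pi_ne_zero
  field_simp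

def Gx (m : ℕ) (φ : ℂ → ℂ → ℂ) (l : ℤ) (τ : ℂ) (x : ℝ) : ℂ :=
  (Real.exp (-(ga m τ) * x ^ 2) : ℂ) * Hx m φ l τ x

lemma pole_heights_null (m : ℕ) (T : Finset (ℚ × ℚ)) (l : ℤ) :
    ∀ᵐ x : ℝ, ∀ t ∈ T, ∀ n : ℤ, x ≠ lamVal m t l n := by
  rw [Filter.eventually_all_finset]
  intro t ht
  rw [ae_all_iff]
  intro n
  rw [ae_iff]; simp

lemma Gx_main {k : ℤ} {m : ℕ} (hm : 0 < m) {S : Set (ℚ × ℚ)} (Φ : MeroJacobiForm k m S)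
    {h : ℤ → ℂ → ℂ} (hh : IsCanonCoeff m Φ.toFun h)
    {D : ℚ × ℚ → ℂ → ℂ} (hD : IsResidueFactor m S Φ.toFun D)
    {T : Finset (ℚ × ℚ)} (hT : IsRepSet S T) (l : ℤ) {τ : ℂ} (hτ : 0 < τ.im) :
    Integrable (Gx m Φ.toFun l τ) ∧
      ∫ x, Gx m Φ.toFun l τ x = (Real.sqrt (Real.pi / ga m τ) : ℂ) * hhat m h D T l τ := by
  have hb := ga_pos hm hτ
  set b := ga m τ with hbdef
  set F : ℚ × ℚ → ℤ → ℝ → ℂ := fun t n x =>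
    Jc m D l τ t n * ((Real.exp (-b * x ^ 2) * stp (lamVal m t l n) x : ℝ) : ℂ) with hF
  have hgi : Integrable fun x : ℝ => Real.exp (-(b / 4) * x ^ 2) := integrable_exp_neg_mul_sq (by positivity)
  have hgi1 : Integrable fun x : ℝ => Real.exp (-b * x ^ 2) := integrable_exp_neg_mul_sq hb
  have hkey : ∀ t, Integrable (fun x => ∑' n, F t n x) ∧
      HasSum (fun n => ∫ x, F t n x) (∫ x, ∑' n, F t n x) := by
    intro t
    refine tsum_dom (c := fun n => ‖D t τ‖ * Real.exp (-(b / 4 * (n + (t.1 + l / (2 * m))) ^ 2)))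
      (fun n => ?_) ?_ hgi (fun n x => ?_)
    · have h1 := stp_measurable (lamVal m t l n)
      have h2 : Measurable fun x : ℝ => Real.exp (-b * x ^ 2) * stp (lamVal m t l n) x := by fun_prop
      exact ((Complex.measurable_ofReal.comp h2).const_mul _).aestronglyMeasurable
    · exact (summable_gauss (b / 4) _ (by positivity)).mul_left _
    · rw [hF]
      simp only []
      rw [norm_mul, Jc_norm, Complex.norm_real]
      have h1 := exp_stp_bound b (lamVal m t l n) x hb
      calc _ ≤ ‖D t τ‖ * Real.exp (b / 2 * lamVal m t l n ^ 2) *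
            (Real.exp (-(3 / 4 * b * lamVal m t l n ^ 2)) * Real.exp (-(b / 4) * x ^ 2)) := by
            gcongr
        _ = _ := by
            rw [show ‖D t τ‖ * Real.exp (b / 2 * lamVal m t l n ^ 2) *
              (Real.exp (-(3 / 4 * b * lamVal m t l n ^ 2)) * Real.exp (-(b / 4) * x ^ 2)) =
              ‖D t τ‖ * (Real.exp (b / 2 * lamVal m t l n ^ 2) * Real.exp (-(3 / 4 * b * lamVal m t l n ^ 2)))
              * Real.exp (-(b / 4) * x ^ 2) by ring, ← Real.exp_add]
            congr 3
            rw [lamVal]; ring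
  have hae : Gx m Φ.toFun l τ =ᵐ[volume] fun x =>
      ((Real.exp (-b * x ^ 2) : ℝ) : ℂ) * h l τ + ∑ t ∈ T, ∑' n, F t n x := by
    filter_upwards [pole_heights_null m T l] with x hx
    rw [Gx, Hx_formula hm Φ hh hD hT l hτ x hx, mul_add, Finset.mul_sum, ← hbdef]
    congr 1
    refine Finset.sum_congr rfl fun t _ => ?_
    rw [← tsum_mul_left]
    refine tsum_congr fun n => ?_
    simp only [hF]; push_cast; ring
  have hint1 : Integrable fun x : ℝ => ((Real.exp (-b * x ^ 2) : ℝ) : ℂ) * h l τ :=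
    (hgi1.ofReal).mul_const _
  have hint2 : Integrable fun x : ℝ => ∑ t ∈ T, ∑' n, F t n x :=
    integrable_finsetSum _ fun t _ => (hkey t).1
  refine ⟨(hint1.add hint2).congr hae.symm, ?_⟩
  rw [integral_congr_ae hae, integral_add hint1 hint2, integral_finsetSum _ fun t _ => (hkey t).1,
    integral_mul_const, integral_complex_ofReal, integral_gaussian, hhat, sub_eq_add_neg, mul_add,
    ← Finset.sum_neg_distrib, Finset.mul_sum]
  congr 1
  refine Finset.sum_congr rfl fun t _ => ?_
  rw [← (hkey t).2.tsum_eq, ThStar, ← mul_assoc, ← neg_mul, ← mul_assoc, ← tsum_mul_left]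
  refine tsum_congr fun n => ?_
  simp only [hF]
  rw [integral_const_mul, integral_complex_ofReal, gauss_stp b _ hb]
  have e : |lamVal m t l n| * Real.sqrt b = 2 * |lamVal m t l n| * Real.sqrt (Real.pi * m * τ.im) := by
    rw [hbdef, ga, show 4 * Real.pi * m * τ.im = (2:ℝ) ^ 2 * (Real.pi * m * τ.im) by ring,
      Real.sqrt_mul (by norm_num), Real.sqrt_sq (by norm_num)]; ring
  rw [e, Jc]
  push_cast
  ring

def FF (m : ℕ) (φ : ℂ → ℂ → ℂ) (l : ℤ) (τ : ℂ) (p u : ℝ) : ℂ :=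
  φ τ (p * τ + u) * (starRingEnd ℂ) (jTheta m l τ (p * τ + u)) *
    (Real.exp (-(ga m τ) * p ^ 2) : ℂ)

lemma f0_zero (m : ℕ) (φ : ℂ → ℂ → ℂ) (τ : ℂ) : f0 m φ 0 τ = φ τ := by
  funext w; simp [f0, ee_zero]

lemma exp_ga (m : ℕ) (τ : ℂ) (x : ℝ) : ((Real.exp (-(ga m τ) * x ^ 2) : ℝ) : ℂ) =
    ee (m * x ^ 2 * (τ - (starRingEnd ℂ) τ)) := by
  rw [ee, Complex.sub_conj, Complex.ofReal_exp, ga]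
  congr 1
  push_cast
  linear_combination (4 * (Real.pi : ℂ) * m * τ.im * x ^ 2) * (-Complex.I_sq)

lemma integrand_id {m : ℕ} (hm : 0 < m) {φ : ℂ → ℂ → ℂ} (he : EllipticLaw m φ) (l n : ℤ) {τ : ℂ}
    (hτ : 0 < τ.im) (p u : ℝ) :
    (Real.exp (-(ga m τ) * (p + n + l / (2 * m)) ^ 2) : ℂ) *
      (ee ((l : ℂ) ^ 2 * τ / (4 * (m : ℂ))) * f0 m φ l τ (u + ((p + n + l / (2 * m) : ℝ) : ℂ) * τ)) =
    φ τ (p * τ + u) * (starRingEnd ℂ) (ee (((l : ℂ) + 2 * (m : ℂ) * (n : ℂ)) ^ 2 / (4 * (m : ℂ)) * τ +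
      ((l : ℂ) + 2 * (m : ℂ) * (n : ℂ)) * (p * τ + u))) * (Real.exp (-(ga m τ) * p ^ 2) : ℂ) := by
  have hm' : (m : ℂ) ≠ 0 := by exact_mod_cast hm.ne'
  rw [exp_ga, conj_ee]
  have h1 := exp_ga m τ p
  rw [h1, f0]
  have h2 := he τ hτ (p * τ + u) n 0
  have e : (u + ((p + n + l / (2 * m) : ℝ) : ℂ) * τ) - (l : ℂ) * τ / (2 * (m : ℂ)) =
      p * τ + u + (n : ℂ) * τ + ((0 : ℤ) : ℂ) := by push_cast; ring
  rw [e, h2]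
  have key : ee (m * ((p + n + l / (2 * m) : ℝ) : ℂ) ^ 2 * (τ - (starRingEnd ℂ) τ)) *
      ee ((l : ℂ) ^ 2 * τ / (4 * (m : ℂ))) * ee (-(m : ℂ) * ((n : ℂ) ^ 2 * τ + 2 * (n : ℂ) * (p * τ + u)))
      * ee (-(l : ℂ) * (u + ((p + n + l / (2 * m) : ℝ) : ℂ) * τ)) =
      ee (-(starRingEnd ℂ) (((l : ℂ) + 2 * (m : ℂ) * (n : ℂ)) ^ 2 / (4 * (m : ℂ)) * τ +
      ((l : ℂ) + 2 * (m : ℂ) * (n : ℂ)) * (p * τ + u))) * ee (m * p ^ 2 * (τ - (starRingEnd ℂ) τ)) := by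
    simp only [← ee_add]
    congr 1
    simp only [map_add, map_mul, map_div₀, map_pow, Complex.conj_ofReal, map_intCast, map_natCast,
      map_ofNat]
    push_cast
    field_simp
    ring
  linear_combination (φ τ (p * τ + u)) * key

lemma phi_line_cont {k : ℤ} {m : ℕ} {S : Set (ℚ × ℚ)} (Φ : MeroJacobiForm k m S)
    {T : Finset (ℚ × ℚ)} (hT : IsRepSet S T) {τ : ℂ} (hτ : 0 < τ.im) (p : ℝ)
    (hp : ∀ t ∈ T, ∀ n : ℤ, p ≠ lamVal m t 0 n) :
    Continuous fun u : ℝ => Φ.toFun τ (p * τ + u) := by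
  rw [continuous_iff_continuousAt]
  intro u
  have h := f0_diff Φ hT 0 hτ (p * τ + u) (by
    intro t ht n hn
    exfalso
    rw [Complex.add_im, Complex.im_ofReal_mul, Complex.ofReal_im, add_zero] at hn
    exact hp t ht n (mul_right_cancel₀ hτ.ne' hn).symm)
  rw [f0_zero] at h
  exact ContinuousAt.comp (g := Φ.toFun τ) (f := fun u : ℝ => (p : ℂ) * τ + u) h.continuousAt (by fun_prop)

lemma inner_int {k : ℤ} {m : ℕ} (hm : 0 < m) {S : Set (ℚ × ℚ)} (Φ : MeroJacobiForm k m S)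
    {T : Finset (ℚ × ℚ)} (hT : IsRepSet S T) (l : ℤ) {τ : ℂ} (hτ : 0 < τ.im) (p : ℝ)
    (hp : ∀ t ∈ T, ∀ n : ℤ, p ≠ lamVal m t 0 n) :
    HasSum (fun n : ℤ => Gx m Φ.toFun l τ (p + n + l / (2 * m)))
      (∫ u in (0:ℝ)..1, FF m Φ.toFun l τ p u) := by
  have hc := phi_line_cont Φ hT hτ p hp
  have hm' : (m : ℝ) ≠ 0 := by exact_mod_cast hm.ne'
  obtain ⟨B, hB⟩ := (isCompact_Icc (a := (0:ℝ)) (b := 1)).exists_bound_of_continuousOn hc.continuousOn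
  set th : ℤ → ℝ → ℂ := fun n u => ee (((l : ℂ) + 2 * (m : ℂ) * (n : ℂ)) ^ 2 / (4 * (m : ℂ)) * τ +
      ((l : ℂ) + 2 * (m : ℂ) * (n : ℂ)) * (p * τ + u)) with hth
  have hnorm : ∀ n u, ‖th n u‖ = ‖th n 0‖ := by
    intro n u
    simp only [hth, norm_ee]
    congr 3
    have : ∀ u : ℝ, ((l : ℂ) + 2 * (m : ℂ) * (n : ℂ)) ^ 2 / (4 * (m : ℂ)) * τ +
      ((l : ℂ) + 2 * (m : ℂ) * (n : ℂ)) * (p * τ + u) =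
      ((((l : ℝ) + 2 * m * n) ^ 2 / (4 * m) + (l + 2 * m * n) * p : ℝ) : ℂ) * τ +
        (((l + 2 * m * n) * u : ℝ) : ℂ) := by
      intro u; push_cast; ring
    rw [this u, this 0, Complex.add_im, Complex.add_im, Complex.ofReal_im, Complex.ofReal_im]
  have hsum : ∀ u : ℝ, Summable fun n => th n u := fun u => jTheta_summable m hm l hτ (p * τ + u)
  have hmain := intervalIntegral.hasSum_integral_of_dominated_convergence (μ := volume) (a := 0) (b := 1)
    (F := fun (n : ℤ) (u : ℝ) => Φ.toFun τ (p * τ + u) * (starRingEnd ℂ) (th n u) *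
      (Real.exp (-(ga m τ) * p ^ 2) : ℂ)) (f := fun u => FF m Φ.toFun l τ p u)
    (fun n _ => B * ‖th n 0‖ * ‖(Real.exp (-(ga m τ) * p ^ 2) : ℂ)‖)
    (by
      intro n
      have h1 : Continuous (th n) := by
        have := ee_continuous
        simp only [hth]; fun_prop
      have h2 : Continuous fun u : ℝ => Φ.toFun τ (p * τ + u) * (starRingEnd ℂ) (th n u) *
        (Real.exp (-(ga m τ) * p ^ 2) : ℂ) :=
        (hc.mul (Complex.continuous_conj.comp h1)).mul continuous_const
      exact h2.aestronglyMeasurable)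
    (by
      intro n
      refine ae_of_all _ fun u hu => ?_
      rw [Set.uIoc_of_le zero_le_one] at hu
      rw [norm_mul, norm_mul, RCLike.norm_conj, hnorm n u]
      gcongr
      exact hB u (Set.Ioc_subset_Icc_self hu))
    (by
      refine ae_of_all _ fun u _ => ?_
      exact ((hsum 0).norm.mul_left B).mul_right _)
    (by
      exact intervalIntegrable_const)
    (by
      refine ae_of_all _ fun u _ => ?_
      have := ((Complex.hasSum_conj'.2 ((hsum u).hasSum)).mul_left (Φ.toFun τ (p * τ + u))).mul_right
        (Real.exp (-(ga m τ) * p ^ 2) : ℂ)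
      exact this)
  have e : (fun n : ℤ => Gx m Φ.toFun l τ (p + n + l / (2 * m))) = fun n : ℤ =>
      ∫ u in (0:ℝ)..1, Φ.toFun τ (p * τ + u) * (starRingEnd ℂ) (th n u) *
      (Real.exp (-(ga m τ) * p ^ 2) : ℂ) := by
    funext n
    rw [Gx, Hx, ← intervalIntegral.integral_const_mul, ← intervalIntegral.integral_const_mul]
    refine intervalIntegral.integral_congr fun u _ => ?_
    exact integrand_id hm Φ.elliptic l n hτ p u
  rw [e]
  exact hmain

lemma unfold_int {g : ℝ → ℂ} (hg : Integrable g) (d : ℝ) {f : ℝ → ℂ}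
    (hf : ∀ᵐ p : ℝ, HasSum (fun n : ℤ => g (p + n + d)) (f p)) :
    ∫ p in (0:ℝ)..1, f p = ∫ x, g x := by
  have hg' : Integrable fun x => g (x + d) := hg.comp_add_right d
  have h1 := hg'.hasSum_intervalIntegral_comp_add_int
  have h2 := hg'.norm.hasSum_intervalIntegral_comp_add_int
  rw [integral_add_right_eq_self g d] at h1
  simp only [intervalIntegral.integral_of_le zero_le_one] at h1 h2 ⊢
  have h3 := hasSum_integral_of_summable_integral_norm (μ := volume.restrict (Set.Ioc (0:ℝ) 1))
    (F := fun (n : ℤ) x => g (x + n + d)) (fun n => ((hg'.comp_add_right (n : ℝ)).restrict)) h2.summable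
  rw [h1.unique h3]
  refine integral_congr_ae ?_
  filter_upwards [ae_restrict_of_ae hf] with p hp
  exact hp.tsum_eq.symm

lemma hhat_eq {k : ℤ} {m : ℕ} (hm : 0 < m) {S : Set (ℚ × ℚ)} (Φ : MeroJacobiForm k m S)
    {h : ℤ → ℂ → ℂ} (hh : IsCanonCoeff m Φ.toFun h)
    {D : ℚ × ℚ → ℂ → ℂ} (hD : IsResidueFactor m S Φ.toFun D)
    {T : Finset (ℚ × ℚ)} (hT : IsRepSet S T) (l : ℤ) {τ : ℂ} (hτ : 0 < τ.im) :
    ∫ p in (0:ℝ)..1, ∫ u in (0:ℝ)..1, FF m Φ.toFun l τ p u =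
      (Real.sqrt (Real.pi / ga m τ) : ℂ) * hhat m h D T l τ := by
  obtain ⟨h1, h2⟩ := Gx_main hm Φ hh hD hT l hτ
  rw [← h2]
  refine unfold_int h1 (l / (2 * m)) ?_
  filter_upwards [pole_heights_null m T 0] with p hp
  exact inner_int hm Φ hT l hτ p hp

lemma half_int (R : ℝ) (hR : 0 < R) : IntegrableOn (fun y : ℝ => |y| ^ (-(1/2) : ℝ)) (Set.Ioo (-R) R) := by
  have h1 : IntervalIntegrable (fun y : ℝ => |y| ^ (-(1/2) : ℝ)) volume 0 R := by
    have h : IntervalIntegrable (fun y : ℝ => y ^ (-(1/2) : ℝ)) volume 0 R :=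
      intervalIntegral.intervalIntegrable_rpow' (by norm_num)
    refine h.congr ?_
    intro y hy
    rw [Set.uIoc_of_le hR.le] at hy
    simp only
    rw [abs_of_pos hy.1]
  have h2 : IntervalIntegrable (fun y : ℝ => |y| ^ (-(1/2) : ℝ)) volume (-R) 0 := by
    have := (h1.comp_sub_left 0).symm
    simpa using this
  have h3 := h2.trans h1
  rw [intervalIntegrable_iff_integrableOn_Ioo_of_le (by linarith)] at h3
  exact h3

lemma half_int_shift (c R : ℝ) (hR : 0 < R) :
    IntegrableOn (fun y : ℝ => |y - c| ^ (-(1/2) : ℝ)) (Metric.ball c R) := by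
  have h := half_int R hR
  rw [← integrable_indicator_iff measurableSet_Ioo] at h
  have h2 := h.comp_sub_right c
  rw [← integrable_indicator_iff measurableSet_ball]
  refine h2.congr (ae_of_all _ fun y => ?_)
  simp only [Set.indicator]
  congr 1
  rw [eq_iff_iff, Real.ball_eq_Ioo, Set.mem_Ioo, Set.mem_Ioo]
  constructor <;> rintro ⟨h1, h2⟩ <;> constructor <;> linarith

lemma lin_lower {τ : ℂ} (hτ : 0 < τ.im) (x y : ℝ) :
    |x| * |y| ≤ ‖(x : ℂ) * τ + y‖ ^ 2 * ((1 + ‖τ‖ / τ.im) / τ.im) := by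
  set N := ‖(x : ℂ) * τ + y‖ with hN
  have h1 : |x| * τ.im ≤ N := by
    have := Complex.abs_im_le_norm ((x : ℂ) * τ + y)
    rwa [Complex.add_im, Complex.im_ofReal_mul, Complex.ofReal_im, add_zero, abs_mul, abs_of_pos hτ] at this
  have h1' : |x| ≤ N / τ.im := (le_div_iff₀ hτ).2 h1
  have h2 : |y| ≤ N + |x| * ‖τ‖ := by
    have e : ((y : ℝ) : ℂ) = ((x : ℂ) * τ + y) - (x : ℂ) * τ := by ring
    have := norm_sub_le ((x : ℂ) * τ + y) ((x : ℂ) * τ)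
    rw [← e, norm_mul, Complex.norm_real, Complex.norm_real] at this
    exact this
  have hN0 : 0 ≤ N := norm_nonneg _
  have h3 : |y| ≤ N * (1 + ‖τ‖ / τ.im) := by
    calc |y| ≤ N + |x| * ‖τ‖ := h2
      _ ≤ N + N / τ.im * ‖τ‖ := by gcongr
      _ = _ := by ring
  calc |x| * |y| ≤ (N / τ.im) * (N * (1 + ‖τ‖ / τ.im)) := by gcongr
    _ = _ := by ring

lemma loc_int {τ : ℂ} (hτ : 0 < τ.im) (F : ℝ × ℝ → ℂ)
    (h1 : ∀ x0, ∀ᶠ x in 𝓝[≠] x0, ContinuousAt F x)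
    (h2 : ∀ x0 : ℝ × ℝ, ∃ r, Tendsto (fun x : ℝ × ℝ => (((x.1 - x0.1 : ℝ) : ℂ) * τ + ((x.2 - x0.2 : ℝ) : ℂ)) * F x)
      (𝓝[≠] x0) (𝓝 r)) : LocallyIntegrable F := by
  intro x0
  obtain ⟨r, hr⟩ := h2 x0
  have hb : ∀ᶠ x in 𝓝[≠] x0, ‖(((x.1 - x0.1 : ℝ) : ℂ) * τ + ((x.2 - x0.2 : ℝ) : ℂ)) * F x‖ < ‖r‖ + 1 :=
    hr.norm.eventually_lt_const (by linarith)
  have hev := (h1 x0).and hb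
  rw [eventually_nhdsWithin_iff, Metric.eventually_nhds_iff_ball] at hev
  obtain ⟨δ, hδ, hδ2⟩ := hev
  refine ⟨Metric.ball x0 δ, Metric.ball_mem_nhds _ hδ, ?_⟩
  set K := (1 + ‖τ‖ / τ.im) / τ.im with hK
  have hKp : 0 < K := by positivity
  have hdom : IntegrableOn (fun x : ℝ × ℝ => ((‖r‖ + 1) * K ^ (1/2 : ℝ)) * (|x.1 - x0.1| ^ (-(1/2) : ℝ) *
      |x.2 - x0.2| ^ (-(1/2) : ℝ))) (Metric.ball x0 δ) := by
    have e : Metric.ball x0 δ = Metric.ball x0.1 δ ×ˢ Metric.ball x0.2 δ :=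
      (ball_prod_same x0.1 x0.2 δ).symm
    rw [e, IntegrableOn, Measure.volume_eq_prod, ← Measure.prod_restrict]
    exact (Integrable.mul_prod (half_int_shift x0.1 δ hδ) (half_int_shift x0.2 δ hδ)).const_mul _
  have hmeas : AEStronglyMeasurable F (volume.restrict (Metric.ball x0 δ)) := by
    have hc : ContinuousOn F (Metric.ball x0 δ \ {x0}) := fun x hx =>
      (hδ2 x hx.1 hx.2).1.continuousWithinAt
    have := hc.aestronglyMeasurable (μ := volume) (measurableSet_ball.diff (measurableSet_singleton x0))
    rwa [Measure.restrict_congr_set (sdiff_null_ae_eq_self (by simp))] at this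
  refine Integrable.mono' hdom hmeas ?_
  have hae1 : ∀ᵐ x : ℝ × ℝ, x.1 ≠ x0.1 := by
    have : ∀ᵐ y : ℝ, y ≠ x0.1 := by rw [ae_iff]; simp
    rw [Measure.volume_eq_prod]
    exact Measure.quasiMeasurePreserving_fst.ae this
  have hae2 : ∀ᵐ x : ℝ × ℝ, x.2 ≠ x0.2 := by
    have : ∀ᵐ y : ℝ, y ≠ x0.2 := by rw [ae_iff]; simp
    rw [Measure.volume_eq_prod]
    exact Measure.quasiMeasurePreserving_snd.ae this
  filter_upwards [ae_restrict_of_ae hae1, ae_restrict_of_ae hae2, ae_restrict_mem measurableSet_ball]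
    with x hx1 hx2 hxb
  have hxne : x ≠ x0 := fun h => hx1 (by rw [h])
  have hle := (hδ2 x hxb hxne).2.le
  have p1 : 0 < |x.1 - x0.1| := abs_pos.2 (sub_ne_zero.2 hx1)
  have p2 : 0 < |x.2 - x0.2| := abs_pos.2 (sub_ne_zero.2 hx2)
  rw [norm_mul] at hle
  set N := ‖((x.1 - x0.1 : ℝ) : ℂ) * τ + ((x.2 - x0.2 : ℝ) : ℂ)‖ with hN
  have hlow := lin_lower hτ (x.1 - x0.1) (x.2 - x0.2)
  rw [← hN, ← hK] at hlow
  have hN0 : 0 ≤ N := norm_nonneg _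
  rw [← Real.mul_rpow p1.le p2.le, Real.rpow_neg (by positivity), mul_assoc, ← div_eq_mul_inv]
  set P := |x.1 - x0.1| * |x.2 - x0.2| with hP
  have hPp : 0 < P := by positivity
  have h5 : P ^ (1/2 : ℝ) ≤ N * K ^ (1/2 : ℝ) := by
    calc P ^ (1/2 : ℝ) ≤ (N ^ 2 * K) ^ (1/2 : ℝ) := Real.rpow_le_rpow hPp.le hlow (by norm_num)
      _ = N * K ^ (1/2 : ℝ) := by
        rw [Real.mul_rpow (by positivity) hKp.le, ← Real.sqrt_eq_rpow, Real.sqrt_sq hN0]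
  have hPr : 0 < P ^ (1/2 : ℝ) := Real.rpow_pos_of_pos hPp _
  rw [← mul_div_assoc, le_div_iff₀ hPr]
  calc ‖F x‖ * P ^ (1/2 : ℝ) ≤ ‖F x‖ * (N * K ^ (1/2 : ℝ)) := by gcongr
    _ = (N * ‖F x‖) * K ^ (1/2 : ℝ) := by ring
    _ ≤ _ := by gcongr

lemma phi_punct {k : ℤ} {m : ℕ} (hm : 0 < m) {S : Set (ℚ × ℚ)} (Φ : MeroJacobiForm k m S)
    {D : ℚ × ℚ → ℂ → ℂ} (hD : IsResidueFactor m S Φ.toFun D)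
    {T : Finset (ℚ × ℚ)} (hT : IsRepSet S T) {τ : ℂ} (hτ : 0 < τ.im) (w0 : ℂ) :
    (∀ᶠ w in 𝓝[≠] w0, ContinuousAt (Φ.toFun τ) w) ∧
      ∃ r, Tendsto (fun w => (w - w0) * Φ.toFun τ w) (𝓝[≠] w0) (𝓝 r) := by
  constructor
  · obtain ⟨M, hM⟩ := exists_window m T 0 (|w0.im| / τ.im + 1)
    have hev : ∀ᶠ w in 𝓝[≠] w0, ∀ i ∈ T ×ˢ Finset.Icc (-(M : ℤ)) M, ee (w - poleA m 0 τ i) ≠ 1 := by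
      rw [Filter.eventually_all_finset]
      intro i _
      exact ee_sub_eventually_ne _ _
    have hev2 : ∀ᶠ w in 𝓝[≠] w0, |w.im| < |w0.im| + τ.im := by
      have hc : Continuous fun w : ℂ => |w.im| := by fun_prop
      exact ((hc.tendsto w0).mono_left nhdsWithin_le_nhds).eventually_lt_const (by linarith)
    filter_upwards [hev, hev2] with w hw hw2
    have h := f0_diff Φ hT 0 hτ w (by
      intro t ht n hn
      refine hw (t, n) ?_
      rw [Finset.mem_product]
      refine ⟨ht, ?_⟩
      by_contra hcon
      have h1 := hM t ht n hcon
      rw [← hn, abs_mul, abs_of_pos hτ] at hw2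
      have := mul_le_mul_of_nonneg_right h1 hτ.le
      rw [add_mul, div_mul_cancel₀ _ hτ.ne'] at this
      linarith)
    rw [f0_zero] at h
    exact h.continuousAt
  · by_cases hp : ∃ t ∈ T, ∃ n : ℤ, ee (w0 - poleA m 0 τ (t, n)) = 1
    · obtain ⟨t, ht, n, hn⟩ := hp
      obtain ⟨b, hb⟩ := (ee_eq_one_iff _).1 hn
      have h1 := f0_res hm Φ hD 0 hτ (t, n) (hT.1 ht)
      have h2 := residue_shift b (fun w => per_int (f0_per Φ.elliptic 0 hτ) b w) h1
      rw [f0_zero, ← sub_eq_iff_eq_add'.1 hb] at h2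
      exact ⟨_, h2⟩
    · push Not at hp
      have h := f0_diff Φ hT 0 hτ w0 (fun t ht n _ => hp t ht n)
      rw [f0_zero] at h
      exact ⟨0, tendsto_sub_mul_zero h.continuousAt⟩

lemma lin_ne {τ : ℂ} (hτ : 0 < τ.im) {x x0 : ℝ × ℝ} (h : x ≠ x0) :
    (x.1 : ℂ) * τ + x.2 ≠ (x0.1 : ℂ) * τ + x0.2 := by
  intro e
  have h1 := congrArg Complex.im e
  simp only [Complex.add_im, Complex.im_ofReal_mul, Complex.ofReal_im, add_zero] at h1
  have h2 := mul_right_cancel₀ hτ.ne' h1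
  rw [h2] at e
  have h3 : (x.2 : ℂ) = x0.2 := add_left_cancel e
  exact h (Prod.ext h2 (by exact_mod_cast h3))

lemma FF_locInt {k : ℤ} {m : ℕ} (hm : 0 < m) {S : Set (ℚ × ℚ)} (Φ : MeroJacobiForm k m S)
    {D : ℚ × ℚ → ℂ → ℂ} (hD : IsResidueFactor m S Φ.toFun D)
    {T : Finset (ℚ × ℚ)} (hT : IsRepSet S T) (l : ℤ) {τ : ℂ} (hτ : 0 < τ.im) :
    LocallyIntegrable fun x : ℝ × ℝ => FF m Φ.toFun l τ x.1 x.2 := by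
  have hlin : Continuous fun x : ℝ × ℝ => (x.1 : ℂ) * τ + x.2 := by fun_prop
  have hth : Continuous (jTheta m l τ) := (jTheta_differentiable m hm l hτ).continuous
  have hfac : Continuous fun x : ℝ × ℝ => (starRingEnd ℂ) (jTheta m l τ (x.1 * τ + x.2)) *
    (Real.exp (-(ga m τ) * x.1 ^ 2) : ℂ) := by
    refine (Complex.continuous_conj.comp (hth.comp hlin)).mul ?_
    fun_prop
  have htend : ∀ x0 : ℝ × ℝ, Tendsto (fun x : ℝ × ℝ => (x.1 : ℂ) * τ + x.2) (𝓝[≠] x0)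
      (𝓝[≠] ((x0.1 : ℂ) * τ + x0.2)) := by
    intro x0
    refine tendsto_nhdsWithin_of_tendsto_nhds_of_eventually_within _
      ((hlin.tendsto x0).mono_left nhdsWithin_le_nhds) ?_
    filter_upwards [self_mem_nhdsWithin] with x hx
    exact lin_ne hτ hx
  refine loc_int hτ _ (fun x0 => ?_) (fun x0 => ?_)
  · filter_upwards [(htend x0).eventually (phi_punct hm Φ hD hT hτ ((x0.1 : ℂ) * τ + x0.2)).1] with x hx
    have h1 : ContinuousAt (fun x : ℝ × ℝ => Φ.toFun τ ((x.1 : ℂ) * τ + x.2)) x :=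
      ContinuousAt.comp (g := Φ.toFun τ) (f := fun x : ℝ × ℝ => (x.1 : ℂ) * τ + x.2) hx hlin.continuousAt
    have h2 := h1.mul hfac.continuousAt
    simp only [FF, mul_assoc]
    exact h2
  · obtain ⟨r, hr⟩ := (phi_punct hm Φ hD hT hτ ((x0.1 : ℂ) * τ + x0.2)).2
    refine ⟨_, ((hr.comp (htend x0)).mul ((hfac.tendsto x0).mono_left nhdsWithin_le_nhds)).congr fun x => ?_⟩
    simp only [FF, Function.comp]
    push_cast
    ring

lemma FF_swap {k : ℤ} {m : ℕ} (hm : 0 < m) {S : Set (ℚ × ℚ)} (Φ : MeroJacobiForm k m S)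
    {D : ℚ × ℚ → ℂ → ℂ} (hD : IsResidueFactor m S Φ.toFun D)
    {T : Finset (ℚ × ℚ)} (hT : IsRepSet S T) (l : ℤ) {τ : ℂ} (hτ : 0 < τ.im) :
    IntegrableOn (fun x : ℝ × ℝ => FF m Φ.toFun l τ x.2 (-x.1)) (Set.Ioc 0 1 ×ˢ Set.Ioc 0 1) := by
  have h := FF_locInt hm Φ hD hT l hτ
  have hc : IsCompact (Set.Icc (0:ℝ) 1 ×ˢ Set.Icc (-1:ℝ) 0) := isCompact_Icc.prod isCompact_Icc
  have h1 := h.integrableOn_isCompact hc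
  have hmp : MeasurePreserving (fun x : ℝ × ℝ => (x.2, -x.1)) (volume : Measure (ℝ × ℝ)) volume := by
    have a1 : MeasurePreserving (Prod.swap : ℝ × ℝ → ℝ × ℝ) volume volume := by
      rw [Measure.volume_eq_prod]; exact Measure.measurePreserving_swap
    have a2 : MeasurePreserving (Prod.map id (fun y : ℝ => -y) : ℝ × ℝ → ℝ × ℝ) volume volume := by
      rw [Measure.volume_eq_prod]
      exact (MeasurePreserving.id volume).prod (Measure.measurePreserving_neg volume)
    exact a2.comp a1
  have hemb : MeasurableEmbedding (fun x : ℝ × ℝ => (x.2, -x.1)) := by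
    have : Measurable (fun x : ℝ × ℝ => (x.2, -x.1)) := by fun_prop
    refine this.measurableEmbedding ?_
    intro x y hxy
    simp only [Prod.mk.injEq, neg_inj] at hxy
    exact Prod.ext hxy.2 hxy.1
  have h2 := (hmp.integrableOn_comp_preimage hemb).2 h1
  refine h2.mono_set ?_
  rintro ⟨a, b⟩ ⟨⟨h1, h2⟩, h3, h4⟩
  simp only [Set.mem_preimage, Set.mem_prod, Set.mem_Icc]
  refine ⟨⟨?_, ?_⟩, ?_, ?_⟩ <;> simp at * <;> linarith

def LawAt (k : ℤ) (m : ℕ) (φ : ℂ → ℂ → ℂ) (a b c d : ℤ) : Prop :=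
  ∀ τ : ℂ, 0 < τ.im → ∀ z : ℂ,
    φ (((a : ℂ) * τ + (b : ℂ)) / ((c : ℂ) * τ + (d : ℂ))) (z / ((c : ℂ) * τ + (d : ℂ))) =
      ((c : ℂ) * τ + (d : ℂ)) ^ k *
        ee ((m : ℂ) * (c : ℂ) * z ^ 2 / ((c : ℂ) * τ + (d : ℂ))) * φ τ z

lemma cd_ne {a b c d : ℤ} (h : a * d - b * c = 1) {τ : ℂ} (hτ : 0 < τ.im) :
    (c : ℂ) * τ + d ≠ 0 := by
  intro h0
  have h1 := congrArg Complex.im h0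
  have hc : (c : ℂ) = ((c : ℝ) : ℂ) := by push_cast; rfl
  rw [hc, Complex.add_im, Complex.im_ofReal_mul, Complex.intCast_im, add_zero, Complex.zero_im] at h1
  rcases mul_eq_zero.1 h1 with h2 | h2
  · have : c = 0 := by exact_mod_cast h2
    subst this
    simp at h0
    subst h0
    simp at h
  · exact hτ.ne' h2

lemma moeb_im {a b c d : ℤ} (h : a * d - b * c = 1) {τ : ℂ} (hτ : 0 < τ.im) :
    0 < (((a : ℂ) * τ + (b : ℂ)) / ((c : ℂ) * τ + (d : ℂ))).im := by
  have hne := cd_ne h hτ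
  have hn : 0 < Complex.normSq ((c : ℂ) * τ + d) := Complex.normSq_pos.2 hne
  rw [Complex.div_im]
  simp only [Complex.add_im, Complex.mul_im, Complex.intCast_re, Complex.intCast_im, zero_mul, add_zero,
    Complex.add_re, Complex.mul_re, sub_zero]
  rw [div_sub_div_same]
  apply div_pos _ hn
  have h' : (a : ℝ) * d - b * c = 1 := by exact_mod_cast h
  nlinarith

lemma law_mul {k : ℤ} {m : ℕ} {φ : ℂ → ℂ → ℂ} {a b c d a' b' c' d' : ℤ}
    (hg : a * d - b * c = 1) (hg' : a' * d' - b' * c' = 1)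
    (h : LawAt k m φ a b c d) (h' : LawAt k m φ a' b' c' d') :
    LawAt k m φ (a * a' + b * c') (a * b' + b * d') (c * a' + d * c') (c * b' + d * d') := by
  intro τ hτ z
  have n1 := cd_ne hg' hτ
  have hτ' := moeb_im hg' hτ
  have n2 := cd_ne hg hτ'
  have e1 := h' τ hτ z
  have e2 := h _ hτ' (z / ((c' : ℂ) * τ + d'))
  rw [e1] at e2
  set τ' := ((a' : ℂ) * τ + (b' : ℂ)) / ((c' : ℂ) * τ + (d' : ℂ)) with hτ'd
  have hj : ((c * a' + d * c' : ℤ) : ℂ) * τ + ((c * b' + d * d' : ℤ) : ℂ) =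
      ((c : ℂ) * τ' + d) * ((c' : ℂ) * τ + d') := by
    rw [hτ'd]; push_cast; field_simp; ring
  have hn : (((a * a' + b * c' : ℤ) : ℂ) * τ + ((a * b' + b * d' : ℤ) : ℂ)) =
      ((a : ℂ) * τ' + b) * ((c' : ℂ) * τ + d') := by
    rw [hτ'd]; push_cast; field_simp; ring
  rw [hj, hn, mul_div_mul_right _ _ n1, mul_comm ((c : ℂ) * τ' + d) ((c' : ℂ) * τ + d'), ← div_div, e2,
    mul_zpow]
  have key : ee ((m : ℂ) * ((c * a' + d * c' : ℤ) : ℂ) * z ^ 2 / (((c' : ℂ) * τ + d') * ((c : ℂ) * τ' + d))) =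
      ee ((m : ℂ) * (c : ℂ) * (z / ((c' : ℂ) * τ + d')) ^ 2 / ((c : ℂ) * τ' + d)) *
      ee ((m : ℂ) * (c' : ℂ) * z ^ 2 / ((c' : ℂ) * τ + d')) := by
    rw [← ee_add]
    congr 1
    have hd : ((a' : ℂ) * d' - b' * c') = 1 := by exact_mod_cast hg'
    have hj2 : ((c : ℂ) * τ' + d) * ((c' : ℂ) * τ + d') = c * (a' * τ + b') + d * (c' * τ + d') := by
      have hτm : τ' * ((c' : ℂ) * τ + d') = a' * τ + b' := div_mul_cancel₀ _ n1
      linear_combination (c : ℂ) * hτm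
    have : ((c * a' + d * c' : ℤ) : ℂ) = c / (c' * τ + d') + c' * ((c : ℂ) * τ' + d) := by
      field_simp
      push_cast
      linear_combination (-(c' : ℂ)) * hj2 + (c : ℂ) * hd
    rw [this]
    field_simp
  rw [key]; ring

lemma law_inv {k : ℤ} {m : ℕ} {φ : ℂ → ℂ → ℂ} {a b c d : ℤ}
    (hg : a * d - b * c = 1) (h : LawAt k m φ a b c d) : LawAt k m φ d (-b) (-c) a := by
  intro τ hτ z
  have hg' : d * a - (-b) * (-c) = 1 := by linarith
  have n1 := cd_ne hg' hτ
  have hτ' := moeb_im hg' hτ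
  have n2 := cd_ne hg hτ'
  have e2 := h _ hτ' (z / (((-c : ℤ) : ℂ) * τ + a))
  set τ' := ((d : ℂ) * τ + ((-b : ℤ) : ℂ)) / (((-c : ℤ) : ℂ) * τ + (a : ℂ)) with hτ'd
  have hd : ((a : ℂ) * d - b * c) = 1 := by exact_mod_cast hg
  have hj : ((c : ℂ) * τ' + d) * (((-c : ℤ) : ℂ) * τ + a) = 1 := by
    have hτm : τ' * (((-c : ℤ) : ℂ) * τ + a) = d * τ + ((-b : ℤ) : ℂ) := div_mul_cancel₀ _ n1
    push_cast at hτm ⊢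
    linear_combination (c : ℂ) * hτm + hd
  have hn : ((a : ℂ) * τ' + b) * (((-c : ℤ) : ℂ) * τ + a) = τ := by
    have hτm : τ' * (((-c : ℤ) : ℂ) * τ + a) = d * τ + ((-b : ℤ) : ℂ) := div_mul_cancel₀ _ n1
    push_cast at hτm ⊢
    linear_combination (a : ℂ) * hτm + τ * hd
  have e3 : ((a : ℂ) * τ' + b) / ((c : ℂ) * τ' + d) = τ := by
    rw [div_eq_iff n2]
    apply mul_right_cancel₀ n1
    rw [hn, mul_assoc, hj, mul_one]
  have e4 : z / (((-c : ℤ) : ℂ) * τ + a) / ((c : ℂ) * τ' + d) = z := by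
    rw [div_div, mul_comm, hj, div_one]
  rw [e3, e4] at e2
  have hinv : (c : ℂ) * τ' + d = (((-c : ℤ) : ℂ) * τ + a)⁻¹ := eq_inv_of_mul_eq_one_left hj
  rw [e2, hinv, inv_zpow]
  have hz : (((-c : ℤ) : ℂ) * τ + a) ^ k ≠ 0 := zpow_ne_zero _ n1
  have key : ee ((m : ℂ) * ((-c : ℤ) : ℂ) * z ^ 2 / (((-c : ℤ) : ℂ) * τ + a)) *
      ee ((m : ℂ) * (c : ℂ) * (z / (((-c : ℤ) : ℂ) * τ + a)) ^ 2 / (((-c : ℤ) : ℂ) * τ + a)⁻¹) = 1 := by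
    rw [← ee_add, ← ee_zero]
    congr 1
    push_cast at n1 ⊢
    field_simp
    ring
  have hz2 := mul_inv_cancel₀ hz
  generalize ((((-c : ℤ) : ℂ) * τ + a) ^ k) = A at *
  generalize A⁻¹ = B at *
  generalize ee ((m : ℂ) * ((-c : ℤ) : ℂ) * z ^ 2 / (((-c : ℤ) : ℂ) * τ + a)) = C at *
  generalize ee ((m : ℂ) * (c : ℂ) * (z / (((-c : ℤ) : ℂ) * τ + a)) ^ 2 / (((-c : ℤ) : ℂ) * τ + a)⁻¹) = E at *
  generalize φ τ' (z / (((-c : ℤ) : ℂ) * τ + a)) = X at *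
  linear_combination (-(X * A * B)) * key - X * hz2

lemma law_of_gen {k : ℤ} {m : ℕ} {φ : ℂ → ℂ → ℂ} (hS : LawAt k m φ 0 (-1) 1 0)
    (hT : LawAt k m φ 1 1 0 1) : ModularLaw k m φ := by
  have key : ∀ g : Matrix.SpecialLinearGroup (Fin 2) ℤ,
      LawAt k m φ (g 0 0) (g 0 1) (g 1 0) (g 1 1) := by
    intro g
    have hg : g ∈ Subgroup.closure {ModularGroup.S, ModularGroup.T} := by
      rw [SpecialLinearGroup.SL2Z_generators]; trivial
    have det : ∀ g : Matrix.SpecialLinearGroup (Fin 2) ℤ, g 0 0 * g 1 1 - g 0 1 * g 1 0 = 1 := by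
      intro g
      have := g.det_coe
      rwa [Matrix.det_fin_two] at this
    induction hg using Subgroup.closure_induction with
    | mem x hx =>
      rcases hx with rfl | rfl
      · simpa [ModularGroup.S] using hS
      · simpa [ModularGroup.T] using hT
    | one =>
      intro τ hτ z
      simp [ee_zero]
    | mul x y _ _ hx hy =>
      have := law_mul (det x) (det y) hx hy
      simpa [Matrix.SpecialLinearGroup.coe_mul, Matrix.mul_apply, Fin.sum_univ_two] using this
    | inv x _ hx =>
      have := law_inv (det x) hx
      rw [Matrix.SpecialLinearGroup.SL2_inv_expl x]
      simpa using this
  intro τ hτ z a b c d h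
  have := key ⟨!![a, b; c, d], by rw [Matrix.det_fin_two_of]; exact h⟩ τ hτ z
  simpa using this

lemma jTheta_S' (m : ℕ) (hm : 0 < m) (l : ℤ) {τ : ℂ} (hτ : 0 < τ.im) (z : ℂ) :
    jTheta m l (-1 / τ) (z / τ) = (-I * (τ / (2 * m))) ^ (1 / 2 : ℂ) * ee (m * z ^ 2 / τ) *
      ∑ j ∈ Finset.range (2 * m), ee (-((j : ℂ) * l / (2 * m))) * jTheta m j τ z := by
  have hm' : (m : ℂ) ≠ 0 := by exact_mod_cast hm.ne'
  rw [jTheta_S m hm l hτ z]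
  congr 1
  have hs : Summable fun r : ℤ => ee ((r : ℂ) ^ 2 * τ / (4 * m) + r * z - r * l / (2 * m)) := by
    have h1 := (summable_jacobiTheta₂_term_iff (z - l / (2 * m)) (τ / (2 * m))).2 (by
      rw [show τ / (2 * (m : ℂ)) = ((1 / (2 * m) : ℝ) : ℂ) * τ by push_cast; ring, Complex.im_ofReal_mul]
      positivity)
    refine h1.congr fun n => ?_
    rw [jacobiTheta₂_term, ee]; congr 1
    field_simp; ring
  rw [tsum_int_split (2 * m) (by omega) _ hs]
  refine Finset.sum_congr rfl fun j _ => ?_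
  rw [jTheta, ← tsum_mul_left]
  refine tsum_congr fun n => ?_
  rw [← ee_add]
  refine ee_congr_int (-(n * l)) ?_
  push_cast
  field_simp
  ring

lemma FF_per_u {m : ℕ} (hm : 0 < m) {φ : ℂ → ℂ → ℂ} (he : EllipticLaw m φ) (l : ℤ) {τ : ℂ}
    (hτ : 0 < τ.im) (p : ℝ) : Function.Periodic (FF m φ l τ p) 1 := by
  intro u
  have h1 := he τ hτ (p * τ + u) 0 1
  have h2 := jTheta_elliptic m hm l τ hτ (p * τ + u) 0 1
  have e : (p : ℂ) * τ + ((u + 1 : ℝ) : ℂ) = p * τ + u + ((0 : ℤ) : ℂ) * τ + ((1 : ℤ) : ℂ) := by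
    push_cast; ring
  rw [FF, FF, e, h1, h2]
  simp [ee_zero]

def II (m : ℕ) (φ : ℂ → ℂ → ℂ) (l : ℤ) (τ : ℂ) : ℂ :=
  ∫ p in (0:ℝ)..1, ∫ u in (0:ℝ)..1, FF m φ l τ p u

lemma II_T {k : ℤ} {m : ℕ} (hm : 0 < m) {φ : ℂ → ℂ → ℂ} (he : EllipticLaw m φ) (hmod : ModularLaw k m φ)
    (l : ℤ) {τ : ℂ} (hτ : 0 < τ.im) :
    II m φ l (τ + 1) = ee (-((l : ℂ) ^ 2 / (4 * m))) * II m φ l τ := by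
  rw [II, II, ← intervalIntegral.integral_const_mul]
  refine intervalIntegral.integral_congr fun p _ => ?_
  beta_reduce
  have hpt : ∀ u : ℝ, FF m φ l (τ + 1) p u = ee (-((l : ℂ) ^ 2 / (4 * m))) * FF m φ l τ p (u + p) := by
    intro u
    have h1 := hmod τ hτ (p * τ + u + p) 1 1 0 1 (by norm_num)
    have h2 := jTheta_T m hm l 1 τ (p * τ + u + p)
    simp only [Int.cast_one, Int.cast_zero, one_mul, zero_mul, zero_add, div_one, one_zpow, mul_zero,
      ee_zero] at h1
    have e : (p : ℂ) * (τ + 1) + u = p * τ + u + p := by ring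
    have e2 : (p : ℂ) * τ + ((u + p : ℝ) : ℂ) = p * τ + u + p := by push_cast; ring
    have e3 : ga m (τ + 1) = ga m τ := by simp [ga]
    have e4 : (starRingEnd ℂ) (ee ((l : ℂ) ^ 2 * (1 : ℤ) / (4 * m))) = ee (-((l : ℂ) ^ 2 / (4 * m))) := by
      rw [conj_ee]
      simp [Complex.conj_ofNat]
    rw [Int.cast_one] at h2 e4
    rw [FF, FF, e, e2, e3, h1, h2, map_mul, e4]; ring
  rw [intervalIntegral.integral_congr (fun u _ => hpt u), intervalIntegral.integral_const_mul]
  congr 1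
  have := (FF_per_u hm he l hτ p).intervalIntegral_add_eq p 0
  rw [zero_add] at this
  rw [intervalIntegral.integral_comp_add_right (fun u => FF m φ l τ p u) p, zero_add, add_comm 1 p, this]

lemma FF_S {k : ℤ} {m : ℕ} (hm : 0 < m) {φ : ℂ → ℂ → ℂ} (hmod : ModularLaw k m φ)
    (l : ℤ) {τ : ℂ} (hτ : 0 < τ.im) (p u : ℝ) :
    FF m φ l (-1 / τ) p u = τ ^ k * (starRingEnd ℂ) ((-I * (τ / (2 * m))) ^ (1 / 2 : ℂ)) *
      ∑ j ∈ Finset.range (2 * m), ee ((j : ℂ) * l / (2 * m)) * FF m φ j τ u (-p) := by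
  have hτ0 : τ ≠ 0 := by rintro rfl; simp at hτ
  have hτc : (starRingEnd ℂ) τ ≠ 0 := (map_ne_zero _).2 hτ0
  set w : ℂ := u * τ + ((-p : ℝ) : ℂ) with hw
  have e : (p : ℂ) * (-1 / τ) + u = w / τ := by rw [hw]; push_cast; field_simp; ring
  have h1 := hmod τ hτ w 0 (-1) 1 0 (by norm_num)
  simp only [Int.cast_one, Int.cast_zero, one_mul, zero_mul, zero_add, add_zero, mul_one, Int.cast_neg] at h1
  simp only [FF]
  rw [e, h1, jTheta_S' m hm l hτ w, map_mul, map_mul, map_sum, exp_ga, Finset.mul_sum, Finset.mul_sum,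
    Finset.mul_sum, Finset.sum_mul]
  refine Finset.sum_congr rfl fun j _ => ?_
  rw [exp_ga, map_mul, conj_ee, conj_ee, ← hw]
  have e1 : -(starRingEnd ℂ) (-((j : ℂ) * l / (2 * m))) = (j : ℂ) * l / (2 * m) := by simp [Complex.conj_ofNat]
  have key : ee ((m : ℂ) * w ^ 2 / τ) * ee (-(starRingEnd ℂ) ((m : ℂ) * w ^ 2 / τ)) *
      ee (m * p ^ 2 * (-1 / τ - (starRingEnd ℂ) (-1 / τ))) = ee (m * u ^ 2 * (τ - (starRingEnd ℂ) τ)) := by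
    simp only [← ee_add]
    congr 1
    rw [hw]
    simp only [map_add, map_mul, map_div₀, map_pow, map_neg, map_one, Complex.conj_ofReal, map_natCast]
    push_cast
    field_simp
    ring
  rw [e1, ← key]
  ring

lemma II_S {k : ℤ} {m : ℕ} (hm : 0 < m) {S : Set (ℚ × ℚ)} (Φ : MeroJacobiForm k m S)
    {D : ℚ × ℚ → ℂ → ℂ} (hD : IsResidueFactor m S Φ.toFun D)
    {T : Finset (ℚ × ℚ)} (hT : IsRepSet S T) (l : ℤ) {τ : ℂ} (hτ : 0 < τ.im) :
    II m Φ.toFun l (-1 / τ) = τ ^ k * (starRingEnd ℂ) ((-I * (τ / (2 * m))) ^ (1 / 2 : ℂ)) *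
      ∑ j ∈ Finset.range (2 * m), ee ((j : ℂ) * l / (2 * m)) * II m Φ.toFun j τ := by
  set cst := τ ^ k * (starRingEnd ℂ) ((-I * (τ / (2 * m))) ^ (1 / 2 : ℂ)) with hc
  have hint : ∀ j : ℕ, Integrable (fun x : ℝ × ℝ => FF m Φ.toFun j τ x.2 (-x.1))
      ((volume.restrict (Set.Ioc (0:ℝ) 1)).prod (volume.restrict (Set.Ioc (0:ℝ) 1))) := by
    intro j
    have := FF_swap hm Φ hD hT j hτ
    rwa [IntegrableOn, Measure.volume_eq_prod, ← Measure.prod_restrict] at this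
  have hval : ∀ j : ℕ, ∫ x, FF m Φ.toFun j τ x.2 (-x.1)
      ∂((volume.restrict (Set.Ioc (0:ℝ) 1)).prod (volume.restrict (Set.Ioc (0:ℝ) 1))) =
      II m Φ.toFun j τ := by
    intro j
    rw [integral_prod_symm _ (hint j), II, intervalIntegral.integral_of_le zero_le_one]
    refine integral_congr_ae (ae_of_all _ fun p => ?_)
    simp only
    rw [← intervalIntegral.integral_of_le zero_le_one,
      intervalIntegral.integral_comp_neg (fun u => FF m Φ.toFun j τ p u), neg_zero]
    have := (FF_per_u hm Φ.elliptic j hτ p).intervalIntegral_add_eq (-1) 0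
    simpa using this
  have e1 : II m Φ.toFun l (-1 / τ) = ∫ x : ℝ × ℝ, cst *
      ∑ j ∈ Finset.range (2 * m), ee ((j : ℂ) * l / (2 * m)) * FF m Φ.toFun j τ x.2 (-x.1)
      ∂((volume.restrict (Set.Ioc (0:ℝ) 1)).prod (volume.restrict (Set.Ioc (0:ℝ) 1))) := by
    rw [integral_prod _ ((integrable_finsetSum _ fun j _ => (hint j).const_mul _).const_mul _), II]
    simp only [intervalIntegral.integral_of_le zero_le_one, FF_S hm Φ.modular l hτ, hc]
  rw [e1, integral_const_mul, integral_finsetSum _ fun j _ => (hint j).const_mul _]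
  congr 1
  refine Finset.sum_congr rfl fun j _ => ?_
  rw [integral_const_mul, hval]

lemma neg_inv_im {τ : ℂ} : (-1 / τ).im = τ.im / Complex.normSq τ := by
  rw [neg_div, one_div, Complex.neg_im, Complex.inv_im]; ring

lemma neg_inv_im_pos {τ : ℂ} (hτ : 0 < τ.im) : 0 < (-1 / τ).im := by
  have hτ0 : τ ≠ 0 := by rintro rfl; simp at hτ
  rw [neg_inv_im]; exact div_pos hτ (Complex.normSq_pos.2 hτ0)

lemma sqrt_ga_S {m : ℕ} (hm : 0 < m) {τ : ℂ} (hτ : 0 < τ.im) :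
    Real.sqrt (Real.pi / ga m (-1 / τ)) = ‖τ‖ * Real.sqrt (Real.pi / ga m τ) := by
  have hτ0 : τ ≠ 0 := by rintro rfl; simp at hτ
  have hn : ‖τ‖ ≠ 0 := norm_ne_zero_iff.2 hτ0
  have : Real.pi / ga m (-1 / τ) = ‖τ‖ ^ 2 * (Real.pi / ga m τ) := by
    have h1 := ga_pos hm hτ
    rw [ga] at h1
    rw [ga, ga, neg_inv_im, Complex.normSq_eq_norm_sq]
    have : (m : ℝ) ≠ 0 := by exact_mod_cast hm.ne'
    field_simp
  rw [this, Real.sqrt_mul (by positivity), Real.sqrt_sq (norm_nonneg _)]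

lemma sqrt_ga_ne {m : ℕ} (hm : 0 < m) {τ : ℂ} (hτ : 0 < τ.im) :
    (Real.sqrt (Real.pi / ga m τ) : ℂ) ≠ 0 := by
  have := Real.sqrt_pos.2 (div_pos Real.pi_pos (ga_pos hm hτ))
  exact_mod_cast this.ne'

lemma sq_csq {m : ℕ} (τ : ℂ) : ((-I * (τ / (2 * m))) ^ (1 / 2 : ℂ)) ^ 2 = -I * (τ / (2 * m)) := by
  have := Complex.cpow_nat_inv_pow (-I * (τ / (2 * m))) (n := 2) (by norm_num)
  simpa using this

lemma csq_conj {m : ℕ} (τ : ℂ) :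
    (starRingEnd ℂ) ((-I * (τ / (2 * m))) ^ (1 / 2 : ℂ)) * (-I * (τ / (2 * m))) ^ (1 / 2 : ℂ) =
      (‖τ‖ : ℂ) / (2 * m) := by
  rw [mul_comm, Complex.mul_conj, Complex.normSq_eq_norm_sq, ← norm_pow, sq_csq]
  simp

lemma orth {M : ℕ} (hM : 0 < M) (j j' : ℕ) (hj : j < M) (hj' : j' < M) :
    ∑ l ∈ Finset.range M, ee (((j : ℂ) - j') * l / M) = if j = j' then (M : ℂ) else 0 := by
  have hM' : (M : ℂ) ≠ 0 := by exact_mod_cast hM.ne'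
  have e : ∀ l : ℕ, ee (((j : ℂ) - j') * l / M) = (ee (((j : ℂ) - j') / M)) ^ l := by
    intro l
    rw [ee, ee, ← Complex.exp_nat_mul]; congr 1; ring
  simp only [e]
  split_ifs with h
  · subst h; simp [ee_zero]
  · have h1 : ee (((j : ℂ) - j') / M) ≠ 1 := by
      rw [Ne, ee_eq_one_iff]
      rintro ⟨n, hn⟩
      rw [div_eq_iff hM'] at hn
      have hnm : (j : ℤ) - j' = n * M := by exact_mod_cast hn
      apply h
      have h2 : n = 0 := by
        by_contra hne
        have : (M : ℤ) ≤ |n * M| := by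
          rw [abs_mul, abs_of_nonneg (by positivity : (0:ℤ) ≤ M)]
          have := Int.one_le_abs hne
          nlinarith
        rw [← hnm] at this
        rcases abs_cases ((j : ℤ) - j') with ⟨h, _⟩ | ⟨h, _⟩ <;> omega
      subst h2; omega
    have := mul_neg_geom_sum (ee (((j : ℂ) - j') / M)) M
    rw [← e M] at this
    rw [show ((j : ℂ) - j') * M / M = ((j - j' : ℤ) : ℂ) by push_cast; field_simp, ee_int, sub_self] at this
    exact (mul_eq_zero.1 this).resolve_left (sub_ne_zero.2 h1.symm)

lemma hhat_T {k : ℤ} {m : ℕ} (hm : 0 < m) {S : Set (ℚ × ℚ)} (Φ : MeroJacobiForm k m S)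
    {h : ℤ → ℂ → ℂ} (hh : IsCanonCoeff m Φ.toFun h)
    {D : ℚ × ℚ → ℂ → ℂ} (hD : IsResidueFactor m S Φ.toFun D)
    {T : Finset (ℚ × ℚ)} (hT : IsRepSet S T) (l : ℤ) {τ : ℂ} (hτ : 0 < τ.im) :
    hhat m h D T l (τ + 1) = ee (-((l : ℂ) ^ 2 / (4 * m))) * hhat m h D T l τ := by
  have h1 := II_T hm Φ.elliptic Φ.modular l hτ
  have hτ1 : 0 < (τ + 1).im := by simpa using hτ
  have e3 : ga m (τ + 1) = ga m τ := by simp [ga]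
  rw [II, II, hhat_eq hm Φ hh hD hT l hτ, hhat_eq hm Φ hh hD hT l hτ1, e3] at h1
  apply mul_left_cancel₀ (sqrt_ga_ne hm hτ)
  rw [h1]; ring

lemma hhat_S {k : ℤ} {m : ℕ} (hm : 0 < m) {S : Set (ℚ × ℚ)} (Φ : MeroJacobiForm k m S)
    {h : ℤ → ℂ → ℂ} (hh : IsCanonCoeff m Φ.toFun h)
    {D : ℚ × ℚ → ℂ → ℂ} (hD : IsResidueFactor m S Φ.toFun D)
    {T : Finset (ℚ × ℚ)} (hT : IsRepSet S T) (l : ℤ) {τ : ℂ} (hτ : 0 < τ.im) :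
    (‖τ‖ : ℂ) * hhat m h D T l (-1 / τ) =
      τ ^ k * (starRingEnd ℂ) ((-I * (τ / (2 * m))) ^ (1 / 2 : ℂ)) *
      ∑ j ∈ Finset.range (2 * m), ee ((j : ℂ) * l / (2 * m)) * hhat m h D T j τ := by
  have h1 := II_S hm Φ hD hT l hτ
  simp only [II] at h1
  rw [hhat_eq hm Φ hh hD hT l (neg_inv_im_pos hτ), sqrt_ga_S hm hτ] at h1
  simp only [hhat_eq hm Φ hh hD hT _ hτ] at h1
  apply mul_left_cancel₀ (sqrt_ga_ne hm hτ)
  rw [Complex.ofReal_mul] at h1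
  calc _ = _ := by ring
    _ = _ := h1
    _ = _ := by
      simp only [Finset.mul_sum]
      refine Finset.sum_congr rfl fun j _ => ?_
      ring

lemma hhat_period {k : ℤ} {m : ℕ} (hm : 0 < m) {S : Set (ℚ × ℚ)} (Φ : MeroJacobiForm k m S)
    {h : ℤ → ℂ → ℂ} (hh : IsCanonCoeff m Φ.toFun h)
    {D : ℚ × ℚ → ℂ → ℂ} (hD : IsResidueFactor m S Φ.toFun D)
    {T : Finset (ℚ × ℚ)} (hT : IsRepSet S T) (l n : ℤ) {τ : ℂ} (hτ : 0 < τ.im) :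
    hhat m h D T (l + 2 * m * n) τ = hhat m h D T l τ := by
  apply mul_left_cancel₀ (sqrt_ga_ne hm hτ)
  rw [← hhat_eq hm Φ hh hD hT l hτ, ← hhat_eq hm Φ hh hD hT _ hτ]
  simp only [FF, jTheta_add_period]

lemma cfp_modular {k : ℤ} {m : ℕ} (hm : 0 < m) {S : Set (ℚ × ℚ)} (Φ : MeroJacobiForm k m S)
    {h : ℤ → ℂ → ℂ} (hh : IsCanonCoeff m Φ.toFun h)
    {D : ℚ × ℚ → ℂ → ℂ} (hD : IsResidueFactor m S Φ.toFun D)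
    {T : Finset (ℚ × ℚ)} (hT : IsRepSet S T) :
    ModularLaw k m (completedFinitePart m h D T) := by
  apply law_of_gen
  · intro τ hτ z
    have hτ0 : τ ≠ 0 := by rintro rfl; simp at hτ
    have hn : (‖τ‖ : ℂ) ≠ 0 := by exact_mod_cast norm_ne_zero_iff.2 hτ0
    have hm' : (m : ℂ) ≠ 0 := by exact_mod_cast hm.ne'
    simp only [Int.cast_zero, zero_mul, zero_add, Int.cast_neg, Int.cast_one, one_mul, add_zero, mul_one]
    apply mul_left_cancel₀ hn
    simp only [completedFinitePart]
    have key : ∀ l : ℕ, (‖τ‖ : ℂ) * (hhat m h D T l (-1 / τ) * jTheta m l (-1 / τ) (z / τ)) =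
        τ ^ k * ee (m * z ^ 2 / τ) * ((‖τ‖ : ℂ) / (2 * m)) *
        ∑ j ∈ Finset.range (2 * m), ∑ j' ∈ Finset.range (2 * m),
          ee (((j : ℂ) - j') * l / (2 * m : ℕ)) * (hhat m h D T j τ * jTheta m j' τ z) := by
      intro l
      rw [← mul_assoc, hhat_S hm Φ hh hD hT l hτ, jTheta_S' m hm l hτ z, ← csq_conj]
      have : ∀ j j' : ℕ, ee (((j : ℂ) - j') * l / (2 * m : ℕ)) =
          ee ((j : ℂ) * l / (2 * m)) * ee (-((j' : ℂ) * l / (2 * m))) := by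
        intro j j'
        rw [← ee_add]; congr 1; push_cast; ring
      simp only [this]
      have hp : ∀ (f g : ℕ → ℂ), ∑ j ∈ Finset.range (2 * m), ∑ j' ∈ Finset.range (2 * m), f j * g j' =
        (∑ j ∈ Finset.range (2 * m), f j) * ∑ j' ∈ Finset.range (2 * m), g j' := by
        intro f g; rw [Finset.sum_mul_sum]
      have hp2 := hp (fun j => ee ((j : ℂ) * l / (2 * m)) * hhat m h D T j τ)
        (fun j' => ee (-((j' : ℂ) * l / (2 * m))) * jTheta m j' τ z)
      have hp3 : ∑ j ∈ Finset.range (2 * m), ∑ j' ∈ Finset.range (2 * m),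
          ee ((j : ℂ) * l / (2 * m)) * ee (-((j' : ℂ) * l / (2 * m))) * (hhat m h D T j τ * jTheta m j' τ z) =
          (∑ j ∈ Finset.range (2 * m), ee ((j : ℂ) * l / (2 * m)) * hhat m h D T j τ) *
          ∑ j' ∈ Finset.range (2 * m), ee (-((j' : ℂ) * l / (2 * m))) * jTheta m j' τ z := by
        rw [← hp2]
        refine Finset.sum_congr rfl fun j _ => Finset.sum_congr rfl fun j' _ => ?_
        ring
      rw [hp3]
      push_cast
      ring
    rw [Finset.mul_sum, Finset.sum_congr rfl (fun l _ => key l), ← Finset.mul_sum]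
    have : ∑ l ∈ Finset.range (2 * m), ∑ j ∈ Finset.range (2 * m), ∑ j' ∈ Finset.range (2 * m),
          ee (((j : ℂ) - j') * l / (2 * m : ℕ)) * (hhat m h D T j τ * jTheta m j' τ z) =
        (2 * m) * ∑ j ∈ Finset.range (2 * m), hhat m h D T j τ * jTheta m j τ z := by
      rw [Finset.sum_comm, Finset.mul_sum]
      refine Finset.sum_congr rfl fun j hj => ?_
      rw [Finset.sum_comm]
      rw [Finset.sum_eq_single j]
      · rw [← Finset.sum_mul, orth (by omega) j j (Finset.mem_range.1 hj) (Finset.mem_range.1 hj)]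
        simp
      · intro j' hj' hne
        rw [← Finset.sum_mul, orth (by omega) j j' (Finset.mem_range.1 hj) (Finset.mem_range.1 hj'),
          if_neg hne.symm, zero_mul]
      · intro hc; exact absurd hj hc
    rw [this]
    field_simp
  · intro τ hτ z
    simp only [Int.cast_zero, zero_mul, zero_add, Int.cast_one, one_mul, mul_zero, div_one,
      zero_div, ee_zero, one_zpow, completedFinitePart]
    refine Finset.sum_congr rfl fun l _ => ?_
    have h2 := jTheta_T m hm l 1 τ z
    rw [Int.cast_one] at h2
    rw [hhat_T hm Φ hh hD hT l hτ, h2]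
    have : ee (-(((l : ℤ) : ℂ) ^ 2 / (4 * m))) * ee (((l : ℤ) : ℂ) ^ 2 * 1 / (4 * m)) = 1 := by
      rw [← ee_add, mul_one, neg_add_cancel, ee_zero]
    linear_combination (hhat m h D T l τ * jTheta m l τ z) * this

lemma cfp_elliptic {m : ℕ} (hm : 0 < m) (h : ℤ → ℂ → ℂ) (D : ℚ × ℚ → ℂ → ℂ) (T : Finset (ℚ × ℚ)) :
    EllipticLaw m (completedFinitePart m h D T) := by
  intro τ hτ z lam mu
  simp only [completedFinitePart]
  rw [Finset.mul_sum]
  refine Finset.sum_congr rfl fun l _ => ?_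
  rw [jTheta_elliptic m hm l τ hτ z lam mu]; ring

lemma sum_affine {c : ℕ} (hc : 0 < c) (f : ℤ → ℂ) (hf : ∀ x y, (c : ℤ) ∣ x - y → f x = f y)
    (a b : ℤ) (hac : IsCoprime (c : ℤ) a) :
    ∑ j ∈ Finset.range c, f (a * j + b) = ∑ j ∈ Finset.range c, f j := by
  have hc' : (0 : ℤ) < c := by exact_mod_cast hc
  set g : ℕ → ℕ := fun j => ((a * j + b) % c).toNat with hg
  have hgc : ∀ j, ((g j : ℕ) : ℤ) = (a * j + b) % c := fun j =>
    Int.toNat_of_nonneg (Int.emod_nonneg _ hc'.ne')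
  have hmaps : ∀ j ∈ Finset.range c, g j ∈ Finset.range c := by
    intro j _
    rw [Finset.mem_range]
    have := Int.emod_lt_of_pos (a * j + b) hc'
    rw [← hgc] at this
    exact_mod_cast this
  have hinj : Set.InjOn g (Finset.range c : Set ℕ) := by
    intro x hx y hy hxy
    have h1 : (a * x + b) % (c : ℤ) = (a * y + b) % c := by rw [← hgc, ← hgc, hxy]
    have h2 : (c : ℤ) ∣ a * (y - x) := by
      have := Int.ModEq.dvd (a := a * x + b) (b := a * y + b) h1
      convert this using 1; ring
    have h3 := hac.dvd_of_dvd_mul_left h2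
    simp only [Finset.coe_range, Set.mem_Iio] at hx hy
    have h4 := Int.eq_zero_of_abs_lt_dvd h3 (by rw [abs_lt]; constructor <;> omega)
    omega
  refine Finset.sum_nbij g hmaps hinj ?_ ?_
  · exact Finset.surjOn_of_injOn_of_card_le g hmaps hinj le_rfl
  · intro j _
    apply hf
    rw [hgc]
    exact Int.dvd_self_sub_emod

def GS (a : ℤ) (c : ℕ) : ℂ := ∑ j ∈ Finset.range c, ee ((a : ℂ) * (j : ℂ) ^ 2 / c)

lemma ee_per {c : ℕ} (hc : 0 < c) (x y : ℤ) (h : (c : ℤ) ∣ x - y) : ee ((x : ℂ) / c) = ee ((y : ℂ) / c) := by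
  obtain ⟨t, ht⟩ := h
  have hc' : (c : ℂ) ≠ 0 := by exact_mod_cast hc.ne'
  refine ee_congr_int t ?_
  have : (x : ℂ) - y = c * t := by exact_mod_cast ht
  field_simp
  linear_combination this

lemma Ksum {m c c' : ℕ} (hm : 0 < m) (hc : 0 < c) (hcc : c = 4 * m * c') {a b d a1 b1 : ℤ}
    (hdet : a * d - b * c = 1) (ha : a = 1 + 4 * m * a1) (hb : b = 4 * m * b1) (l r : ℤ) :
    ∑ j ∈ Finset.range c, ee (((a * (l + 2 * m * j) ^ 2 - 2 * (l + 2 * m * j) * r + d * r ^ 2 : ℤ) : ℂ)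
      / ((4 * m * c : ℕ) : ℂ)) = if (2 * m : ℤ) ∣ r - l then GS (d * m) c else 0 := by
  have hM : 0 < 4 * m * c := by positivity
  have hm' : (m : ℂ) ≠ 0 := by exact_mod_cast hm.ne'
  have hc' : (c : ℂ) ≠ 0 := by exact_mod_cast hc.ne'
  have e1 : ∀ j : ℕ, ee (((a * (l + 2 * m * j) ^ 2 - 2 * (l + 2 * m * j) * r + d * r ^ 2 : ℤ) : ℂ)
      / ((4 * m * c : ℕ) : ℂ)) = ee (((d * (r - a * l - 2 * m * a * j) ^ 2 : ℤ) : ℂ) / ((4 * m * c : ℕ) : ℂ)) := by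
    intro j
    apply ee_per hM
    refine ⟨-(a * b1 * (l + 2 * m * j) ^ 2) + 2 * b1 * r * (l + 2 * m * j), ?_⟩
    rw [hb] at hdet
    push_cast
    linear_combination (-(a * (l + 2 * m * j) ^ 2) + 2 * (l + 2 * m * j) * r) * hdet
  simp only [e1]
  set f : ℤ → ℂ := fun j => ee (((d * (r - a * l - 2 * m * a * j) ^ 2 : ℤ) : ℂ) / ((4 * m * c : ℕ) : ℂ)) with hf
  have hfp : ∀ x y, (c : ℤ) ∣ x - y → f x = f y := by
    rintro x y ⟨t, ht⟩
    apply ee_per hM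
    refine ⟨d * (-(a * t * (r - a * l)) + m * a ^ 2 * t * (x + y)), ?_⟩
    push_cast
    linear_combination (d * (-4 * m * a * (r - a * l) + 4 * m ^ 2 * a ^ 2 * (x + y))) * ht
  have hcop : IsCoprime (c : ℤ) a := ⟨-b, d, by linarith⟩
  split_ifs with h
  · obtain ⟨n, hn⟩ := h
    have hu : r - a * l = 2 * m * (n - 2 * a1 * l) := by rw [ha]; linear_combination hn
    set g : ℤ → ℂ := fun j => ee (((d * m * j ^ 2 : ℤ) : ℂ) / (c : ℂ)) with hg
    have hgp : ∀ x y, (c : ℤ) ∣ x - y → g x = g y := by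
      rintro x y ⟨t, ht⟩
      apply ee_per hc
      refine ⟨d * m * t * (x + y), ?_⟩
      linear_combination (d * m * (x + y)) * ht
    have e2 : ∀ j : ℕ, f j = g ((-a) * j + (n - 2 * a1 * l)) := by
      intro j
      simp only [hf, hg]
      rw [hu]; congr 1
      push_cast
      field_simp
      ring
    have : ∀ j : ℕ, ee (((d * (r - a * l - 2 * m * a * j) ^ 2 : ℤ) : ℂ) / ((4 * m * c : ℕ) : ℂ)) = f j :=
      fun j => rfl
    simp only [this, e2]
    rw [sum_affine hc g hgp (-a) _ hcop.neg_right, GS]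
    refine Finset.sum_congr rfl fun j _ => ?_
    simp only [hg]; push_cast; rfl
  · have hsh := sum_affine hc f hfp 1 (2 * c') isCoprime_one_right
    set w := ee (((-(d * a * (r - a * l)) : ℤ) : ℂ) / ((2 * m : ℕ) : ℂ)) with hw
    have e3 : ∀ j : ℕ, f (1 * j + 2 * c') = w * f j := by
      intro j
      simp only [hf, hw]
      rw [← ee_add]
      have hc0 : (c' : ℂ) ≠ 0 := by
        rintro h0
        apply hc'
        rw [hcc]; push_cast; rw [h0]; ring
      refine ee_congr_int (d * a ^ 2 * j + d * a ^ 2 * c') ?_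
      rw [hcc]
      push_cast
      field_simp
      ring
    simp only [e3] at hsh
    rw [← Finset.mul_sum] at hsh
    have hw1 : w ≠ 1 := by
      rw [hw, Ne, ee_eq_one_iff]
      rintro ⟨n, hn⟩
      apply h
      rw [div_eq_iff (by push_cast; exact mul_ne_zero two_ne_zero hm')] at hn
      have hn' : -(d * a * (r - a * l)) = n * (2 * m : ℕ) := by exact_mod_cast hn
      have hda : a * d = 1 + 4 * m * b1 * c := by rw [← hb]; linarith
      push_cast at hn'
      refine ⟨-n - 2 * b1 * c * (r - a * l) + 2 * a1 * l, ?_⟩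
      linear_combination -hn' - (r - a * l) * hda + l * ha
    have : (w - 1) * ∑ j ∈ Finset.range c, f j = 0 := by rw [sub_mul, hsh]; ring
    exact (mul_eq_zero.1 this).resolve_left (sub_ne_zero.2 hw1)

lemma jTheta_gamma {m c c' : ℕ} (hm : 0 < m) (hc : 0 < c) (hcc : c = 4 * m * c') {a b d a1 b1 : ℤ}
    (hdet : a * d - b * c = 1) (ha : a = 1 + 4 * m * a1) (hb : b = 4 * m * b1) (l : ℤ)
    {τ : ℂ} (hτ : 0 < τ.im) (z : ℂ) :
    jTheta m l (((a : ℂ) * τ + b) / ((c : ℂ) * τ + d)) (z / ((c : ℂ) * τ + d)) =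
      (-I * (((c : ℂ) * τ + d) / (2 * (m * c : ℕ)))) ^ (1 / 2 : ℂ) *
        ee (m * c * z ^ 2 / ((c : ℂ) * τ + d)) * GS (d * m) c * jTheta m l τ z := by
  have hm' : (m : ℂ) ≠ 0 := by exact_mod_cast hm.ne'
  have hc' : (c : ℂ) ≠ 0 := by exact_mod_cast hc.ne'
  have hne : (c : ℂ) * τ + d ≠ 0 := by
    have := cd_ne (c := (c : ℤ)) hdet hτ
    exact_mod_cast this
  have hγ : 0 < (((a : ℂ) * τ + b) / ((c : ℂ) * τ + d)).im := by
    have := moeb_im (c := (c : ℤ)) hdet hτ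
    exact_mod_cast this
  set τ' := (c : ℂ) * τ + d with hτ'
  have hτ'im : 0 < τ'.im := by
    rw [hτ']
    have hc2 : (c : ℂ) = ((c : ℝ) : ℂ) := by push_cast; rfl
    rw [hc2, Complex.add_im, Complex.im_ofReal_mul, Complex.intCast_im, add_zero]
    have : (0 : ℝ) < c := by exact_mod_cast hc
    positivity
  have hdetC : (a : ℂ) * d - b * c = 1 := by exact_mod_cast hdet
  have hγe : ((a : ℂ) * τ + b) / τ' = a / c - 1 / (c * τ') := by
    field_simp
    rw [hτ']; linear_combination -hdetC
  have step1 : jTheta m l (((a : ℂ) * τ + b) / τ') (z / τ') =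
      ∑ j ∈ Finset.range c, ee (a * (l + 2 * m * j) ^ 2 / (4 * m * c)) *
        jTheta (m * c) (l + 2 * m * j) (-1 / τ') (z / τ') := by
    rw [jTheta, tsum_int_split c hc _ (jTheta_summable m hm l hγ _)]
    refine Finset.sum_congr rfl fun j _ => ?_
    rw [jTheta, ← tsum_mul_left]
    refine tsum_congr fun n => ?_
    rw [← ee_add, hγe]
    refine ee_congr_int (a * ((l + 2 * m * j) * n + m * c * n ^ 2)) ?_
    push_cast
    field_simp
    ring
  have hsum : ∀ j : ℕ, Summable fun r : ℤ => ee ((r : ℂ) ^ 2 * τ' / (4 * (m * c : ℕ)) + r * z -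
      r * ((l + 2 * m * j : ℤ) : ℂ) / (2 * (m * c : ℕ))) := by
    intro j
    have h1 := (summable_jacobiTheta₂_term_iff (z - ((l + 2 * m * j : ℤ) : ℂ) / (2 * (m * c : ℕ)))
      (τ' / (2 * (m * c : ℕ)))).2 (by
      rw [show τ' / (2 * ((m * c : ℕ) : ℂ)) = ((1 / (2 * (m * c : ℕ)) : ℝ) : ℂ) * τ' by push_cast; ring,
        Complex.im_ofReal_mul]
      have : (0 : ℝ) < (m * c : ℕ) := by exact_mod_cast Nat.mul_pos hm hc
      positivity)
    refine h1.congr fun n => ?_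
    rw [jacobiTheta₂_term, ee]; congr 1
    push_cast
    field_simp; ring
  rw [step1]
  simp only [jTheta_S (m * c) (Nat.mul_pos hm hc) _ hτ'im z]
  set C := (-I * (τ' / (2 * (m * c : ℕ)))) ^ (1 / 2 : ℂ) with hC
  have step2 : ∑ j ∈ Finset.range c, ee (a * (l + 2 * m * j) ^ 2 / (4 * m * c)) *
      (C * ee ((m * c : ℕ) * z ^ 2 / τ') * ∑' r : ℤ, ee ((r : ℂ) ^ 2 * τ' / (4 * (m * c : ℕ)) + r * z -
      r * ((l + 2 * m * j : ℤ) : ℂ) / (2 * (m * c : ℕ)))) =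
      C * ee (m * c * z ^ 2 / τ') * ∑' r : ℤ, (∑ j ∈ Finset.range c,
        ee (((a * (l + 2 * m * j) ^ 2 - 2 * (l + 2 * m * j) * r + d * r ^ 2 : ℤ) : ℂ)
      / ((4 * m * c : ℕ) : ℂ))) * ee ((r : ℂ) ^ 2 / (4 * m) * τ + r * z) := by
    have : ∀ r : ℤ, (∑ j ∈ Finset.range c,
        ee (((a * (l + 2 * m * j) ^ 2 - 2 * (l + 2 * m * j) * r + d * r ^ 2 : ℤ) : ℂ)
      / ((4 * m * c : ℕ) : ℂ))) * ee ((r : ℂ) ^ 2 / (4 * m) * τ + r * z) =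
      ∑ j ∈ Finset.range c, ee (a * (l + 2 * m * j) ^ 2 / (4 * m * c)) *
        ee ((r : ℂ) ^ 2 * τ' / (4 * (m * c : ℕ)) + r * z -
      r * ((l + 2 * m * j : ℤ) : ℂ) / (2 * (m * c : ℕ))) := by
      intro r
      rw [Finset.sum_mul]
      refine Finset.sum_congr rfl fun j _ => ?_
      rw [← ee_add, ← ee_add]; congr 1
      rw [hτ']
      push_cast
      field_simp
      ring
    simp only [this]
    rw [Summable.tsum_finsetSum (fun j _ => (hsum j).mul_left _), Finset.mul_sum]
    refine Finset.sum_congr rfl fun j _ => ?_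
    rw [tsum_mul_left]
    push_cast
    ring
  have hcast : ∀ j : ℕ, (((l + 2 * m * j : ℤ) : ℂ)) = (l : ℂ) + 2 * m * j := by intro j; push_cast; rfl
  rw [step2, mul_assoc _ (GS _ _)]
  congr 1
  simp only [Ksum hm hc hcc hdet ha hb]
  rw [jTheta, ← tsum_mul_left]
  have hi : Function.Injective fun n : ℤ => l + 2 * m * n := by
    intro x y hxy
    have h2 : (2 * m : ℤ) ≠ 0 := by positivity
    simpa [hm.ne'] using hxy
  rw [← hi.tsum_eq]
  · refine tsum_congr fun n => ?_
    rw [if_pos ⟨n, by ring⟩]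
    push_cast
    rfl
  · intro r hr
    by_contra hcon
    apply hr
    beta_reduce
    rw [if_neg, zero_mul]
    rintro ⟨n, hn⟩
    exact hcon ⟨n, by simp only; linarith⟩

lemma stdTheta_eq (τ : ℂ) : stdTheta τ = jTheta 1 0 τ 0 := by
  rw [stdTheta, jTheta]
  refine tsum_congr fun n => ?_
  congr 1; push_cast; ring

lemma stdTheta_S {τ : ℂ} (hτ : 0 < τ.im) :
    stdTheta (-1 / τ) = (-I * (τ / 2)) ^ (1 / 2 : ℂ) * stdTheta (τ / 4) := by
  have h := jTheta_S 1 one_pos 0 hτ 0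
  rw [zero_div] at h
  rw [stdTheta_eq, h, stdTheta]
  simp only [Nat.cast_one, mul_one, Int.cast_zero]
  rw [show (1 : ℂ) * 0 ^ 2 / τ = 0 by simp, ee_zero, mul_one]
  congr 1
  refine tsum_congr fun n => ?_
  congr 1; ring

lemma stdTheta_T (b : ℤ) (τ : ℂ) : stdTheta (τ + b) = stdTheta τ := by
  rw [stdTheta, stdTheta]
  refine tsum_congr fun n => ?_
  refine ee_congr_int (n ^ 2 * b) ?_
  push_cast; ring

lemma stdTheta_gamma {c c' : ℕ} (hc : 0 < c) (hcc : c = 4 * c') {a b d a1 b1 : ℤ}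
    (hdet : a * d - b * c = 1) (ha : a = 1 + 4 * a1) (hb : b = 4 * b1)
    {τ : ℂ} (hτ : 0 < τ.im) :
    stdTheta (((a : ℂ) * τ + b) / ((c : ℂ) * τ + d)) =
      (-I * (((c : ℂ) * τ + d) / (2 * c))) ^ (1 / 2 : ℂ) * GS d c * stdTheta τ := by
  have h := jTheta_gamma (m := 1) (c' := c') (a1 := a1) (b1 := b1) one_pos hc (by omega) hdet (by push_cast; omega)
    (by push_cast; omega) 0 hτ 0
  rw [zero_div] at h
  rw [stdTheta_eq, stdTheta_eq, h]
  simp [ee_zero]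

lemma stdTheta_pos {t : ℝ} (ht : 0 < t) : stdTheta (t * I) ≠ 0 := by
  have hτ : 0 < ((t : ℂ) * I).im := by simpa using ht
  have hs := jTheta_summable 1 one_pos 0 hτ 0
  have e : ∀ n : ℤ, ee ((((0 : ℤ) : ℂ) + 2 * ((1 : ℕ) : ℂ) * (n : ℂ)) ^ 2 / (4 * ((1 : ℕ) : ℂ)) * (t * I) +
      (((0 : ℤ) : ℂ) + 2 * ((1 : ℕ) : ℂ) * (n : ℂ)) * 0) = ((Real.exp (-(2 * Real.pi * t * n ^ 2)) : ℝ) : ℂ) := by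
    intro n
    rw [ee]; push_cast; congr 1
    linear_combination (2 * Real.pi * n ^ 2 * t : ℂ) * I_mul_I
  rw [stdTheta_eq, jTheta]
  simp only [e] at hs ⊢
  rw [← Complex.ofReal_tsum]
  have hs' := Complex.summable_ofReal.1 hs
  have := hs'.tsum_pos (fun n => (Real.exp_pos _).le) 0 (Real.exp_pos _)
  exact_mod_cast this.ne'

lemma csqrt_mul {r : ℝ} (hr : 0 < r) {x : ℂ} (hx : x ≠ 0) :
    ((r : ℂ) * x) ^ (1 / 2 : ℂ) = (Real.sqrt r : ℂ) * x ^ (1 / 2 : ℂ) := by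
  have hr' : (r : ℂ) ≠ 0 := by exact_mod_cast hr.ne'
  rw [Complex.cpow_def_of_ne_zero (mul_ne_zero hr' hx), Complex.cpow_def_of_ne_zero hx,
    Complex.log_ofReal_mul hr hx, add_mul, Complex.exp_add, Real.sqrt_eq_rpow, Real.rpow_def_of_pos hr]
  push_cast
  rfl

lemma GS_one {c c' : ℕ} (hc : 0 < c) (hcc : c = 4 * c') : GS 1 c = Real.sqrt c * (1 + I) := by
  have hcR : (0 : ℝ) < c := by exact_mod_cast hc
  have hc' : (c : ℂ) ≠ 0 := by exact_mod_cast hc.ne'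
  have hI1 : (1 + I : ℂ) ≠ 0 := by
    intro h; have := congrArg Complex.re h; simp at this
  have hI2 : (1 - I : ℂ) ≠ 0 := by
    intro h; have := congrArg Complex.re h; simp at this
  set τ : ℂ := ((1 / c : ℝ) : ℂ) * I with hτd
  have hτ : 0 < τ.im := by rw [hτd]; simpa using hc
  have hcτ : (c : ℂ) * τ = I := by rw [hτd]; push_cast; field_simp
  have h1 := stdTheta_gamma (a := 1) (b := 0) (d := 1) (a1 := 0) (b1 := 0) hc hcc (by ring) (by ring) (by ring) hτ
  have hnz : stdTheta τ ≠ 0 := stdTheta_pos (by positivity)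
  set w : ℂ := c * (I - 1) with hw
  have hwim : 0 < w.im := by rw [hw]; simpa using hc
  have h2 := stdTheta_S hwim
  have h4 := stdTheta_S (τ := 4 * τ) (by rw [hτd]; simpa using hc)
  have e1 : -1 / w = (((1 : ℤ) : ℂ) * τ + ((0 : ℤ) : ℂ)) / (c * τ + ((1 : ℤ) : ℂ)) := by
    rw [hcτ, hw, hτd]
    have : (I - 1 : ℂ) ≠ 0 := by rw [← neg_sub]; exact neg_ne_zero.2 hI2
    push_cast
    have : (I + 1 : ℂ) ≠ 0 := by rwa [add_comm]
    field_simp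
    linear_combination -I_sq
  have e2 : w / 4 = -1 / (4 * τ) + ((-c' : ℤ) : ℂ) := by
    rw [hw, hτd, hcc]
    have : (c' : ℂ) ≠ 0 := by
      rintro h0; apply hc'; rw [hcc]; push_cast; rw [h0]; ring
    push_cast
    field_simp
    linear_combination I_sq
  rw [e1, h1, e2, stdTheta_T, h4, mul_div_cancel_left₀ τ (by norm_num : (4:ℂ) ≠ 0)] at h2
  have h5 := mul_right_cancel₀ hnz (h2.trans (mul_assoc _ _ _).symm)
  have f1 : -I * (w / 2) = ((c / 2 : ℝ) : ℂ) * (1 + I) := by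
    rw [hw]; push_cast; linear_combination (-(c : ℂ) / 2) * I_sq
  have f2 : -I * (4 * τ / 2) = ((2 / c : ℝ) : ℂ) * 1 := by
    rw [hτd]; push_cast; linear_combination (-2 / (c : ℂ)) * I_sq
  have f3 : -I * (((c : ℂ) * τ + ((1 : ℤ) : ℂ)) / (2 * c)) = ((1 / (2 * c) : ℝ) : ℂ) * (1 - I) := by
    rw [hcτ]; push_cast; field_simp; linear_combination - I_sq
  rw [f1, f2, f3, csqrt_mul (by positivity) hI1, csqrt_mul (by positivity) one_ne_zero,
    csqrt_mul (by positivity) hI2, Complex.one_cpow] at h5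
  have hu : (1 - I : ℂ) ^ (1 / 2 : ℂ) = (starRingEnd ℂ) ((1 + I) ^ (1 / 2 : ℂ)) := by
    have : (1 - I : ℂ) = (starRingEnd ℂ) (1 + I) := by simp [sub_eq_add_neg]
    rw [this, Complex.conj_cpow]
    · simp [Complex.conj_ofNat]
    · intro h
      rw [Complex.arg_eq_pi_iff] at h
      simp at h
  set u := (1 + I : ℂ) ^ (1 / 2 : ℂ) with hud
  have hu2 : u ^ 2 = 1 + I := by
    have := Complex.cpow_nat_inv_pow (1 + I) (n := 2) (by norm_num)
    rw [hud]; simpa using this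
  have hu0 : u ≠ 0 := by
    intro h0; rw [h0] at hu2; apply hI1; rw [← hu2]; ring
  have hn : u * (starRingEnd ℂ) u = (Real.sqrt 2 : ℂ) := by
    rw [Complex.mul_conj, Complex.normSq_eq_norm_sq, ← norm_pow, hu2]
    congr 1
    rw [Complex.norm_def, Complex.normSq_apply]; norm_num
  rw [hu] at h5
  have hs : ((Real.sqrt (c / 2) : ℝ) : ℂ) * (Real.sqrt (2 / c) : ℝ) = 1 := by
    rw [← Complex.ofReal_mul, ← Real.sqrt_mul (by positivity)]
    rw [show (c / 2 * (2 / c) : ℝ) = 1 by field_simp]; simp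
  have hs2 : ((Real.sqrt (1 / (2 * c)) : ℝ) : ℂ) * ((Real.sqrt 2 : ℝ) * (Real.sqrt c : ℝ)) = 1 := by
    rw [← Complex.ofReal_mul, ← Complex.ofReal_mul, ← Real.sqrt_mul (by positivity), ← Real.sqrt_mul (by positivity)]
    rw [show (1 / (2 * c) * (2 * c) : ℝ) = 1 by field_simp]; simp
  -- h5 : s1 * conj u * GS = s2 * u * (s3 * 1)
  have h6 : ((Real.sqrt (1 / (2 * c)) : ℝ) : ℂ) * (Real.sqrt 2 : ℝ) * GS 1 c = u ^ 2 := by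
    rw [← hn]
    linear_combination u * h5 + u ^ 2 * hs
  rw [hu2] at h6
  linear_combination (Real.sqrt c : ℂ) * h6 - GS 1 c * hs2

lemma GS_m {m c c' : ℕ} (hm : 0 < m) (hc : 0 < c) (hcc : c = 4 * m * c') :
    GS m c = Real.sqrt m * GS 1 c := by
  have hc0 : 0 < 4 * c' := by
    rcases Nat.eq_zero_or_pos c' with h | h
    · subst h; simp at hcc; omega
    · omega
  have hm' : (m : ℂ) ≠ 0 := by exact_mod_cast hm.ne'
  have hc' : ((4 * c' : ℕ) : ℂ) ≠ 0 := by exact_mod_cast hc0.ne'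
  have key : ∀ n : ℕ, ∑ j ∈ Finset.range (4 * c' * n), ee ((j : ℂ) ^ 2 / (4 * c' : ℕ)) = n * GS 1 (4 * c') := by
    intro n
    induction n with
    | zero => simp
    | succ n ih =>
      rw [Nat.mul_succ, Finset.sum_range_add, ih, GS]
      push_cast
      rw [add_mul, one_mul]
      congr 1
      refine Finset.sum_congr rfl fun j _ => ?_
      refine ee_congr_int (n * (2 * j + 4 * c' * n)) ?_
      have hc2 : (c' : ℂ) ≠ 0 := by rintro h0; apply hc'; push_cast; rw [h0, mul_zero]
      push_cast
      field_simp
      ring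
  have e1 : GS m c = ∑ j ∈ Finset.range (4 * c' * m), ee ((j : ℂ) ^ 2 / (4 * c' : ℕ)) := by
    rw [GS, hcc, show 4 * m * c' = 4 * c' * m by ring]
    refine Finset.sum_congr rfl fun j _ => ?_
    congr 1
    push_cast at hc' ⊢
    field_simp
  rw [e1, key, GS_one hc0 rfl, GS_one (c' := m * c') hc (by rw [hcc]; ring), hcc]
  have : ((4 * m * c' : ℕ) : ℝ) = m * (4 * c' : ℕ) := by push_cast; ring
  rw [this, Real.sqrt_mul (by positivity)]
  have h2 : ((Real.sqrt m : ℝ) : ℂ) * (Real.sqrt m : ℝ) = m := by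
    rw [← Complex.ofReal_mul, Real.mul_self_sqrt (by positivity)]; simp
  rw [← h2]; push_cast; ring

lemma ee_pow (x : ℂ) (n : ℕ) : ee x ^ n = ee (n * x) := by
  rw [ee, ee, ← Complex.exp_nat_mul]; congr 1; ring

lemma galois_tr {c : ℕ} (hc : 0 < c) (P : Polynomial ℤ) (hP : Polynomial.aeval (ee (1 / c)) P = 0)
    (d : ℤ) (hd : IsCoprime d (c : ℤ)) : Polynomial.aeval (ee ((d : ℂ) / c)) P = 0 := by
  have hc' : (0 : ℤ) < c := by exact_mod_cast hc
  have hcC : (c : ℂ) ≠ 0 := by exact_mod_cast hc.ne'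
  have hprim : IsPrimitiveRoot (ee (1 / c)) c := by
    have := Complex.isPrimitiveRoot_exp c hc.ne'
    convert this using 1
    rw [ee]; congr 1; ring
  set d0 : ℕ := (d % c).toNat with hd0
  have hd0c : (d0 : ℤ) = d % c := Int.toNat_of_nonneg (Int.emod_nonneg _ hc'.ne')
  have hcop : Nat.Coprime d0 c := by
    rw [← Nat.isCoprime_iff_coprime, hd0c]
    obtain ⟨u, v, huv⟩ := hd
    refine ⟨u, v + u * (d / c), ?_⟩
    have := Int.emod_add_mul_ediv d c
    linear_combination huv + u * this
  have e : ee ((d : ℂ) / c) = ee (1 / c) ^ d0 := by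
    rw [ee_pow, ← mul_div_assoc, mul_one]
    have := ee_per hc d (d0 : ℤ) (by rw [hd0c]; exact Int.dvd_self_sub_emod)
    rw [this]; push_cast; rfl
  have hmin := hprim.minpoly_eq_pow_coprime hcop
  have hint : IsIntegral ℤ (ee (1 / c)) := hprim.isIntegral hc
  obtain ⟨Q, hQ⟩ := minpoly.isIntegrallyClosed_dvd hint hP
  rw [e, hQ, hmin, map_mul, minpoly.aeval, zero_mul]

def GP (k n : ℕ) : Polynomial ℤ := ∑ j ∈ Finset.range n, Polynomial.X ^ (k * j ^ 2)

lemma GP_eval {c k n : ℕ} (d : ℂ) :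
    Polynomial.aeval (ee (d / c)) (GP k n) = ∑ j ∈ Finset.range n, ee (d * k * (j : ℂ) ^ 2 / c) := by
  rw [GP, map_sum]
  refine Finset.sum_congr rfl fun j _ => ?_
  rw [map_pow, Polynomial.aeval_X, ee_pow]; congr 1; push_cast; ring

lemma GP_eval' {c k n : ℕ} (hc : 0 < c) (h : c = n * k) (d : ℤ) :
    Polynomial.aeval (ee ((d : ℂ) / c)) (GP k n) = GS d n := by
  rw [GP_eval, GS]
  refine Finset.sum_congr rfl fun j _ => ?_
  congr 1
  have hcC : (c : ℂ) ≠ 0 := by exact_mod_cast hc.ne'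
  rw [h] at hcC ⊢
  push_cast at hcC ⊢
  have hn := left_ne_zero_of_mul hcC
  have hk := right_ne_zero_of_mul hcC
  field_simp

lemma GS_congr {n : ℕ} (hn : 0 < n) {d d' : ℤ} (h : (n : ℤ) ∣ d - d') : GS d n = GS d' n := by
  rw [GS, GS]
  refine Finset.sum_congr rfl fun j _ => ?_
  have := ee_per hn (d * j ^ 2) (d' * j ^ 2) (by rw [← sub_mul]; exact h.mul_right _)
  push_cast at this
  exact this

lemma GS_four : GS 1 4 = 2 * (1 + I) := by
  rw [GS_one (c := 4) (c' := 1) (by norm_num) (by norm_num)]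
  rw [show ((4 : ℕ) : ℝ) = 2 ^ 2 by norm_num, Real.sqrt_sq (by norm_num)]
  push_cast; rfl

lemma GS_d {m c c' : ℕ} (hm : 0 < m) (hc : 0 < c) (hcc : c = 4 * m * c') {d d1 : ℤ}
    (hd : d = 1 + 4 * m * d1) (hcop : IsCoprime d (c : ℤ)) :
    GS (d * m) c = Real.sqrt m * GS d c ∧ GS d c ^ 2 = 2 * I * c := by
  have hI1 : (1 + I : ℂ) ≠ 0 := by
    intro h; have := congrArg Complex.re h; simp at this
  have h4m : GS 1 (4 * m) = 2 * Real.sqrt m * (1 + I) := by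
    rw [GS_one (c' := m) (by omega) rfl]
    push_cast
    rw [Real.sqrt_mul (by norm_num), show (4 : ℝ) = 2 ^ 2 by norm_num, Real.sqrt_sq (by norm_num)]
    push_cast; ring
  have hd4 : GS d 4 = 2 * (1 + I) := by
    rw [← GS_four]
    exact GS_congr (by norm_num) ⟨m * d1, by rw [hd]; push_cast; ring⟩
  have hd4m : GS d (4 * m) = 2 * Real.sqrt m * (1 + I) := by
    rw [← h4m]
    exact GS_congr (by omega) ⟨d1, by rw [hd]; push_cast; ring⟩
  have ev1 : ∀ e : ℤ, Polynomial.aeval (ee ((e : ℂ) / c)) (GP m c) = GS (e * m) c := by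
    intro e
    rw [GP_eval, GS]
    refine Finset.sum_congr rfl fun j _ => ?_
    push_cast; rfl
  have ev2 := GP_eval' (c := c) (k := m * c') (n := 4) hc (by rw [hcc]; ring)
  have ev3 := GP_eval' (c := c) (k := c') (n := 4 * m) hc (by rw [hcc])
  have ev4 := GP_eval' (c := c) (k := 1) (n := c) hc (by ring)
  have hone : ((1 : ℤ) : ℂ) = 1 := by norm_num
  constructor
  · have h1 : Polynomial.aeval (ee (1 / c)) (GP m c * GP (m * c') 4 - GP c' (4 * m) * GP 1 c) = 0 := by
      rw [map_sub, map_mul, map_mul, ← hone, ev1, ev2, ev3, ev4, one_mul, GS_m hm hc hcc, GS_four, h4m]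
      ring
    have h2 := galois_tr hc _ h1 d hcop
    rw [map_sub, map_mul, map_mul, ev1, ev2, ev3, ev4, hd4, hd4m] at h2
    apply mul_right_cancel₀ (mul_ne_zero two_ne_zero hI1)
    linear_combination h2
  · have hsq : ((Real.sqrt c : ℝ) : ℂ) ^ 2 = c := by
      rw [← Complex.ofReal_pow, Real.sq_sqrt (by positivity)]; simp
    have h1 : Polynomial.aeval (ee (1 / c)) (4 * GP 1 c ^ 2 - (c : Polynomial ℤ) * GP (m * c') 4 ^ 2) = 0 := by
      rw [map_sub, map_mul, map_mul, map_pow, map_pow, ← hone, ev2, ev4, GS_four,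
        GS_one (c' := m * c') hc (by rw [hcc]; ring), map_natCast, map_ofNat]
      linear_combination 4 * (1 + I) ^ 2 * hsq
    have h2 := galois_tr hc _ h1 d hcop
    rw [map_sub, map_mul, map_mul, map_pow, map_pow, ev2, ev4, hd4, map_natCast, map_ofNat] at h2
    linear_combination h2 / 4 + (c : ℂ) * I_sq

/-- same automorphy factor for `θ` and `θ_{m,ℓ}`, `c > 0`. -/
lemma theta_chi {m c c' : ℕ} (hm : 0 < m) (hc : 0 < c) (hcc : c = 4 * m * c') {a b d a1 b1 d1 : ℤ}
    (hdet : a * d - b * c = 1) (ha : a = 1 + 4 * m * a1) (hb : b = 4 * m * b1) (hd : d = 1 + 4 * m * d1)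
    {τ : ℂ} (hτ : 0 < τ.im) : ∃ χ : ℂ, χ ^ 2 = c * τ + d ∧
      stdTheta (((a : ℂ) * τ + b) / ((c : ℂ) * τ + d)) = χ * stdTheta τ ∧
      ∀ (l : ℤ) (z : ℂ), jTheta m l (((a : ℂ) * τ + b) / ((c : ℂ) * τ + d)) (z / ((c : ℂ) * τ + d)) =
        χ * ee (m * c * z ^ 2 / ((c : ℂ) * τ + d)) * jTheta m l τ z := by
  have hcop : IsCoprime d (c : ℤ) := ⟨a, -b, by linarith⟩
  obtain ⟨g1, g2⟩ := GS_d hm hc hcc hd hcop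
  have hmC : (m : ℂ) ≠ 0 := by exact_mod_cast hm.ne'
  have hmR : (0 : ℝ) < m := by exact_mod_cast hm
  have hcC : (c : ℂ) ≠ 0 := by exact_mod_cast hc.ne'
  have hne : (c : ℂ) * τ + d ≠ 0 := by
    have := cd_ne (c := (c : ℤ)) hdet hτ
    exact_mod_cast this
  set x := -I * (((c : ℂ) * τ + d) / (2 * c)) with hx
  have hx0 : x ≠ 0 := by
    rw [hx]; exact mul_ne_zero (neg_ne_zero.2 I_ne_zero) (div_ne_zero hne (mul_ne_zero two_ne_zero hcC))
  refine ⟨x ^ (1 / 2 : ℂ) * GS d c, ?_, ?_, ?_⟩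
  · rw [mul_pow, g2]
    have := Complex.cpow_nat_inv_pow x (n := 2) (by norm_num)
    have h2 : (x ^ (1 / 2 : ℂ)) ^ 2 = x := by simpa using this
    rw [h2, hx]
    field_simp
    linear_combination -I_sq
  · exact stdTheta_gamma (c' := m * c') (a1 := m * a1) (b1 := m * b1) hc (by rw [hcc]; ring) hdet
      (by rw [ha]; ring) (by rw [hb]; ring) hτ
  · intro l z
    rw [jTheta_gamma hm hc hcc hdet ha hb l hτ z, g1]
    have e : -I * (((c : ℂ) * τ + d) / (2 * (m * c : ℕ))) = ((1 / m : ℝ) : ℂ) * x := by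
      rw [hx]; push_cast; field_simp
    rw [e, csqrt_mul (by positivity) hx0]
    have hs : ((Real.sqrt (1 / m) : ℝ) : ℂ) * (Real.sqrt m : ℝ) = 1 := by
      rw [← Complex.ofReal_mul, ← Real.sqrt_mul (by positivity)]
      rw [show (1 / m * m : ℝ) = 1 by field_simp]; simp
    linear_combination (x ^ (1 / 2 : ℂ) * GS d c * ee (m * c * z ^ 2 / ((c : ℂ) * τ + d)) * jTheta m l τ z) * hs

lemma ee_integral (n : ℤ) (hn : n ≠ 0) : ∫ x in (0:ℝ)..1, ee ((n : ℂ) * x) = 0 := by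
  have h0 : (2 * (Real.pi : ℂ) * I * n) ≠ 0 := mul_ne_zero Complex.two_pi_I_ne_zero (by exact_mod_cast hn)
  have h := integral_exp_mul_complex (a := 0) (b := 1) h0
  have e : ∀ x : ℝ, ee ((n : ℂ) * x) = Complex.exp (2 * (Real.pi : ℂ) * I * n * x) := by
    intro x; rw [ee]; congr 1; ring
  simp only [e, h]
  have : Complex.exp (2 * (Real.pi : ℂ) * I * n * (1 : ℝ)) = 1 := by
    rw [← ee_int n, ee]; congr 1; push_cast; ring
  rw [this]; simp

lemma jTheta_nonzero {m : ℕ} (hm : 0 < m) (l : ℤ) {τ : ℂ} (hτ : 0 < τ.im) : ∃ z, jTheta m l τ z ≠ 0 := by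
  by_contra hcon
  push Not at hcon
  set F : ℤ → ℝ → ℂ := fun n x => ee (((l : ℂ) + 2 * (m : ℂ) * (n : ℂ)) ^ 2 / (4 * (m : ℂ)) * τ) *
    ee (((2 * m * n : ℤ) : ℂ) * x) with hF
  have hnorm : ∀ (n : ℤ) (x : ℝ), ‖F n x‖ = ‖ee (((l : ℂ) + 2 * (m : ℂ) * (n : ℂ)) ^ 2 / (4 * (m : ℂ)) * τ)‖ := by
    intro n x
    simp only [hF]
    rw [norm_mul, norm_ee (((2 * m * n : ℤ) : ℂ) * x)]
    rw [show ((2 * m * n : ℤ) : ℂ) * x = ((((2 * m * n : ℤ) : ℝ) * x : ℝ) : ℂ) by push_cast; ring]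
    rw [Complex.ofReal_im]; simp
  have hs := (jTheta_summable m hm l hτ 0).norm
  simp only [mul_zero, add_zero] at hs
  have hcont : ∀ n, Continuous (F n) := by
    intro n
    simp only [hF]
    exact continuous_const.mul (ee_continuous.comp (by fun_prop))
  have h3 := hasSum_integral_of_summable_integral_norm (μ := volume.restrict (Set.Ioc (0:ℝ) 1)) (F := F)
    (fun n => ((hcont n).intervalIntegrable 0 1).1) (by
      simp only [hnorm]
      simpa using hs)
  have h4 : ∫ x in Set.Ioc (0:ℝ) 1, ∑' n, F n x = 0 := by
    have : ∀ x : ℝ, ∑' n, F n x = 0 := by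
      intro x
      have h5 := hcon x
      rw [jTheta] at h5
      have : ∀ n : ℤ, F n x = ee (-(l * x)) * ee (((l : ℂ) + 2 * (m : ℂ) * (n : ℂ)) ^ 2 / (4 * (m : ℂ)) * τ +
      ((l : ℂ) + 2 * (m : ℂ) * (n : ℂ)) * x) := by
        intro n
        simp only [hF]
        rw [← ee_add, ← ee_add]; congr 1; push_cast; ring
      simp only [this]
      rw [tsum_mul_left, h5, mul_zero]
    simp [this]
  rw [h4] at h3
  have h6 : ∀ n : ℤ, n ≠ 0 → ∫ x in Set.Ioc (0:ℝ) 1, F n x = 0 := by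
    intro n hn
    simp only [hF]
    rw [integral_const_mul, ← intervalIntegral.integral_of_le zero_le_one, ee_integral, mul_zero]
    have : (m : ℤ) ≠ 0 := by exact_mod_cast hm.ne'
    positivity
  have h7 := hasSum_single (f := fun n : ℤ => ∫ x in Set.Ioc (0:ℝ) 1, F n x) 0 h6
  have h8 := h3.unique h7
  simp only [hF] at h8
  simp [ee_zero] at h8
  exact ee_ne_zero _ h8.symm

lemma jTheta_indep {m : ℕ} (hm : 0 < m) {τ : ℂ} (hτ : 0 < τ.im) (C : ℕ → ℂ)
    (h : ∀ z, ∑ l ∈ Finset.range (2 * m), C l * jTheta m l τ z = 0) :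
    ∀ l ∈ Finset.range (2 * m), C l = 0 := by
  intro l0 hl0
  have hm' : (m : ℂ) ≠ 0 := by exact_mod_cast hm.ne'
  obtain ⟨z, hz⟩ := jTheta_nonzero hm l0 hτ
  have hsh : ∀ (l μ : ℕ), jTheta m l τ (z + μ / (2 * m)) = ee ((l : ℂ) * μ / (2 * m)) * jTheta m l τ z := by
    intro l μ
    rw [jTheta, jTheta, ← tsum_mul_left]
    refine tsum_congr fun n => ?_
    rw [← ee_add]
    refine ee_congr_int (n * μ) ?_
    push_cast
    field_simp
    ring
  have h1 : ∑ μ ∈ Finset.range (2 * m), ee (-((l0 : ℂ) * μ / (2 * m))) *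
      ∑ l ∈ Finset.range (2 * m), C l * jTheta m l τ (z + μ / (2 * m)) = 0 :=
    Finset.sum_eq_zero fun μ _ => by rw [h, mul_zero]
  have h2 : ∑ μ ∈ Finset.range (2 * m), ee (-((l0 : ℂ) * μ / (2 * m))) *
      ∑ l ∈ Finset.range (2 * m), C l * jTheta m l τ (z + μ / (2 * m)) = (2 * m : ℕ) * (C l0 * jTheta m l0 τ z) := by
    simp only [Finset.mul_sum]
    rw [Finset.sum_comm]
    have e : ∀ l μ : ℕ, ee (-((l0 : ℂ) * μ / (2 * m))) * (C l * jTheta m l τ (z + μ / (2 * m))) =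
        ee (((l : ℂ) - l0) * μ / (2 * m : ℕ)) * (C l * jTheta m l τ z) := by
      intro l μ
      rw [hsh, show ((l : ℂ) - l0) * μ / (2 * m : ℕ) = -((l0 : ℂ) * μ / (2 * m)) + (l : ℂ) * μ / (2 * m) by
        push_cast; ring, ee_add]
      ring
    simp only [e, ← Finset.sum_mul]
    rw [Finset.sum_eq_single l0]
    · rw [orth (by omega) l0 l0 (Finset.mem_range.1 hl0) (Finset.mem_range.1 hl0), if_pos rfl]
    · intro l hl hne
      rw [orth (by omega) l l0 (Finset.mem_range.1 hl) (Finset.mem_range.1 hl0), if_neg hne, zero_mul]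
    · intro hc; exact absurd hl0 hc
  rw [h1] at h2
  have h3 : ((2 * m : ℕ) : ℂ) ≠ 0 := by push_cast; exact mul_ne_zero two_ne_zero hm'
  have h4 := (mul_eq_zero.1 h2.symm).resolve_left h3
  exact (mul_eq_zero.1 h4).resolve_right hz

lemma core {k : ℤ} {m : ℕ} (hm : 0 < m) {h : ℤ → ℂ → ℂ}
    {D : ℚ × ℚ → ℂ → ℂ} {T : Finset (ℚ × ℚ)} (hmod : ModularLaw k m (completedFinitePart m h D T))
    {a b c d : ℤ} (hdet : a * d - b * c = 1) {τ χ : ℂ} (hτ : 0 < τ.im)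
    (hχ : χ ^ 2 = c * τ + d)
    (h1 : stdTheta (((a : ℂ) * τ + b) / ((c : ℂ) * τ + d)) = χ * stdTheta τ)
    (h2 : ∀ (l : ℤ) (z : ℂ), jTheta m l (((a : ℂ) * τ + b) / ((c : ℂ) * τ + d)) (z / ((c : ℂ) * τ + d)) =
        χ * ee (m * c * z ^ 2 / ((c : ℂ) * τ + d)) * jTheta m l τ z) (l : ℕ) (hl : l < 2 * m) :
    hhat m h D T l (((a : ℂ) * τ + (b : ℂ)) / ((c : ℂ) * τ + (d : ℂ))) * stdTheta τ ^ (2 * k - 1) =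
      hhat m h D T l τ * stdTheta (((a : ℂ) * τ + (b : ℂ)) / ((c : ℂ) * τ + (d : ℂ))) ^ (2 * k - 1) := by
  have hne := cd_ne hdet hτ
  have hχ0 : χ ≠ 0 := by rintro rfl; apply hne; rw [← hχ]; ring
  set γ := ((a : ℂ) * τ + (b : ℂ)) / ((c : ℂ) * τ + (d : ℂ)) with hγ
  have hz : ∀ z, ∑ l ∈ Finset.range (2 * m),
      (χ * hhat m h D T l γ - ((c : ℂ) * τ + d) ^ k * hhat m h D T l τ) * jTheta m l τ z = 0 := by
    intro z
    have e := hmod τ hτ z a b c d hdet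
    simp only [completedFinitePart] at e
    rw [← hγ] at e
    simp only [h2] at e
    set E := ee (m * c * z ^ 2 / ((c : ℂ) * τ + d)) with hE
    have hE0 : E ≠ 0 := ee_ne_zero _
    apply mul_left_cancel₀ hE0
    rw [mul_zero, Finset.mul_sum]
    rw [Finset.mul_sum, ← sub_eq_zero, ← Finset.sum_sub_distrib] at e
    rw [← e]
    refine Finset.sum_congr rfl fun l _ => ?_
    ring
  have h3 := jTheta_indep hm hτ _ hz l (Finset.mem_range.2 hl)
  have h4 : hhat m h D T l γ = χ ^ (2 * k - 1) * hhat m h D T l τ := by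
    apply mul_left_cancel₀ hχ0
    rw [← mul_assoc, ← zpow_one_add₀ hχ0, show 1 + (2 * k - 1) = 2 * k by ring, zpow_mul]
    rw [show χ ^ (2 : ℤ) = χ ^ 2 by norm_cast, hχ]
    linear_combination h3
  rw [h4, h1, mul_zpow]; ring

lemma part3 {k : ℤ} {m : ℕ} (hm : 0 < m) {h : ℤ → ℂ → ℂ}
    {D : ℚ × ℚ → ℂ → ℂ} {T : Finset (ℚ × ℚ)} (hmod : ModularLaw k m (completedFinitePart m h D T))
    (l : ℕ) (hl : l < 2 * m) {τ : ℂ} (hτ : 0 < τ.im) {a b c d : ℤ} (hdet : a * d - b * c = 1)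
    (ha : ((4 * m : ℕ) : ℤ) ∣ a - 1) (hb : ((4 * m : ℕ) : ℤ) ∣ b) (hc : ((4 * m : ℕ) : ℤ) ∣ c)
    (hd : ((4 * m : ℕ) : ℤ) ∣ d - 1) :
    hhat m h D T l (((a : ℂ) * τ + (b : ℂ)) / ((c : ℂ) * τ + (d : ℂ))) * stdTheta τ ^ (2 * k - 1) =
      hhat m h D T l τ * stdTheta (((a : ℂ) * τ + (b : ℂ)) / ((c : ℂ) * τ + (d : ℂ))) ^ (2 * k - 1) := by
  have hm0 : (0 : ℤ) < m := by exact_mod_cast hm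
  have hmC : (m : ℂ) ≠ 0 := by exact_mod_cast hm.ne'
  have pos : ∀ {τ : ℂ} (_ : 0 < τ.im) {a b c d : ℤ} (_ : a * d - b * c = 1)
    (_ : ((4 * m : ℕ) : ℤ) ∣ a - 1) (_ : ((4 * m : ℕ) : ℤ) ∣ b) (_ : ((4 * m : ℕ) : ℤ) ∣ c)
    (_ : ((4 * m : ℕ) : ℤ) ∣ d - 1) (_ : 0 < c),
    hhat m h D T l (((a : ℂ) * τ + (b : ℂ)) / ((c : ℂ) * τ + (d : ℂ))) * stdTheta τ ^ (2 * k - 1) =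
      hhat m h D T l τ * stdTheta (((a : ℂ) * τ + (b : ℂ)) / ((c : ℂ) * τ + (d : ℂ))) ^ (2 * k - 1) := by
    intro τ hτ a b c d hdet ha hb hc hd hc0
    obtain ⟨a1, ha⟩ := ha
    obtain ⟨b1, hb⟩ := hb
    obtain ⟨d1, hd⟩ := hd
    lift c to ℕ using hc0.le
    obtain ⟨c1, hc1⟩ := Int.natCast_dvd_natCast.1 hc
    obtain ⟨χ, x1, x2, x3⟩ := theta_chi hm (by exact_mod_cast hc0) hc1 (a1 := a1) (b1 := b1) (d1 := d1) hdet
      (by push_cast at ha; linarith) (by push_cast at hb; linarith) (by push_cast at hd; linarith) hτ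
    exact core hm hmod hdet hτ (by exact_mod_cast x1) (by exact_mod_cast x2) (by exact_mod_cast x3) l hl
  rcases lt_trichotomy c 0 with hc0 | hc0 | hc0
  · have hdet' : d * a - (-b) * (-c) = 1 := by linarith
    have hγ := moeb_im hdet hτ
    have := pos hγ hdet' hd (by simpa using hb) (by simpa using hc) ha (by linarith)
    have hne := cd_ne hdet hτ
    set γ := ((a : ℂ) * τ + (b : ℂ)) / ((c : ℂ) * τ + (d : ℂ)) with hγd
    have hγm : γ * ((c : ℂ) * τ + d) = a * τ + b := div_mul_cancel₀ _ hne
    have hd : ((a : ℂ) * d - b * c) = 1 := by exact_mod_cast hdet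
    have e : ((d : ℂ) * γ + ((-b : ℤ) : ℂ)) / (((-c : ℤ) : ℂ) * γ + (a : ℂ)) = τ := by
      rw [div_eq_iff (cd_ne hdet' hγ)]
      push_cast
      linear_combination hγm
    rw [e] at this
    exact this.symm
  · subst hc0
    have had : a * d = 1 := by linarith
    have ha1 : a = 1 := by
      rcases Int.eq_one_or_neg_one_of_mul_eq_one had with h1 | h1
      · exact h1
      · exfalso
        rw [h1] at ha
        have := Int.le_of_dvd (by norm_num) (Int.dvd_neg.2 ha)
        push_cast at this
        omega
    subst ha1
    have hd1 : d = 1 := by linarith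
    subst hd1
    obtain ⟨b1, hb1⟩ := hb
    refine core hm hmod hdet hτ (χ := 1) (by simp) ?_ ?_ l hl
    · have := stdTheta_T b τ
      simpa using this
    · intro l z
      have := jTheta_T m hm l b τ z
      have e : ee ((l : ℂ) ^ 2 * b / (4 * m)) = 1 := by
        rw [ee_eq_one_iff]
        refine ⟨l ^ 2 * b1, ?_⟩
        rw [hb1]; push_cast; field_simp
      rw [e, one_mul] at this
      simpa [ee_zero] using this
  · exact pos hτ hdet ha hb hc hd hc0

/-- Theorem (mock modularity, simple poles): the completed finite part `φ̂^F` of a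
meromorphic Jacobi form with simple poles transforms like a Jacobi form of weight `k` and
index `m`, and each completed coefficient `ĥ_ℓ` transforms like a modular form of weight
`k - 1/2` on some principal congruence subgroup `Γ(N)`. -/
theorem completed_finite_part_is_modular (k : ℤ) (m : ℕ) (hm : 0 < m)
    (S : Set (ℚ × ℚ)) (Φ : MeroJacobiForm k m S) (hpoles : HasSimplePoles Φ)
    (h : ℤ → ℂ → ℂ) (hh : IsCanonCoeff m Φ.toFun h)
    (D : ℚ × ℚ → ℂ → ℂ) (hD : IsResidueFactor m S Φ.toFun D)
    (T : Finset (ℚ × ℚ)) (hT : IsRepSet S T) :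
    ModularLaw k m (completedFinitePart m h D T) ∧
    EllipticLaw m (completedFinitePart m h D T) ∧
    (∀ l : ℤ, ∃ N : ℕ, 0 < N ∧ ∀ τ : ℂ, 0 < τ.im → ∀ a b c d : ℤ, a * d - b * c = 1 →
      (N : ℤ) ∣ (a - 1) → (N : ℤ) ∣ b → (N : ℤ) ∣ c → (N : ℤ) ∣ (d - 1) →
      hhat m h D T l (((a : ℂ) * τ + (b : ℂ)) / ((c : ℂ) * τ + (d : ℂ))) *
          stdTheta τ ^ (2 * k - 1) =
        hhat m h D T l τ *
          stdTheta (((a : ℂ) * τ + (b : ℂ)) / ((c : ℂ) * τ + (d : ℂ))) ^ (2 * k - 1)) := by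
  have hmod := cfp_modular hm Φ hh hD hT
  refine ⟨hmod, cfp_elliptic hm h D T, ?_⟩
  intro l
  refine ⟨4 * m, by omega, ?_⟩
  intro τ hτ a b c d hdet ha hb hc hd
  have hm0 : (0 : ℤ) < 2 * m := by positivity
  set l0 : ℕ := (l % (2 * m)).toNat with hl0
  have hl0c : (l0 : ℤ) = l % (2 * m) := Int.toNat_of_nonneg (Int.emod_nonneg _ hm0.ne')
  have hlt : l0 < 2 * m := by
    have := Int.emod_lt_of_pos l hm0
    rw [← hl0c] at this
    exact_mod_cast this
  have hl : l = (l0 : ℤ) + 2 * m * (l / (2 * m)) := by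
    rw [hl0c]; exact (Int.emod_add_mul_ediv l (2 * m)).symm
  rw [hl, hhat_period hm Φ hh hD hT _ _ hτ, hhat_period hm Φ hh hD hT _ _ (moeb_im hdet hτ)]
  exact part3 hm hmod l0 hlt hτ hdet ha hb hc hd
end
end

section
/- Let φ be a meromorphic Jacobi form of weight k and index m with poles supported on S, all poles of order at most 2. Then for every s ∈ S and every γ = (a,b;c,d) ∈ SL(2,ℤ) one has E_s((aτ+b)/(cτ+d)) = (cτ+d)^{k−2}·E_{sγ}(τ) and D_s((aτ+b)/(cτ+d)) = (cτ+d)^{k−1}·D_{sγ}(τ), where sγ := (αa+βc, αb+βd) for s = (α,β). -/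
noncomputable section

open Complex Filter Topology MeasureTheory
open scoped Classical

/-- All poles of `Φ` have order at most 2. -/
def HasAtMostDoublePoles {k : ℤ} {m : ℕ} {S : Set (ℚ × ℚ)} (Φ : MeroJacobiForm k m S) : Prop :=
  ∀ τ : ℂ, 0 < τ.im → ∀ s ∈ S, ∃ g : ℂ → ℂ, AnalyticAt ℂ g (zpt s τ) ∧
    ∀ᶠ z in 𝓝[≠] (zpt s τ), Φ.toFun τ z = g z / (z - zpt s τ) ^ 2

/-- `E s` and `D s` are the Laurent data of `φ` at `z_s`, i.e.
`e(mα z_s)·φ(τ, z_s+ε) = E_s(τ)/(2πiε)² + (D_s(τ) - 2mα·E_s(τ))/(2πiε) + O(1)` as `ε → 0`. -/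
def IsLaurentData (m : ℕ) (S : Set (ℚ × ℚ)) (φ : ℂ → ℂ → ℂ) (E D : ℚ × ℚ → ℂ → ℂ) : Prop :=
  ∀ s ∈ S, ∀ τ : ℂ, 0 < τ.im →
    Filter.Tendsto (fun ε : ℂ =>
        (2 * (Real.pi : ℂ) * Complex.I * ε) ^ 2 * ee ((m : ℂ) * (s.1 : ℚ) * zpt s τ) *
          φ τ (zpt s τ + ε))
      (𝓝[≠] (0 : ℂ)) (𝓝 (E s τ)) ∧
    Filter.Tendsto (fun ε : ℂ =>
        2 * (Real.pi : ℂ) * Complex.I * ε *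
          (ee ((m : ℂ) * (s.1 : ℚ) * zpt s τ) * φ τ (zpt s τ + ε) -
            E s τ / (2 * (Real.pi : ℂ) * Complex.I * ε) ^ 2))
      (𝓝[≠] (0 : ℂ)) (𝓝 (D s τ - 2 * (m : ℂ) * (s.1 : ℚ) * E s τ))

/-- Theorem: for a meromorphic Jacobi form of weight `k` and index `m` with poles of order
at most 2 supported on `S`, the Laurent coefficient functions satisfy
`E_s(γτ) = (cτ+d)^{k-2}·E_{sγ}(τ)` and `D_s(γτ) = (cτ+d)^{k-1}·D_{sγ}(τ)` for all
`γ ∈ SL(2,ℤ)`, where `sγ = (αa+βc, αb+βd)`. -/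
theorem laurent_coefficients_are_modular (k : ℤ) (m : ℕ) (hm : 0 < m)
    (S : Set (ℚ × ℚ)) (Φ : MeroJacobiForm k m S) (hpoles : HasAtMostDoublePoles Φ)
    (E D : ℚ × ℚ → ℂ → ℂ) (hED : IsLaurentData m S Φ.toFun E D) :
    ∀ s ∈ S, ∀ a b c d : ℤ, a * d - b * c = 1 → ∀ τ : ℂ, 0 < τ.im →
      E s (((a : ℂ) * τ + (b : ℂ)) / ((c : ℂ) * τ + (d : ℂ))) =
        ((c : ℂ) * τ + (d : ℂ)) ^ (k - 2) *
          E (s.1 * (a : ℚ) + s.2 * (c : ℚ), s.1 * (b : ℚ) + s.2 * (d : ℚ)) τ ∧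
      D s (((a : ℂ) * τ + (b : ℂ)) / ((c : ℂ) * τ + (d : ℂ))) =
        ((c : ℂ) * τ + (d : ℂ)) ^ (k - 1) *
          D (s.1 * (a : ℚ) + s.2 * (c : ℚ), s.1 * (b : ℚ) + s.2 * (d : ℚ)) τ := by
  intro s hs a b c d hdet τ hτ
  have hs' := Φ.sl_inv s hs a b c d hdet
  set s' : ℚ × ℚ := (s.1 * (a : ℚ) + s.2 * (c : ℚ), s.1 * (b : ℚ) + s.2 * (d : ℚ)) with hs'def
  have hdetC : (a : ℂ) * d - b * c = 1 := by exact_mod_cast hdet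
  have hdetR : (a : ℝ) * d - b * c = 1 := by exact_mod_cast hdet
  have hj : (c : ℂ) * τ + (d : ℂ) ≠ 0 := by
    intro h
    have h1 := congrArg Complex.im h
    have h2 := congrArg Complex.re h
    simp at h1 h2
    rcases h1 with h1 | h1
    · subst h1
      simp at h2
      subst h2
      simp at hdet
    · exact hτ.ne' h1
  have hτ' : 0 < (((a : ℂ) * τ + (b : ℂ)) / ((c : ℂ) * τ + (d : ℂ))).im := by
    have hn : 0 < Complex.normSq ((c : ℂ) * τ + (d : ℂ)) := Complex.normSq_pos.2 hj
    have : (((a : ℂ) * τ + (b : ℂ)) / ((c : ℂ) * τ + (d : ℂ))).im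
        = τ.im / Complex.normSq ((c : ℂ) * τ + (d : ℂ)) := by
      rw [Complex.div_im, div_sub_div_same]
      congr 1
      simp
      linear_combination τ.im * hdetR
    rw [this]
    exact div_pos hτ hn
  have hmod := fun z => Φ.modular τ hτ z a b c d hdet
  obtain ⟨hE, hD⟩ := hED s hs _ hτ'
  obtain ⟨hE', hD'⟩ := hED s' hs' τ hτ
  have hz : zpt s (((a : ℂ) * τ + (b : ℂ)) / ((c : ℂ) * τ + (d : ℂ)))
      = zpt s' τ / ((c : ℂ) * τ + (d : ℂ)) := by
    simp only [zpt, hs'def]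
    push_cast
    rw [eq_div_iff hj, add_mul, mul_assoc, div_mul_cancel₀ _ hj]
    ring
  have hα : (s.1 : ℂ) + c * zpt s' τ = (s'.1 : ℂ) * ((c : ℂ) * τ + (d : ℂ)) := by
    simp only [zpt, hs'def]
    push_cast
    linear_combination (-(s.1 : ℂ)) * hdetC
  rw [hz] at hE hD
  generalize ((a : ℂ) * τ + (b : ℂ)) / ((c : ℂ) * τ + (d : ℂ)) = τ' at *
  generalize (c : ℂ) * τ + (d : ℂ) = j at *
  generalize zpt s' τ = z at *
  clear_value s'
  have hpi : (2 * (Real.pi : ℂ) * Complex.I) ≠ 0 := Complex.two_pi_I_ne_zero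
  have hee : ∀ x y, ee (x + y) = ee x * ee y := by
    intro x y
    simp only [ee, mul_add, Complex.exp_add]
  set u : ℂ → ℂ := fun ε => ee (2 * m * c * z * ε + m * c * j * ε ^ 2) with hu
  have hF : ∀ ε, ee ((m : ℂ) * (s.1 : ℚ) * (z / j)) * Φ.toFun τ' (z / j + ε)
      = j ^ k * u ε * (ee ((m : ℂ) * (s'.1 : ℚ) * z) * Φ.toFun τ (z + j * ε)) := by
    intro ε
    have h1 : z / j + ε = (z + j * ε) / j := by field_simp
    have h2 : ee ((m : ℂ) * (s.1 : ℚ) * (z / j)) * ee (m * c * (z + j * ε) ^ 2 / j)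
        = u ε * ee ((m : ℂ) * (s'.1 : ℚ) * z) := by
      rw [hu, ← hee, ← hee]
      congr 1
      field_simp
      linear_combination (m * z) * hα
    rw [h1, hmod]
    linear_combination (j ^ k * Φ.toFun τ (z + j * ε)) * h2
  have hu0 : u 0 = 1 := by simp [hu, ee]
  have hud : HasDerivAt u (2 * (Real.pi : ℂ) * Complex.I * (2 * m * c * z)) 0 := by
    have h1 : HasDerivAt (fun ε : ℂ => 2 * (Real.pi : ℂ) * Complex.I *
        (2 * m * c * z * ε + m * c * j * ε ^ 2))
        (2 * (Real.pi : ℂ) * Complex.I * (2 * m * c * z)) 0 := by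
      have := ((((hasDerivAt_id (0 : ℂ)).const_mul (2 * m * c * z)).add
        (((hasDerivAt_id (0 : ℂ)).pow 2).const_mul (m * c * j)))).const_mul
          (2 * (Real.pi : ℂ) * Complex.I)
      simpa using this
    have h2 := h1.cexp
    simp only [ne_eq, OfNat.ofNat_ne_zero, not_false_eq_true, zero_pow, mul_zero, add_zero,
      Complex.exp_zero, one_mul] at h2
    exact h2
  have hut : Tendsto u (𝓝[≠] 0) (𝓝 1) := by
    have := hud.continuousAt.tendsto
    rw [hu0] at this
    exact this.mono_left nhdsWithin_le_nhds
  have hus : Tendsto (fun ε => ε⁻¹ * (u ε - 1)) (𝓝[≠] 0)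
      (𝓝 (2 * (Real.pi : ℂ) * Complex.I * (2 * m * c * z))) := by
    have := hasDerivAt_iff_tendsto_slope_zero.1 hud
    simpa [hu0] using this
  have hjt : Tendsto (fun ε : ℂ => j * ε) (𝓝[≠] 0) (𝓝[≠] 0) := by
    apply tendsto_nhdsWithin_iff.2
    constructor
    · have : Tendsto (fun ε : ℂ => j * ε) (𝓝 0) (𝓝 (j * 0)) :=
        (continuous_const.mul continuous_id).tendsto 0
      rw [mul_zero] at this
      exact this.mono_left nhdsWithin_le_nhds
    · filter_upwards [self_mem_nhdsWithin] with ε hε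
      exact mul_ne_zero hj hε
  have hk2 : j ^ k = j ^ (k - 2) * j ^ 2 := by
    rw [← zpow_natCast, ← zpow_add₀ hj]
    congr 1
    push_cast
    ring
  have hk1 : j ^ (k - 1) = j ^ (k - 2) * j := by
    rw [← zpow_add_one₀ hj]
    congr 1
    ring
  have hEE : E s τ' = j ^ (k - 2) * E s' τ := by
    refine tendsto_nhds_unique hE ?_
    have := ((hut.mul (hE'.comp hjt)).const_mul (j ^ (k - 2)))
    rw [one_mul] at this
    refine this.congr ?_
    intro ε
    simp only [Function.comp]
    rw [mul_assoc _ (ee _) (Φ.toFun τ' _), hF ε, hk2]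
    ring
  refine ⟨hEE, ?_⟩
  have key := (((hut.mul (hD'.comp hjt)).const_mul (j ^ (k - 1))).add
    (hus.const_mul (j ^ (k - 2) * E s' τ / (2 * (Real.pi : ℂ) * Complex.I))))
  have hlim := tendsto_nhds_unique hD (key.congr' ?_)
  · rw [hEE, hk1] at hlim
    rw [hk1]
    field_simp at hlim
    linear_combination hlim + 2 * m * j ^ (k - 2) * E s' τ * hα
  · filter_upwards [self_mem_nhdsWithin] with ε hε
    have hε : ε ≠ 0 := hε
    simp only [Function.comp]
    rw [hF ε, hEE, hk2, hk1]
    field_simp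
    ring
end
end
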